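/- arXiv:1504.03037 — 2 statements merged into one kernel-verified Lean document; each statement's English description precedes it below -/
import Mathlib

section
/- Let T be a locally simple complete CLO theory and let A and B be countable models of T. Then A and B are isomorphic if and only if for every Φ ∈ IT(T), Φ(A) and Φ(B) are elementarily equivalent. -/
open FirstOrder Language Set

/-- Relation symbols of the language `L_κ` of colored linear orders:
a binary `<` and a unary color predicate for each `i : ι`. -/
inductive CLORel (ι : Type) : ℕ → Type
  | lt : CLORel ι 2
  | color (i : ι) : CLORel ι 1

/-- The language `L_κ`, where the colors are indexed by `ι`. -/
def CLOLang (ι : Type) : Language :=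
  ⟨fun _ => Empty, CLORel ι⟩

/-- Interpretation of the relation symbols on a linear order `M` with colors `c`. -/
def cloRelMap {ι M : Type} [LinearOrder M] (c : ι → Set M) :
    ∀ {n}, CLORel ι n → (Fin n → M) → Prop
  | _, .lt => fun v => v 0 < v 1
  | _, .color i => fun v => v 0 ∈ c i

/-- The canonical `L_κ`-structure (a colored linear order, CLO) on a linear
order `M` whose colors are given by `c : ι → Set M`. -/
def CLOStr (ι M : Type) [LinearOrder M] (c : ι → Set M) : (CLOLang ι).Structure M where
  funMap := fun f => Empty.elim f
  RelMap := cloRelMap c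

/-- Satisfaction of an `L_κ`-formula in the CLO `(M, <, c)`. -/
def Sat {ι : Type} (M : Type) [LinearOrder M] (c : ι → Set M) {α : Type}
    (φ : (CLOLang ι).Formula α) (v : α → M) : Prop :=
  letI := CLOStr ι M c
  φ.Realize v

/-- The induced colors on a subset of a CLO. -/
def subColor {ι M : Type} (c : ι → Set M) (s : Set M) : ι → Set s :=
  fun i => {x | (x : M) ∈ c i}

/-- Elementary equivalence of CLOs. -/
def CLOEquiv (ι : Type) (M : Type) [LinearOrder M] (cM : ι → Set M)
    (N : Type) [LinearOrder N] (cN : ι → Set N) : Prop :=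
  letI := CLOStr ι M cM
  letI := CLOStr ι N cN
  M ≅[CLOLang ι] N

/-- Isomorphism of CLOs (as `L_κ`-structures). -/
def CLOIso (ι : Type) (M : Type) [LinearOrder M] (cM : ι → Set M)
    (N : Type) [LinearOrder N] (cN : ι → Set N) : Prop :=
  letI := CLOStr ι M cM
  letI := CLOStr ι N cN
  Nonempty (M ≃[CLOLang ι] N)

/-- The complete theory of a CLO. -/
def CLOTheory (ι : Type) (M : Type) [LinearOrder M] (c : ι → Set M) : (CLOLang ι).Theory :=
  letI := CLOStr ι M c
  (CLOLang ι).completeTheory M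

/-- The induced colors on a lexicographic sum `Σₗ i, A i` of CLOs. -/
def sigmaColor {ι I : Type} {A : I → Type} (c : ∀ i, ι → Set (A i)) :
    ι → Set (Σₗ i, A i) :=
  fun k => {x | (ofLex x).2 ∈ c (ofLex x).1 k}

/-- The induced colors on a two-term lexicographic sum `α ⊕ₗ β` of CLOs. -/
def sumColor2 {ι α β : Type} (ca : ι → Set α) (cb : ι → Set β) : ι → Set (α ⊕ₗ β) :=
  fun k => {x | Sum.elim (· ∈ ca k) (· ∈ cb k) (ofLex x)}

/-- The set defined by a parameter-free formula in one variable in a CLO. -/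
def FmlSet (ι : Type) (M : Type) [LinearOrder M] (c : ι → Set M)
    (φ : (CLOLang ι).Formula Unit) : Set M :=
  {x | Sat M c φ fun _ => x}

/-- A CLO is self-additive if it has more than one point and its only
convex parameter-free-definable subsets are `∅` and the whole order. -/
def SelfAdditive (ι : Type) (M : Type) [LinearOrder M] (c : ι → Set M) : Prop :=
  Nontrivial M ∧
    ∀ φ : (CLOLang ι).Formula Unit, (FmlSet ι M c φ).OrdConnected →
      FmlSet ι M c φ = ∅ ∨ FmlSet ι M c φ = Set.univ

/-- `a ∼ b`: some set definable with parameter `a` is convex, bounded above and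
below, and contains both `a` and `b`. -/
def SimRel (ι : Type) {M : Type} [LinearOrder M] (c : ι → Set M) (a b : M) : Prop :=
  ∃ φ : (CLOLang ι).Formula (Unit ⊕ Unit),
    (Set.OrdConnected {x | Sat M c φ (Sum.elim (fun _ => x) fun _ => a)}) ∧
    (∃ u : M, ∀ z ∈ {x | Sat M c φ (Sum.elim (fun _ => x) fun _ => a)}, z < u) ∧
    (∃ l : M, ∀ z ∈ {x | Sat M c φ (Sum.elim (fun _ => x) fun _ => a)}, l < z) ∧
    a ∈ {x | Sat M c φ (Sum.elim (fun _ => x) fun _ => a)} ∧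
    b ∈ {x | Sat M c φ (Sum.elim (fun _ => x) fun _ => a)}

/-- `f : M → N` is an elementary map of CLOs. -/
def IsElemMap (ι : Type) {M N : Type} [LinearOrder M] [LinearOrder N]
    (cM : ι → Set M) (cN : ι → Set N) (f : M → N) : Prop :=
  ∀ (k : ℕ) (φ : (CLOLang ι).Formula (Fin k)) (v : Fin k → M),
    Sat M cM φ v ↔ Sat N cN φ (f ∘ v)

/-- A subset of a CLO, with its induced structure, is an elementary substructure. -/
def IsElemSubset (ι : Type) (B : Type) [LinearOrder B] (cB : ι → Set B) (s : Set B) : Prop :=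
  IsElemMap ι (subColor cB s) cB (Subtype.val : s → B)

/-- A complete `L_κ`-theory is ℵ₀-categorical: any two at-most-countable CLO
models of it are isomorphic.  (Finite and empty models are allowed.) -/
def Aleph0CatTheory (ι : Type) (T : (CLOLang ι).Theory) : Prop :=
  ∀ (N₁ N₂ : Type) (i₁ : LinearOrder N₁) (i₂ : LinearOrder N₂)
    (c₁ : ι → Set N₁) (c₂ : ι → Set N₂),
    Countable N₁ → Countable N₂ →
    (letI := i₁; CLOTheory ι N₁ c₁) = T → (letI := i₂; CLOTheory ι N₂ c₂) = T →
    (letI := i₁; letI := i₂; CLOIso ι N₁ c₁ N₂ c₂)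

/-- `φ` is a convex formula for the complete theory of the CLO `(M₀, c₀)`:
its realizations in every model of that theory form a convex set. -/
def ConvexFml (ι : Type) (M₀ : Type) [LinearOrder M₀] (c₀ : ι → Set M₀)
    (φ : (CLOLang ι).Formula Unit) : Prop :=
  ∀ (B : Type) (iB : LinearOrder B) (cB : ι → Set B),
    (letI := iB; CLOEquiv ι B cB M₀ c₀) → (letI := iB; Set.OrdConnected (FmlSet ι B cB φ))

/-- The set of common realizations of a set of one-variable formulas in a CLO. -/
def TypeSet (ι : Type) (M : Type) [LinearOrder M] (c : ι → Set M)
    (Φ : Set ((CLOLang ι).Formula Unit)) : Set M :=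
  {x | ∀ φ ∈ Φ, Sat M c φ fun _ => x}

/-- A set of one-variable formulas is consistent with the complete theory of
`(M₀, c₀)`: it is realized in some model of that theory. -/
def TypeConsistent (ι : Type) (M₀ : Type) [LinearOrder M₀] (c₀ : ι → Set M₀)
    (Φ : Set ((CLOLang ι).Formula Unit)) : Prop :=
  ∃ (B : Type) (iB : LinearOrder B) (cB : ι → Set B),
    (letI := iB; CLOEquiv ι B cB M₀ c₀) ∧ (letI := iB; ∃ b : B, b ∈ TypeSet ι B cB Φ)

/-- `Φ` is a convex type of the complete theory of `(M₀, c₀)`: a maximal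
consistent set of convex formulas over `∅`.  `IT(T)` is the set of all such. -/
def IsConvexType (ι : Type) (M₀ : Type) [LinearOrder M₀] (c₀ : ι → Set M₀)
    (Φ : Set ((CLOLang ι).Formula Unit)) : Prop :=
  (∀ φ ∈ Φ, ConvexFml ι M₀ c₀ φ) ∧ TypeConsistent ι M₀ c₀ Φ ∧
    ∀ ψ, ConvexFml ι M₀ c₀ ψ → TypeConsistent ι M₀ c₀ (insert ψ Φ) → ψ ∈ Φ

/-- A convex type is isolated if it contains a convex formula contained in no
other convex type. -/
def IsolatedCT (ι : Type) (M₀ : Type) [LinearOrder M₀] (c₀ : ι → Set M₀)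
    (Φ : Set ((CLOLang ι).Formula Unit)) : Prop :=
  ∃ φ ∈ Φ, ConvexFml ι M₀ c₀ φ ∧
    ∀ Ψ, IsConvexType ι M₀ c₀ Ψ → φ ∈ Ψ → Ψ = Φ

/-- A CLO is ℵ₀-saturated: every finitely-satisfiable set of formulas in one
variable over finitely many parameters is realized. -/
def Aleph0Saturated (ι : Type) (S : Type) [LinearOrder S] (cS : ι → Set S) : Prop :=
  ∀ (m : ℕ) (a : Fin m → S) (p : Set ((CLOLang ι).Formula (Unit ⊕ Fin m))),
    (∀ q : Finset ((CLOLang ι).Formula (Unit ⊕ Fin m)), ↑q ⊆ p →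
      ∃ x : S, ∀ φ ∈ q, Sat S cS φ (Sum.elim (fun _ => x) a)) →
    ∃ x : S, ∀ φ ∈ p, Sat S cS φ (Sum.elim (fun _ => x) a)

/-- A CLO is strongly ℵ₀-homogeneous: finite tuples with the same complete type
are conjugate under an automorphism. -/
def StronglyAleph0Homogeneous (ι : Type) (S : Type) [LinearOrder S] (cS : ι → Set S) : Prop :=
  ∀ (m : ℕ) (a b : Fin m → S),
    (∀ φ : (CLOLang ι).Formula (Fin m), Sat S cS φ a ↔ Sat S cS φ b) →
    ∃ g : S ≃ S, (∀ x y : S, x < y ↔ g x < g y) ∧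
      (∀ (k : ι) (x : S), x ∈ cS k ↔ g x ∈ cS k) ∧ ∀ i, g (a i) = b i

/-- Sufficiently saturated: ℵ₀-saturated and strongly ℵ₀-homogeneous. -/
def SuffSaturated (ι : Type) (S : Type) [LinearOrder S] (cS : ι → Set S) : Prop :=
  Aleph0Saturated ι S cS ∧ StronglyAleph0Homogeneous ι S cS

/-- The complete theory of `(M₀, c₀)` is locally simple: for every sufficiently
saturated model `S` and every convex type `Φ`, the theory `T_Φ = Th(Φ(S))` is
ℵ₀-categorical. -/
def LocallySimple (ι : Type) (M₀ : Type) [LinearOrder M₀] (c₀ : ι → Set M₀) : Prop :=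
  ∀ (S : Type) [LinearOrder S], ∀ (cS : ι → Set S),
    CLOEquiv ι S cS M₀ c₀ → SuffSaturated ι S cS →
    ∀ Φ, IsConvexType ι M₀ c₀ Φ →
      Aleph0CatTheory ι
        (CLOTheory ι (TypeSet ι S cS Φ) (subColor cS (TypeSet ι S cS Φ)))

/-- A finite set of pairs is a partial isomorphism of CLOs: it preserves `<`,
equality, and each color, in both directions. -/
def IsPartialIso (ι : Type) {M N : Type} [LinearOrder M] [LinearOrder N]
    (cM : ι → Set M) (cN : ι → Set N) (f : Finset (M × N)) : Prop :=
  ∀ p ∈ f, ∀ q ∈ f,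
    (p.1 < q.1 ↔ p.2 < q.2) ∧ (p.1 = q.1 ↔ p.2 = q.2) ∧
    ∀ k, p.1 ∈ cM k ↔ p.2 ∈ cN k

/-- Back-and-forth equivalence of CLOs: a nonempty family of finite partial
isomorphisms with the back-and-forth extension properties. -/
def BackForthEquiv (ι : Type) (M : Type) [LinearOrder M] (cM : ι → Set M)
    (N : Type) [LinearOrder N] (cN : ι → Set N) : Prop :=
  ∃ F : Set (Finset (M × N)), F.Nonempty ∧ (∀ f ∈ F, IsPartialIso ι cM cN f) ∧
    (∀ f ∈ F, ∀ m : M, ∃ g ∈ F, f ⊆ g ∧ ∃ n : N, (m, n) ∈ g) ∧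
    (∀ f ∈ F, ∀ n : N, ∃ g ∈ F, f ⊆ g ∧ ∃ m : M, (m, n) ∈ g)

/-- The set of complete theories `Th(Φ(A))` as `A` ranges over models of the
complete theory of `(M₀, c₀)` (including the theory of the empty structure,
in case `Φ` is omitted). -/
def TheoriesAt (ι : Type) (M₀ : Type) [LinearOrder M₀] (c₀ : ι → Set M₀)
    (Φ : Set ((CLOLang ι).Formula Unit)) : Set ((CLOLang ι).Theory) :=
  {T | ∃ (A : Type) (iA : LinearOrder A) (cA : ι → Set A),
    (letI := iA; CLOEquiv ι A cA M₀ c₀) ∧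
    T = (letI := iA; CLOTheory ι (TypeSet ι A cA Φ) (subColor cA (TypeSet ι A cA Φ)))}

section EF

variable {M N K : Type} [LinearOrder M] [LinearOrder N] [LinearOrder K]

/-- A relation between two linear orders respects the order and the predicate `P`. -/
def EFBase (P : M → N → Prop) (R : Set (M × N)) : Prop :=
  ∀ p ∈ R, P p.1 p.2 ∧ ∀ q ∈ R, (p.1 < q.1 ↔ p.2 < q.2)

/-- Duplicator wins the `k`-round Ehrenfeucht–Fraïssé game from the position `R`, where the
moves are restricted to `D` and `D'`. -/
def EF (P : M → N → Prop) (D : Set M) (D' : Set N) : ℕ → Set (M × N) → Prop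
  | 0, R => EFBase P R
  | k + 1, R => EFBase P R ∧ (∀ x ∈ D, ∃ y ∈ D', EF P D D' k (insert (x, y) R)) ∧
      ∀ y ∈ D', ∃ x ∈ D, EF P D D' k (insert (x, y) R)

variable {P : M → N → Prop} {D : Set M} {D' : Set N} {k l : ℕ} {R R' : Set (M × N)}

theorem EF.base (h : EF P D D' k R) : EFBase P R := by
  cases k with
  | zero => exact h
  | succ k => exact h.1

theorem EFBase.mono (hR : R' ⊆ R) (h : EFBase P R) : EFBase P R' :=
  fun p hp => ⟨(h p (hR hp)).1, fun q hq => (h p (hR hp)).2 q (hR hq)⟩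

theorem EF.mono (hR : R' ⊆ R) (h : EF P D D' k R) : EF P D D' k R' := by
  induction k generalizing R R' with
  | zero => exact EFBase.mono hR h
  | succ k ih =>
    refine ⟨h.1.mono hR, fun x hx => ?_, fun y hy => ?_⟩
    · obtain ⟨y, hy, h'⟩ := h.2.1 x hx
      exact ⟨y, hy, ih (insert_subset_insert hR) h'⟩
    · obtain ⟨x, hx, h'⟩ := h.2.2 y hy
      exact ⟨x, hx, ih (insert_subset_insert hR) h'⟩

theorem EF.pred (h : EF P D D' (k + 1) R) : EF P D D' k R := by
  induction k generalizing R with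
  | zero => exact h.1
  | succ k ih =>
    refine ⟨h.1, fun x hx => ?_, fun y hy => ?_⟩
    · obtain ⟨y, hy, h'⟩ := h.2.1 x hx
      exact ⟨y, hy, ih h'⟩
    · obtain ⟨x, hx, h'⟩ := h.2.2 y hy
      exact ⟨x, hx, ih h'⟩

theorem EF.of_le (hl : l ≤ k) (h : EF P D D' k R) : EF P D D' l R := by
  induction hl with
  | refl => exact h
  | step _ ih => exact ih h.pred

theorem EF.imp {Q : M → N → Prop} (h : EF P D D' k R)
    (hD : ∀ x ∈ D, ∀ y ∈ D', P x y → Q x y) (hR : ∀ p ∈ R, P p.1 p.2 → Q p.1 p.2) :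
    EF Q D D' k R := by
  induction k generalizing R with
  | zero => exact fun p hp => ⟨hR p hp (h p hp).1, (h p hp).2⟩
  | succ k ih =>
    refine ⟨fun p hp => ⟨hR p hp (h.1 p hp).1, (h.1 p hp).2⟩, fun x hx => ?_, fun y hy => ?_⟩
    · obtain ⟨y, hy, h'⟩ := h.2.1 x hx
      refine ⟨y, hy, ih h' ?_⟩
      rintro p (rfl | hp)
      exacts [hD x hx y hy, hR p hp]
    · obtain ⟨x, hx, h'⟩ := h.2.2 y hy
      refine ⟨x, hx, ih h' ?_⟩
      rintro p (rfl | hp)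
      exacts [hD x hx y hy, hR p hp]

theorem EF.symm (h : EF P D D' k R) :
    EF (fun y x => P x y) D' D k (Prod.swap ⁻¹' R) := by
  have base : ∀ {R : Set (M × N)}, EFBase P R →
      EFBase (fun y x => P x y) (Prod.swap ⁻¹' R) :=
    fun h p hp => ⟨(h _ hp).1, fun q hq => ((h _ hp).2 _ hq).symm⟩
  have ins : ∀ {R : Set (M × N)} {x y},
      insert (y, x) (Prod.swap ⁻¹' R) ⊆ Prod.swap ⁻¹' (insert (x, y) R) := by
    rintro R x y p (rfl | hp)
    exacts [Or.inl rfl, Or.inr hp]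
  induction k generalizing R with
  | zero => exact base h
  | succ k ih =>
    refine ⟨base h.1, fun y hy => ?_, fun x hx => ?_⟩
    · obtain ⟨x, hx, h'⟩ := h.2.2 y hy
      exact ⟨x, hx, (ih h').mono ins⟩
    · obtain ⟨y, hy, h'⟩ := h.2.1 x hx
      exact ⟨y, hy, (ih h').mono ins⟩

theorem EF.comp {D'' : Set K} {P' : N → K → Prop} {P'' : M → K → Prop} {R₂ : Set (N × K)}
    {R₃ : Set (M × K)} (hP : ∀ x y z, P x y → P' y z → P'' x z)
    (h : EF P D D' k R) (h' : EF P' D' D'' k R₂)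
    (hR : ∀ p ∈ R₃, ∃ y, (p.1, y) ∈ R ∧ (y, p.2) ∈ R₂) : EF P'' D D'' k R₃ := by
  have base : ∀ {R : Set (M × N)} {R₂ : Set (N × K)} {R₃ : Set (M × K)},
      EFBase P R → EFBase P' R₂ →
      (∀ p ∈ R₃, ∃ y, (p.1, y) ∈ R ∧ (y, p.2) ∈ R₂) → EFBase P'' R₃ := by
    intro R R₂ R₃ h h' hR p hp
    obtain ⟨y, hy, hy'⟩ := hR p hp
    refine ⟨hP _ _ _ (h _ hy).1 (h' _ hy').1, fun q hq => ?_⟩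
    obtain ⟨z, hz, hz'⟩ := hR q hq
    exact ((h _ hy).2 _ hz).trans ((h' _ hy').2 _ hz')
  have ins : ∀ {R : Set (M × N)} {R₂ : Set (N × K)} {R₃ : Set (M × K)} (x y z),
      (∀ p ∈ R₃, ∃ y, (p.1, y) ∈ R ∧ (y, p.2) ∈ R₂) →
      ∀ p ∈ insert (x, z) R₃, ∃ w, (p.1, w) ∈ insert (x, y) R ∧ (w, p.2) ∈ insert (y, z) R₂ := by
    rintro R R₂ R₃ x y z hR p (rfl | hp)
    · exact ⟨y, Or.inl rfl, Or.inl rfl⟩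
    · obtain ⟨w, h1, h2⟩ := hR p hp
      exact ⟨w, Or.inr h1, Or.inr h2⟩
  induction k generalizing R R₂ R₃ with
  | zero => exact base h h' hR
  | succ k ih =>
    refine ⟨base h.1 h'.1 hR, fun x hx => ?_, fun z hz => ?_⟩
    · obtain ⟨y, hy, h1⟩ := h.2.1 x hx
      obtain ⟨z, hz, h2⟩ := h'.2.1 y hy
      exact ⟨z, hz, ih h1 h2 (ins x y z hR)⟩
    · obtain ⟨y, hy, h2⟩ := h'.2.2 z hz
      obtain ⟨x, hx, h1⟩ := h.2.2 y hy
      exact ⟨x, hx, ih h1 h2 (ins x y z hR)⟩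

theorem EF.of_iso (hR : EFBase P R) (h1 : ∀ x ∈ D, ∃ y ∈ D', (x, y) ∈ R)
    (h2 : ∀ y ∈ D', ∃ x ∈ D, (x, y) ∈ R) : EF P D D' k R := by
  induction k with
  | zero => exact hR
  | succ k ih =>
    refine ⟨hR, fun x hx => ?_, fun y hy => ?_⟩
    · obtain ⟨y, hy, h⟩ := h1 x hx
      exact ⟨y, hy, by rwa [insert_eq_of_mem h]⟩
    · obtain ⟨x, hx, h⟩ := h2 y hy
      exact ⟨x, hx, by rwa [insert_eq_of_mem h]⟩

theorem EF.refl {P : M → M → Prop} (hP : ∀ x, P x x) {R : Set (M × M)}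
    (hR : ∀ p ∈ R, p.1 = p.2) : EF P D D k R := by
  refine EF.mono (R := {p | p.1 = p.2}) hR (EF.of_iso ?_ (fun x hx => ⟨x, hx, rfl⟩)
    (fun x hx => ⟨x, hx, rfl⟩))
  rintro ⟨x, y⟩ (rfl : x = y)
  refine ⟨hP _, ?_⟩
  rintro ⟨z, w⟩ (rfl : z = w)
  rfl

theorem EF.sum {D₁ D₂ E₁ E₂ : Set M} {D₁' D₂' E₁' E₂' : Set N} {R₁ R₂ : Set (M × N)}
    (hE : ∀ x ∈ E₁, ∀ y ∈ E₂, x < y) (hE' : ∀ x ∈ E₁', ∀ y ∈ E₂', x < y)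
    (h₁ : EF P D₁ D₁' k R₁) (h₂ : EF P D₂ D₂' k R₂)
    (hR₁ : R₁ ⊆ E₁ ×ˢ E₁') (hR₂ : R₂ ⊆ E₂ ×ˢ E₂')
    (hD₁ : D₁ ⊆ E₁) (hD₂ : D₂ ⊆ E₂) (hD₁' : D₁' ⊆ E₁') (hD₂' : D₂' ⊆ E₂') :
    EF P (D₁ ∪ D₂) (D₁' ∪ D₂') k (R₁ ∪ R₂) := by
  have base : ∀ {R₁ R₂ : Set (M × N)}, R₁ ⊆ E₁ ×ˢ E₁' → R₂ ⊆ E₂ ×ˢ E₂' → EFBase P R₁ →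
      EFBase P R₂ → EFBase P (R₁ ∪ R₂) := by
    rintro R₁ R₂ hR₁ hR₂ h₁ h₂ p (hp | hp)
    · refine ⟨(h₁ p hp).1, ?_⟩
      rintro q (hq | hq)
      · exact (h₁ p hp).2 q hq
      · exact iff_of_true (hE _ (hR₁ hp).1 _ (hR₂ hq).1) (hE' _ (hR₁ hp).2 _ (hR₂ hq).2)
    · refine ⟨(h₂ p hp).1, ?_⟩
      rintro q (hq | hq)
      · exact iff_of_false (hE _ (hR₁ hq).1 _ (hR₂ hp).1).asymm
          (hE' _ (hR₁ hq).2 _ (hR₂ hp).2).asymm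
      · exact (h₂ p hp).2 q hq
  induction k generalizing R₁ R₂ with
  | zero => exact base hR₁ hR₂ h₁ h₂
  | succ k ih =>
    have i1 : ∀ {R : Set (M × N)} {x y}, x ∈ D₁ → y ∈ D₁' → R ⊆ E₁ ×ˢ E₁' →
      insert (x, y) R ⊆ E₁ ×ˢ E₁' := fun hx hy h => insert_subset ⟨hD₁ hx, hD₁' hy⟩ h
    have i2 : ∀ {R : Set (M × N)} {x y}, x ∈ D₂ → y ∈ D₂' → R ⊆ E₂ ×ˢ E₂' →
      insert (x, y) R ⊆ E₂ ×ˢ E₂' := fun hx hy h => insert_subset ⟨hD₂ hx, hD₂' hy⟩ h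
    refine ⟨base hR₁ hR₂ h₁.1 h₂.1, ?_, ?_⟩
    · rintro x (hx | hx)
      · obtain ⟨y, hy, h⟩ := h₁.2.1 x hx
        exact ⟨y, Or.inl hy, by rw [← insert_union]; exact ih h h₂.pred (i1 hx hy hR₁) hR₂⟩
      · obtain ⟨y, hy, h⟩ := h₂.2.1 x hx
        exact ⟨y, Or.inr hy, by rw [← union_insert]; exact ih h₁.pred h hR₁ (i2 hx hy hR₂)⟩
    · rintro y (hy | hy)
      · obtain ⟨x, hx, h⟩ := h₁.2.2 y hy
        exact ⟨x, Or.inl hx, by rw [← insert_union]; exact ih h h₂.pred (i1 hx hy hR₁) hR₂⟩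
      · obtain ⟨x, hx, h⟩ := h₂.2.2 y hy
        exact ⟨x, Or.inr hx, by rw [← union_insert]; exact ih h₁.pred h hR₁ (i2 hx hy hR₂)⟩

theorem EF.relativize {E : Set M} {E' : Set N}
    (h : EF (fun x y => P x y ∧ (x ∈ E ↔ y ∈ E')) D D' k R) : EF P (D ∩ E) (D' ∩ E') k R := by
  induction k generalizing R with
  | zero => exact fun p hp => ⟨(h p hp).1.1, (h p hp).2⟩
  | succ k ih =>
    refine ⟨fun p hp => ⟨(h.1 p hp).1.1, (h.1 p hp).2⟩, fun x hx => ?_, fun y hy => ?_⟩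
    · obtain ⟨y, hy, h'⟩ := h.2.1 x hx.1
      exact ⟨y, ⟨hy, (h'.base _ (mem_insert _ _)).1.2.1 hx.2⟩, ih h'⟩
    · obtain ⟨x, hx, h'⟩ := h.2.2 y hy.1
      exact ⟨x, ⟨hx, (h'.base _ (mem_insert _ _)).1.2.2 hy.2⟩, ih h'⟩

theorem EF.tag {Q : M → N → Prop} {m : ℕ} {R₀ : Set (M × N)}
    (hQ : ∀ x ∈ D, ∀ y ∈ D', EF P D D' m (insert (x, y) R₀) → Q x y) (h0 : R₀ ⊆ R)
    (hR : ∀ p ∈ R, Q p.1 p.2) (h : EF P D D' (m + k) R) :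
    EF (fun x y => P x y ∧ Q x y) D D' k R := by
  induction k generalizing R with
  | zero => exact fun p hp => ⟨⟨(h.base p hp).1, hR p hp⟩, (h.base p hp).2⟩
  | succ k ih =>
    have key : ∀ x ∈ D, ∀ y ∈ D', EF P D D' (m + k) (insert (x, y) R) →
        EF (fun x y => P x y ∧ Q x y) D D' k (insert (x, y) R) := by
      intro x hx y hy h'
      refine ih (h0.trans (subset_insert _ _)) ?_ h'
      rintro p (rfl | hp)
      · exact hQ x hx y hy ((h'.of_le (Nat.le_add_right _ _)).mono (insert_subset_insert h0))
      · exact hR p hp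
    refine ⟨fun p hp => ⟨⟨(h.base p hp).1, hR p hp⟩, (h.base p hp).2⟩, fun x hx => ?_,
      fun y hy => ?_⟩
    · obtain ⟨y, hy, h'⟩ := h.2.1 x hx
      exact ⟨y, hy, key x hx y hy h'⟩
    · obtain ⟨x, hx, h'⟩ := h.2.2 y hy
      exact ⟨x, hx, key x hx y hy h'⟩

end EF

section Colors

variable {ι : Type} {M N K : Type} [LinearOrder M] [LinearOrder N] [LinearOrder K]

/-- Two points agree on the colors in `F`. -/
def ColorAgree (F : Finset ι) (cM : ι → Set M) (cN : ι → Set N) (x : M) (y : N) : Prop :=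
  ∀ i ∈ F, (x ∈ cM i ↔ y ∈ cN i)

/-- The `k`-round game respecting the finitely many colors `F`. -/
def CEF (cM : ι → Set M) (cN : ι → Set N) (D : Set M) (D' : Set N) (k : ℕ) (F : Finset ι)
    (R : Set (M × N)) : Prop :=
  EF (ColorAgree F cM cN) D D' k R

/-- Duplicator wins all finite games from the position `R`. -/
def AEF (cM : ι → Set M) (cN : ι → Set N) (D : Set M) (D' : Set N) (R : Set (M × N)) : Prop :=
  ∀ k F, CEF cM cN D D' k F R

variable {cM : ι → Set M} {cN : ι → Set N} {cK : ι → Set K} {D : Set M} {D' : Set N}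
  {k l : ℕ} {F F' : Finset ι} {R R' : Set (M × N)}

theorem CEF.mono_right (h : CEF cM cN D D' k F R) (hR : R' ⊆ R) : CEF cM cN D D' k F R' :=
  EF.mono hR h

theorem CEF.of_le (h : CEF cM cN D D' k F R) (hl : l ≤ k) (hF : F' ⊆ F) :
    CEF cM cN D D' l F' R :=
  (EF.of_le hl h).imp (fun _ _ _ _ h i hi => h i (hF hi)) (fun _ _ h i hi => h i (hF hi))

theorem CEF.symm (h : CEF cM cN D D' k F R) : CEF cN cM D' D k F (Prod.swap ⁻¹' R) :=
  (EF.symm h).imp (fun _ _ _ _ h i hi => (h i hi).symm) (fun _ _ h i hi => (h i hi).symm)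

theorem CEF.comp {D'' : Set K} {R₂ : Set (N × K)} {R₃ : Set (M × K)}
    (h : CEF cM cN D D' k F R) (h' : CEF cN cK D' D'' k F R₂)
    (hR : ∀ p ∈ R₃, ∃ y, (p.1, y) ∈ R ∧ (y, p.2) ∈ R₂) : CEF cM cK D D'' k F R₃ :=
  EF.comp (fun _ _ _ h h' i hi => (h i hi).trans (h' i hi)) h h' hR

theorem CEF.refl {R : Set (M × M)} (hR : ∀ p ∈ R, p.1 = p.2) : CEF cM cM D D k F R :=
  EF.refl (fun _ _ _ => Iff.rfl) hR

theorem AEF.mono_right (h : AEF cM cN D D' R) (hR : R' ⊆ R) : AEF cM cN D D' R' :=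
  fun k F => (h k F).mono_right hR

theorem AEF.symm (h : AEF cM cN D D' R) : AEF cN cM D' D (Prod.swap ⁻¹' R) :=
  fun k F => (h k F).symm

theorem AEF.comp {D'' : Set K} {R₂ : Set (N × K)} {R₃ : Set (M × K)}
    (h : AEF cM cN D D' R) (h' : AEF cN cK D' D'' R₂)
    (hR : ∀ p ∈ R₃, ∃ y, (p.1, y) ∈ R ∧ (y, p.2) ∈ R₂) : AEF cM cK D D'' R₃ :=
  fun k F => (h k F).comp (h' k F) hR

theorem AEF.refl {R : Set (M × M)} (hR : ∀ p ∈ R, p.1 = p.2) : AEF cM cM D D R :=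
  fun _ _ => CEF.refl hR

end Colors

section Formulas

variable {ι : Type}

theorem range_sum_snoc {α M N : Type} {n : ℕ} (v : α → M) (xs : Fin n → M) (w : α → N)
    (ys : Fin n → N) (x : M) (y : N) :
    (range fun i : α ⊕ Fin (n + 1) => (Sum.elim v (Fin.snoc xs x : Fin (n + 1) → M) i,
      Sum.elim w (Fin.snoc ys y : Fin (n + 1) → N) i)) =
    insert (x, y) (range fun i : α ⊕ Fin n => (Sum.elim v xs i, Sum.elim w ys i)) := by
  ext p
  constructor
  · rintro ⟨i | i, rfl⟩
    · exact Or.inr ⟨Sum.inl i, rfl⟩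
    · induction i using Fin.lastCases with
      | last => left; simp
      | cast i => exact Or.inr ⟨Sum.inr i, by simp⟩
  · rintro (rfl | ⟨i | i, rfl⟩)
    · exact ⟨Sum.inr (Fin.last n), by simp⟩
    · exact ⟨Sum.inl i, rfl⟩
    · exact ⟨Sum.inr i.castSucc, by simp⟩

theorem EFBase.eq_iff {M N : Type} [LinearOrder M] [LinearOrder N] {P : M → N → Prop}
    {R : Set (M × N)} (h : EFBase P R) {p q : M × N} (hp : p ∈ R) (hq : q ∈ R) :
    p.1 = q.1 ↔ p.2 = q.2 := by
  have h1 := (h p hp).2 q hq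
  have h2 := (h q hq).2 p hp
  constructor
  · intro e
    rw [e] at h1 h2
    exact le_antisymm (not_lt.1 fun h => lt_irrefl _ (h2.2 h))
      (not_lt.1 fun h => lt_irrefl _ (h1.2 h))
  · intro e
    rw [e] at h1 h2
    exact le_antisymm (not_lt.1 fun h => lt_irrefl _ (h2.1 h))
      (not_lt.1 fun h => lt_irrefl _ (h1.1 h))

theorem exists_EF_realize_iff {α : Type} {n : ℕ} (φ : (CLOLang ι).BoundedFormula α n) :
    ∃ k F, ∀ (M N : Type) [LinearOrder M] [LinearOrder N] (cM : ι → Set M) (cN : ι → Set N)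
      (v : α → M) (xs : Fin n → M) (w : α → N) (ys : Fin n → N),
      CEF cM cN univ univ k F
        (range fun i : α ⊕ Fin n => (Sum.elim v xs i, Sum.elim w ys i)) →
      ((letI := CLOStr ι M cM; φ.Realize v xs) ↔ (letI := CLOStr ι N cN; φ.Realize w ys)) := by
  classical
  have term : ∀ {n : ℕ} (t : (CLOLang ι).Term (α ⊕ Fin n)), ∃ i, t = Term.var i := by
    intro n t
    cases t with
    | var i => exact ⟨i, rfl⟩
    | func f _ => exact Empty.elim f
  induction φ with
  | falsum => exact ⟨0, ∅, fun M N _ _ cM cN v xs w ys h => Iff.rfl⟩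
  | equal t₁ t₂ =>
    obtain ⟨i, rfl⟩ := term t₁
    obtain ⟨j, rfl⟩ := term t₂
    exact ⟨0, ∅, fun M N _ _ cM cN v xs w ys h =>
      EFBase.eq_iff h.base (mem_range_self i) (mem_range_self j)⟩
  | rel r ts =>
    cases r with
    | lt =>
      obtain ⟨i, hi⟩ := term (ts 0)
      obtain ⟨j, hj⟩ := term (ts 1)
      refine ⟨0, ∅, fun M N _ _ cM cN v xs w ys h => ?_⟩
      have := (h.base _ (mem_range_self i)).2 _ (mem_range_self j)
      let _ := CLOStr ι M cM
      let _ := CLOStr ι N cN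
      change (ts 0).realize _ < (ts 1).realize _ ↔ (ts 0).realize _ < (ts 1).realize _
      rw [hi, hj]
      exact this
    | color c =>
      obtain ⟨i, hi⟩ := term (ts 0)
      refine ⟨0, {c}, fun M N _ _ cM cN v xs w ys h => ?_⟩
      have := (h.base _ (mem_range_self i)).1 c (by simp)
      let _ := CLOStr ι M cM
      let _ := CLOStr ι N cN
      change (ts 0).realize _ ∈ cM c ↔ (ts 0).realize _ ∈ cN c
      rw [hi]
      exact this
  | imp φ ψ ih₁ ih₂ =>
    obtain ⟨k₁, F₁, h₁⟩ := ih₁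
    obtain ⟨k₂, F₂, h₂⟩ := ih₂
    refine ⟨max k₁ k₂, F₁ ∪ F₂, fun M N _ _ cM cN v xs w ys h => ?_⟩
    exact imp_congr
      (h₁ M N cM cN v xs w ys (h.of_le (le_max_left _ _) Finset.subset_union_left))
      (h₂ M N cM cN v xs w ys (h.of_le (le_max_right _ _) Finset.subset_union_right))
  | all φ ih =>
    obtain ⟨k, F, hk⟩ := ih
    refine ⟨k + 1, F, fun M N _ _ cM cN v xs w ys h => ?_⟩
    have key : ∀ x y, CEF cM cN univ univ k F (insert (x, y)
        (range fun i => (Sum.elim v xs i, Sum.elim w ys i))) →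
        ((letI := CLOStr ι M cM; φ.Realize v (Fin.snoc xs x)) ↔
          (letI := CLOStr ι N cN; φ.Realize w (Fin.snoc ys y))) := by
      intro x y h'
      refine hk M N cM cN v (Fin.snoc xs x) w (Fin.snoc ys y) ?_
      rwa [range_sum_snoc]
    constructor
    · intro hM y
      obtain ⟨x, -, h'⟩ := h.2.2 y trivial
      exact (key x y h').1 (hM x)
    · intro hN x
      obtain ⟨y, -, h'⟩ := h.2.1 x trivial
      exact (key x y h').2 (hN y)

/-- Hintikka formulas: finitely many formulas decide the `k`-round game. -/
theorem exists_finset_EF (k : ℕ) (F : Finset ι) (n : ℕ) :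
    ∃ Δ : Finset ((CLOLang ι).BoundedFormula Empty n),
      ∀ (M N : Type) [LinearOrder M] [LinearOrder N] (cM : ι → Set M) (cN : ι → Set N)
      (xs : Fin n → M) (ys : Fin n → N),
      (∀ φ ∈ Δ, (letI := CLOStr ι M cM; φ.Realize default xs) ↔
        (letI := CLOStr ι N cN; φ.Realize default ys)) →
      CEF cM cN univ univ k F (range fun i => (xs i, ys i)) := by
  classical
  have base : ∀ n, ∃ Δ : Finset ((CLOLang ι).BoundedFormula Empty n),
      ∀ (M N : Type) [LinearOrder M] [LinearOrder N] (cM : ι → Set M) (cN : ι → Set N)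
      (xs : Fin n → M) (ys : Fin n → N),
      (∀ φ ∈ Δ, (letI := CLOStr ι M cM; φ.Realize default xs) ↔
        (letI := CLOStr ι N cN; φ.Realize default ys)) →
      EFBase (ColorAgree F cM cN) (range fun i => (xs i, ys i)) := by
    intro n
    let lt (p : Fin n × Fin n) : (CLOLang ι).BoundedFormula Empty n :=
      BoundedFormula.rel (CLORel.lt : (CLOLang ι).Relations 2) ![&p.1, &p.2]
    let col (p : Fin n × ι) : (CLOLang ι).BoundedFormula Empty n :=
      BoundedFormula.rel (CLORel.color p.2 : (CLOLang ι).Relations 1) ![&p.1]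
    refine ⟨Finset.univ.image lt ∪ (Finset.univ ×ˢ F).image col, ?_⟩
    rintro M N _ _ cM cN xs ys h _ ⟨i, rfl⟩
    refine ⟨fun c hc => ?_, ?_⟩
    · exact h (col (i, c)) (by simp; right; exact ⟨i, c, hc, rfl⟩)
    · rintro _ ⟨j, rfl⟩
      exact h (lt (i, j)) (by simp)
  induction k generalizing n with
  | zero => exact base n
  | succ k ih =>
    obtain ⟨Δ₀, h₀⟩ := base n
    obtain ⟨Δ, hΔ⟩ := ih (n + 1)
    let θ (T : Finset ((CLOLang ι).BoundedFormula Empty (n + 1))) :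
        (CLOLang ι).BoundedFormula Empty n :=
      (BoundedFormula.iInf fun φ : Δ => if φ.1 ∈ T then φ.1 else ∼φ.1).ex
    have hθ : ∀ (M : Type) [LinearOrder M] (cM : ι → Set M) (xs : Fin n → M) (T),
        (letI := CLOStr ι M cM; (θ T).Realize default xs) ↔
          ∃ x, ∀ φ ∈ Δ, (φ ∈ T ↔ (letI := CLOStr ι M cM; φ.Realize default (Fin.snoc xs x))) := by
      intro M _ cM xs T
      let _ := CLOStr ι M cM
      simp only [θ, BoundedFormula.realize_ex, BoundedFormula.realize_iInf, Subtype.forall]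
      refine exists_congr fun x => forall_congr' fun φ => forall_congr' fun hφ => ?_
      by_cases hT : φ ∈ T <;> simp [hT]
    refine ⟨Δ₀ ∪ Δ.powerset.image θ, fun M N _ _ cM cN xs ys h => ?_⟩
    have ins : ∀ x y, (∀ φ ∈ Δ, (letI := CLOStr ι M cM; φ.Realize default (Fin.snoc xs x)) ↔
        (letI := CLOStr ι N cN; φ.Realize default (Fin.snoc ys y))) →
        CEF cM cN univ univ k F (insert (x, y) (range fun i => (xs i, ys i))) := by
      intro x y h'
      have := hΔ M N cM cN _ _ h'
      refine this.mono_right ?_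
      rintro p (rfl | ⟨i, rfl⟩)
      · exact ⟨Fin.last n, by simp⟩
      · exact ⟨i.castSucc, by simp⟩
    refine ⟨h₀ M N cM cN xs ys fun φ hφ => h φ (Finset.mem_union_left _ hφ), fun x _ => ?_,
      fun y _ => ?_⟩
    · let T := Δ.filter fun φ => (letI := CLOStr ι M cM; φ.Realize default (Fin.snoc xs x))
      have hT := h (θ T) (Finset.mem_union_right _ (Finset.mem_image_of_mem _
        (Finset.mem_powerset.2 (Finset.filter_subset _ _))))
      rw [hθ, hθ] at hT
      obtain ⟨y, hy⟩ := hT.1 ⟨x, fun φ hφ => by simp [T, hφ]⟩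
      exact ⟨y, trivial, ins x y fun φ hφ => by rw [← hy φ hφ]; simp [T, hφ]⟩
    · let T := Δ.filter fun φ => (letI := CLOStr ι N cN; φ.Realize default (Fin.snoc ys y))
      have hT := h (θ T) (Finset.mem_union_right _ (Finset.mem_image_of_mem _
        (Finset.mem_powerset.2 (Finset.filter_subset _ _))))
      rw [hθ, hθ] at hT
      obtain ⟨x, hx⟩ := hT.2 ⟨y, fun φ hφ => by simp [T, hφ]⟩
      exact ⟨x, trivial, ins x y fun φ hφ => by rw [← hx φ hφ]; simp [T, hφ]⟩

theorem exists_CEF_sat_iff {α : Type} (φ : (CLOLang ι).Formula α) :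
    ∃ k F, ∀ (M N : Type) [LinearOrder M] [LinearOrder N] (cM : ι → Set M) (cN : ι → Set N)
      (v : α → M) (w : α → N), CEF cM cN univ univ k F (range fun i => (v i, w i)) →
      (Sat M cM φ v ↔ Sat N cN φ w) := by
  obtain ⟨k, F, h⟩ := exists_EF_realize_iff φ
  refine ⟨k, F, fun M N _ _ cM cN v w hR => h M N cM cN v default w default ?_⟩
  refine hR.mono_right ?_
  rintro _ ⟨i | i, rfl⟩
  · exact ⟨i, rfl⟩
  · exact i.elim0

theorem exists_finset_formula_CEF {α : Type} [Finite α] (k : ℕ) (F : Finset ι) :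
    ∃ Δ : Finset ((CLOLang ι).Formula α),
      ∀ (M N : Type) [LinearOrder M] [LinearOrder N] (cM : ι → Set M) (cN : ι → Set N)
      (v : α → M) (w : α → N), (∀ φ ∈ Δ, Sat M cM φ v ↔ Sat N cN φ w) →
      CEF cM cN univ univ k F (range fun i => (v i, w i)) := by
  classical
  obtain ⟨n, ⟨e⟩⟩ := Finite.exists_equiv_fin α
  obtain ⟨Δ, hΔ⟩ := exists_finset_EF k F n
  let g (φ : (CLOLang ι).BoundedFormula Empty n) : (CLOLang ι).Formula α :=
    Formula.relabel (Sum.elim Empty.elim e.symm) φ.toFormula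
  have hg : ∀ (M : Type) [LinearOrder M] (cM : ι → Set M) (v : α → M) (φ),
      Sat M cM (g φ) v ↔ (letI := CLOStr ι M cM; φ.Realize default (v ∘ e.symm)) := by
    intro M _ cM v φ
    let _ := CLOStr ι M cM
    simp only [Sat, g, Formula.realize_relabel, BoundedFormula.realize_toFormula]
    rw [iff_iff_eq]
    congr 1
    exact Subsingleton.elim _ _
  refine ⟨Δ.image g, fun M N _ _ cM cN v w h => ?_⟩
  refine (hΔ M N cM cN (v ∘ e.symm) (w ∘ e.symm) fun φ hφ => ?_).mono_right ?_
  · rw [← hg, ← hg]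
    exact h _ (Finset.mem_image_of_mem _ hφ)
  · rintro _ ⟨i, rfl⟩
    exact ⟨e i, by simp⟩

theorem sat_iff_of_AEF {α M N : Type} [LinearOrder M] [LinearOrder N] {cM : ι → Set M}
    {cN : ι → Set N} {v : α → M} {w : α → N}
    (h : AEF cM cN univ univ (range fun i => (v i, w i))) (φ : (CLOLang ι).Formula α) :
    Sat M cM φ v ↔ Sat N cN φ w := by
  obtain ⟨k, F, hk⟩ := exists_CEF_sat_iff φ
  exact hk M N cM cN v w (h k F)

theorem AEF_of_sat_iff {α M N : Type} [Finite α] [LinearOrder M] [LinearOrder N]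
    {cM : ι → Set M} {cN : ι → Set N} {v : α → M} {w : α → N}
    (h : ∀ φ : (CLOLang ι).Formula α, Sat M cM φ v ↔ Sat N cN φ w) :
    AEF cM cN univ univ (range fun i => (v i, w i)) := by
  intro k F
  obtain ⟨Δ, hΔ⟩ := exists_finset_formula_CEF (α := α) k F
  exact hΔ M N cM cN v w fun φ _ => h φ

theorem cloTheory_eq_iff {M N : Type} [LinearOrder M] [LinearOrder N]
    {cM : ι → Set M} {cN : ι → Set N} :
    CLOTheory ι M cM = CLOTheory ι N cN ↔ CLOEquiv ι M cM N cN :=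
  Iff.rfl

theorem cloEquiv_iff {M N : Type} [LinearOrder M] [LinearOrder N]
    {cM : ι → Set M} {cN : ι → Set N} :
    CLOEquiv ι M cM N cN ↔ AEF cM cN univ univ ∅ := by
  have key : CLOEquiv ι M cM N cN ↔
      ∀ φ : (CLOLang ι).Formula Empty, Sat M cM φ default ↔ Sat N cN φ default := by
    let _ := CLOStr ι M cM
    let _ := CLOStr ι N cN
    exact elementarilyEquivalent_iff
  rw [key]
  constructor
  · intro h
    exact (AEF_of_sat_iff h).mono_right (empty_subset _)
  · intro h φ
    refine sat_iff_of_AEF ?_ φ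
    rwa [range_eq_empty]

theorem cloIso_iff {M N : Type} [LinearOrder M] [LinearOrder N]
    {cM : ι → Set M} {cN : ι → Set N} :
    CLOIso ι M cM N cN ↔ ∃ e : M ≃ N, (∀ x y, x < y ↔ e x < e y) ∧
      ∀ i x, x ∈ cM i ↔ e x ∈ cN i := by
  let _ := CLOStr ι M cM
  let _ := CLOStr ι N cN
  constructor
  · rintro ⟨e⟩
    refine ⟨e.toEquiv, fun x y => ?_, fun i x => ?_⟩
    · exact (e.map_rel (CLORel.lt : (CLOLang ι).Relations 2) ![x, y]).symm
    · exact (e.map_rel (CLORel.color i : (CLOLang ι).Relations 1) ![x]).symm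
  · rintro ⟨e, h1, h2⟩
    refine ⟨⟨e, fun f => Empty.elim f, fun r xs => ?_⟩⟩
    cases r with
    | lt => exact (h1 (xs 0) (xs 1)).symm
    | color i => exact (h2 i (xs 0)).symm

end Formulas

section Semantic

variable {ι : Type} {M N K : Type} [LinearOrder M] [LinearOrder N] [LinearOrder K]

/-- The diagonal of a set. -/
def diag {K : Type} (s : Set K) : Set (K × K) := (fun x => (x, x)) '' s

theorem diag_eq {K : Type} {s : Set K} {p : K × K} (hp : p ∈ diag s) : p.1 = p.2 := by
  obtain ⟨x, -, rfl⟩ := hp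
  rfl

theorem diag_mono {K : Type} {s t : Set K} (h : s ⊆ t) : diag s ⊆ diag t := image_mono h

theorem diag_insert {K : Type} {s : Set K} {x : K} :
    diag (insert x s) = insert (x, x) (diag s) := image_insert_eq

theorem mem_diag {K : Type} {s : Set K} {x : K} (hx : x ∈ s) : (x, x) ∈ diag s :=
  mem_image_of_mem _ hx

/-- `W` is invariant under the `k`-round game over the parameters `s`. -/
def SemDef (c : ι → Set K) (k : ℕ) (F : Finset ι) (s W : Set K) : Prop :=
  ∀ x x', CEF c c univ univ k F (insert (x, x') (diag s)) → x ∈ W → x' ∈ W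

/-- Game-theoretic form of `ℵ₀`-saturation. -/
def SemSat (c : ι → Set K) : Prop :=
  ∀ s : Set K, s.Finite → ∀ W : ℕ → Finset ι → Set K,
    (∀ k l F F', k ≤ l → F ⊆ F' → W l F' ⊆ W k F) →
    (∀ k F, (W k F).Nonempty ∧ ∃ l F', SemDef c l F' s (W k F)) → ∃ x, ∀ k F, x ∈ W k F

/-- Game-theoretic form of strong `ℵ₀`-homogeneity. -/
def SemHom (c : ι → Set K) : Prop :=
  ∀ R : Set (K × K), R.Finite → AEF c c univ univ R → ∃ g : K ≃ K, (∀ x y, x < y ↔ g x < g y) ∧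
    (∀ i x, x ∈ c i ↔ g x ∈ c i) ∧ ∀ p ∈ R, g p.1 = p.2

theorem exists_fin_range {K : Type} {s : Set K} (hs : s.Finite) :
    ∃ (m : ℕ) (a : Fin m → K), range a = s := by
  have := hs.to_subtype
  obtain ⟨m, ⟨e⟩⟩ := Finite.exists_equiv_fin s
  exact ⟨m, fun i => e.symm i, by
    ext x
    constructor
    · rintro ⟨i, rfl⟩
      exact (e.symm i).2
    · intro hx
      exact ⟨e ⟨x, hx⟩, by simp⟩⟩

theorem Aleph0Saturated.semSat {c : ι → Set K} (h : Aleph0Saturated ι K c) : SemSat c := by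
  classical
  intro s hs W hW hW'
  obtain ⟨m, a, rfl⟩ := exists_fin_range hs
  obtain ⟨x, hx⟩ := h m a
    {φ | ∃ k F, ∀ x ∈ W k F, Sat K c φ (Sum.elim (fun _ => x) a)} (by
      intro q hq
      have : ∃ k F, ∀ φ ∈ q, ∀ x ∈ W k F, Sat K c φ (Sum.elim (fun _ => x) a) := by
        induction q using Finset.induction_on with
        | empty => exact ⟨0, ∅, by simp⟩
        | insert φ q _ ih =>
          rw [Finset.coe_insert, insert_subset_iff] at hq
          obtain ⟨k, F, h1⟩ := ih hq.2
          obtain ⟨l, F', h2⟩ := hq.1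
          refine ⟨max k l, F ∪ F', fun ψ hψ x hx => ?_⟩
          rcases Finset.mem_insert.1 hψ with rfl | hψ
          · exact h2 x (hW _ _ _ _ (le_max_right _ _) Finset.subset_union_right hx)
          · exact h1 ψ hψ x (hW _ _ _ _ (le_max_left _ _) Finset.subset_union_left hx)
      obtain ⟨k, F, hkF⟩ := this
      obtain ⟨x, hx⟩ := (hW' k F).1
      exact ⟨x, fun φ hφ => hkF φ hφ x hx⟩)
  refine ⟨x, fun k F => ?_⟩
  obtain ⟨l, F', hdef⟩ := (hW' k F).2
  obtain ⟨Δ, hΔ⟩ := exists_finset_formula_CEF (ι := ι) (α := Unit ⊕ Fin m) l F'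
  have : ∃ y ∈ W k F, ∀ φ ∈ Δ, (Sat K c φ (Sum.elim (fun _ => y) a) ↔
      Sat K c φ (Sum.elim (fun _ => x) a)) := by
    by_contra hno
    push Not at hno
    let _ := CLOStr ι K c
    let θ : (CLOLang ι).Formula (Unit ⊕ Fin m) :=
      BoundedFormula.iInf fun φ : Δ => if Sat K c φ.1 (Sum.elim (fun _ => x) a) then φ.1 else ∼φ.1
    have hθ : ∀ y, Sat K c θ (Sum.elim (fun _ => y) a) ↔
        ∀ φ ∈ Δ, (Sat K c φ (Sum.elim (fun _ => y) a) ↔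
          Sat K c φ (Sum.elim (fun _ => x) a)) := by
      intro y
      unfold Sat Formula.Realize
      simp only [θ, BoundedFormula.realize_iInf, Subtype.forall]
      refine forall_congr' fun φ => forall_congr' fun hφ => ?_
      by_cases hT : Sat K c φ (Sum.elim (fun _ => x) a)
      · rw [if_pos hT]
        exact (iff_true_right hT).symm
      · rw [if_neg hT]
        exact (iff_false_right hT).symm
    have h1 : Sat K c (∼θ) (Sum.elim (fun _ => x) a) := by
      refine hx _ ⟨k, F, fun y hy h2 => ?_⟩
      obtain ⟨φ, hφ, h3⟩ := hno y hy
      have := (hθ y).1 h2 φ hφ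
      tauto
    exact h1 ((hθ x).2 fun _ _ => Iff.rfl)
  obtain ⟨y, hy, hyx⟩ := this
  refine hdef y x ((hΔ K K c c _ _ hyx).mono_right ?_) hy
  rintro _ (rfl | ⟨_, ⟨i, rfl⟩, rfl⟩)
  · exact ⟨Sum.inl (), rfl⟩
  · exact ⟨Sum.inr i, rfl⟩

theorem StronglyAleph0Homogeneous.semHom {c : ι → Set K} (h : StronglyAleph0Homogeneous ι K c) :
    SemHom c := by
  intro R hR hA
  obtain ⟨m, a, rfl⟩ := exists_fin_range hR
  obtain ⟨g, h1, h2, h3⟩ := h m (fun i => (a i).1) (fun i => (a i).2)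
    (sat_iff_of_AEF hA)
  refine ⟨g, h1, h2, ?_⟩
  rintro _ ⟨i, rfl⟩
  exact h3 i

theorem SemSat.extend {cM : ι → Set M} {c : ι → Set K} (h : SemSat c) {D : Set M}
    {R : Set (M × K)} (hR : R.Finite) (hA : AEF cM c D univ R) {x : M} (hx : x ∈ D) :
    ∃ y, AEF cM c D univ (insert (x, y) R) := by
  refine h (Prod.snd '' R) (hR.image _) (fun k F => {y | CEF cM c D univ k F (insert (x, y) R)})
    (fun k l F F' hk hF y hy => CEF.of_le hy hk hF) fun k F => ⟨?_, k, F, ?_⟩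
  · obtain ⟨y, -, hy⟩ := (hA (k + 1) F).2.1 x hx
    exact ⟨y, hy⟩
  · intro y y' h1 h2
    refine CEF.comp h2 h1 ?_
    rintro p (rfl | hp)
    · exact ⟨y, Or.inl rfl, Or.inl rfl⟩
    · exact ⟨p.2, Or.inr hp, Or.inr (mem_diag (mem_image_of_mem _ hp))⟩

theorem cloIso_of_rel {cM : ι → Set M} {cN : ι → Set N} (Z : Set (M × N))
    (h1 : ∀ x, ∃ y, (x, y) ∈ Z) (h2 : ∀ y, ∃ x, (x, y) ∈ Z)
    (hZ : ∀ p ∈ Z, (∀ i, p.1 ∈ cM i ↔ p.2 ∈ cN i) ∧ ∀ q ∈ Z, (p.1 < q.1 ↔ p.2 < q.2)) :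
    CLOIso ι M cM N cN := by
  have hb : EFBase (fun x y => ∀ i, x ∈ cM i ↔ y ∈ cN i) Z := hZ
  choose f hf using h1
  choose g hg using h2
  rw [cloIso_iff]
  exact ⟨⟨f, g, fun x => (hb.eq_iff (hg (f x)) (hf x)).2 rfl,
    fun y => (hb.eq_iff (hf (g y)) (hg y)).1 rfl⟩, fun x y => (hZ _ (hf x)).2 _ (hf y),
    fun i x => (hZ _ (hf x)).1 i⟩

theorem SemSat.cloIso [Countable M] [Countable N] {cM : ι → Set M} {cN : ι → Set N}
    (hM : SemSat cM) (hN : SemSat cN) (h : AEF cM cN univ univ ∅) : CLOIso ι M cM N cN := by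
  let P := {R : Set (M × N) // R.Finite ∧ AEF cM cN univ univ R}
  have e1 : ∀ (x : M) (R : P), ∃ R' : P, (∃ y, (x, y) ∈ R'.1) ∧ R ≤ R' := by
    rintro x ⟨R, hR, hA⟩
    obtain ⟨y, hy⟩ := hN.extend hR hA (mem_univ x)
    exact ⟨⟨insert (x, y) R, hR.insert _, hy⟩, ⟨y, mem_insert _ _⟩, subset_insert _ _⟩
  have e2 : ∀ (y : N) (R : P), ∃ R' : P, (∃ x, (x, y) ∈ R'.1) ∧ R ≤ R' := by
    rintro y ⟨R, hR, hA⟩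
    obtain ⟨x, hx⟩ := hM.extend (hR.preimage Prod.swap_injective.injOn) hA.symm (mem_univ y)
    refine ⟨⟨insert (x, y) R, hR.insert _, hx.symm.mono_right ?_⟩, ⟨x, mem_insert _ _⟩,
      subset_insert _ _⟩
    rintro p (rfl | hp)
    exacts [Or.inl rfl, Or.inr hp]
  let 𝒟 : M ⊕ N → Order.Cofinal P := Sum.elim
    (fun x => ⟨{R | ∃ y, (x, y) ∈ R.1}, e1 x⟩) (fun y => ⟨{R | ∃ x, (x, y) ∈ R.1}, e2 y⟩)
  have := Encodable.ofCountable (M ⊕ N)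
  let I := Order.idealOfCofinals (⟨∅, finite_empty, h⟩ : P) 𝒟
  refine cloIso_of_rel (⋃ R ∈ I, R.1) (fun x => ?_) (fun y => ?_) ?_
  · obtain ⟨R, ⟨y, hy⟩, hR⟩ := Order.cofinal_meets_idealOfCofinals ⟨∅, finite_empty, h⟩ 𝒟 (.inl x)
    exact ⟨y, mem_biUnion hR hy⟩
  · obtain ⟨R, ⟨x, hx⟩, hR⟩ := Order.cofinal_meets_idealOfCofinals ⟨∅, finite_empty, h⟩ 𝒟 (.inr y)
    exact ⟨x, mem_biUnion hR hx⟩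
  · intro p hp
    simp only [mem_iUnion] at hp
    obtain ⟨R, hR, hp⟩ := hp
    refine ⟨fun i => (R.2.2 0 {i} p hp).1 i (by simp), fun q hq => ?_⟩
    simp only [mem_iUnion] at hq
    obtain ⟨R', hR', hq⟩ := hq
    obtain ⟨Z, hZ, h1, h2⟩ := I.directed R hR R' hR'
    exact (Z.2.2 0 ∅ p (h1 hp)).2 q (h2 hq)

end Semantic

section Ultrapower

variable {L : FirstOrder.Language.{0, 0}} {M : Type} [L.Structure M]

theorem exists_formula_exists {α β : Type} (φ : L.Formula (α ⊕ β)) :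
    ∃ ψ : L.Formula α, ∀ (M : Type) [L.Structure M] [Nonempty M] (v : α → M),
      ψ.Realize v ↔ ∃ h : β → M, φ.Realize (Sum.elim v h) := by
  classical
  let T := {b : β // Sum.inr b ∈ φ.freeVarFinset}
  have : Finite T := by
    refine Finite.of_injective (fun b : T => (⟨Sum.inr b.1, b.2⟩ : φ.freeVarFinset)) ?_
    intro b b' h
    have := congrArg Subtype.val h
    exact Subtype.ext (Sum.inr_injective this)
  let f : φ.freeVarFinset → α ⊕ T := fun x =>
    match x with
    | ⟨Sum.inl a, _⟩ => Sum.inl a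
    | ⟨Sum.inr b, h⟩ => Sum.inr ⟨b, h⟩
  refine ⟨Formula.iExs T (BoundedFormula.restrictFreeVar φ f), fun M _ _ v => ?_⟩
  rw [Formula.realize_iExs]
  have key : ∀ (h : T → M) (h' : β → M), (∀ b : T, h b = h' b.1) →
      ((BoundedFormula.restrictFreeVar φ f).Realize (Sum.elim v h) (default : Fin 0 → M) ↔
        φ.Realize (Sum.elim v h')) := by
    intro h h' hh
    refine BoundedFormula.realize_restrictFreeVar (Sum.elim v h') ?_
    rintro ⟨a | b, hb⟩
    · rfl
    · exact hh ⟨b, hb⟩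
  constructor
  · rintro ⟨h, hh⟩
    let h' : β → M := fun b => if hb : Sum.inr b ∈ φ.freeVarFinset then h ⟨b, hb⟩
      else Classical.arbitrary M
    exact ⟨h', (key h h' fun b => by simp [h', b.2]).1 hh⟩
  · rintro ⟨h', hh⟩
    exact ⟨fun b => h' b.1, (key _ h' fun b => rfl).2 hh⟩

variable (L M) in
/-- The index set of the ultrapower realizing all types over `M` in `M`-many variables. -/
abbrev UltraIdx := Finset (L.Formula (M ⊕ M))

variable (L M) in
/-- An ultrafilter refining the filter of large finite sets of formulas. -/
noncomputable def ultraFilter : Ultrafilter (UltraIdx L M) := Ultrafilter.of Filter.atTop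

variable (L M) in
/-- An ultrapower of `M` realizing all types over `M` in `M`-many variables. -/
abbrev UltraPow : Type :=
  (ultraFilter L M : Filter (UltraIdx L M)).Product fun _ => M

variable (L M) in
/-- The diagonal embedding into the ultrapower. -/
noncomputable def ultraEmb [Nonempty M] : M ↪ₑ[L] UltraPow L M where
  toFun x := ((fun _ => x : UltraIdx L M → M) : UltraPow L M)
  map_formula' n φ x := by
    refine (Ultraproduct.realize_formula_cast φ fun i _ => x i).trans ?_
    simp

theorem ultraPow_realizes [Nonempty M] (p : Set (L.Formula (M ⊕ M)))
    (hp : ∀ q : Finset (L.Formula (M ⊕ M)), ↑q ⊆ p →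
      ∃ h : M → M, ∀ φ ∈ q, φ.Realize (Sum.elim id h)) :
    ∃ g : M → UltraPow L M, ∀ φ ∈ p, φ.Realize (Sum.elim (ultraEmb L M) g) := by
  classical
  have : ∀ q : UltraIdx L M, ∃ h : M → M, ∀ φ ∈ q, φ ∈ p → φ.Realize (Sum.elim id h) := by
    intro q
    obtain ⟨h, hh⟩ := hp (q.filter (· ∈ p)) (by intro φ; simp)
    exact ⟨h, fun φ h1 h2 => hh φ (Finset.mem_filter.2 ⟨h1, h2⟩)⟩
  choose h hh using this
  refine ⟨fun m => ((fun q => h q m : UltraIdx L M → M) : UltraPow L M), fun φ hφ => ?_⟩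
  have h1 := (Ultraproduct.realize_formula_cast (u := ultraFilter L M) (M := fun _ => M) φ
    (fun i q => Sum.elim id (h q) i)).2 (by
      have : ∀ᶠ q : UltraIdx L M in Filter.atTop, {φ} ≤ q := Filter.eventually_ge_atTop _
      have h2 : ∀ᶠ q in (ultraFilter L M : Filter (UltraIdx L M)), {φ} ≤ q :=
        Ultrafilter.of_le (f := Filter.atTop) this
      filter_upwards [h2] with q hq
      exact hh q φ (hq (by simp)) hφ)
  have h3 : (Sum.elim (ultraEmb L M)
      fun m => ((fun q => h q m : UltraIdx L M → M) : UltraPow L M)) =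
      fun i => ((fun q => Sum.elim id (h q) i : UltraIdx L M → M) : UltraPow L M) := by
    ext i
    rcases i with i | i <;> rfl
  rw [h3]
  exact h1

theorem ultraPow_realizes_type [Nonempty M] {m : ℕ} (a : Fin m → M)
    (p : Set (L.Formula (Unit ⊕ Fin m)))
    (hp : ∀ q : Finset (L.Formula (Unit ⊕ Fin m)), ↑q ⊆ p →
      ∃ x : M, ∀ φ ∈ q, φ.Realize (Sum.elim (fun _ => x) a)) :
    ∃ x : UltraPow L M, ∀ φ ∈ p, φ.Realize (Sum.elim (fun _ => x) (ultraEmb L M ∘ a)) := by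
  classical
  let x₀ : M := Classical.arbitrary M
  let r : Unit ⊕ Fin m → M ⊕ M := Sum.elim (fun _ => Sum.inr x₀) (Sum.inl ∘ a)
  have hr : ∀ (N : Type) (e g : M → N),
      Sum.elim e g ∘ r = Sum.elim (fun _ => g x₀) (e ∘ a) := by
    intro N e g
    ext i
    rcases i with i | i <;> rfl
  obtain ⟨g, hg⟩ := ultraPow_realizes (Formula.relabel r '' p) (by
    intro q hq
    obtain ⟨q', hq', rfl⟩ := Finset.subset_set_image_iff.1 hq
    obtain ⟨x, hx⟩ := hp q' hq'
    refine ⟨fun _ => x, fun φ hφ => ?_⟩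
    obtain ⟨ψ, hψ, rfl⟩ := Finset.mem_image.1 hφ
    rw [Formula.realize_relabel, hr]
    exact hx ψ hψ)
  refine ⟨g x₀, fun φ hφ => ?_⟩
  have := hg _ (mem_image_of_mem _ hφ)
  rwa [Formula.realize_relabel, hr] at this

theorem ultraPow_elementary [Nonempty M] {D : Type} (u v : D → M)
    (h : ∀ φ : L.Formula D, φ.Realize u → φ.Realize v) :
    ∃ g : M ↪ₑ[L] UltraPow L M, ∀ d, g (u d) = ultraEmb L M (v d) := by
  classical
  obtain ⟨g, hg⟩ := ultraPow_realizes (Formula.relabel (Sum.map v id) ''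
      {θ : L.Formula (D ⊕ M) | θ.Realize (Sum.elim u id)}) (by
    intro q hq
    obtain ⟨q', hq', rfl⟩ := Finset.subset_set_image_iff.1 hq
    obtain ⟨ψ, hψ⟩ := exists_formula_exists (Formula.iInf fun φ : q' => φ.1)
    obtain ⟨k, hk⟩ := (hψ M v).1 (h ψ ((hψ M u).2 ⟨id, by
      rw [Formula.realize_iInf]
      exact fun φ => hq' φ.2⟩))
    rw [Formula.realize_iInf] at hk
    refine ⟨k, fun φ hφ => ?_⟩
    obtain ⟨θ, hθ, rfl⟩ := Finset.mem_image.1 hφ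
    rw [Formula.realize_relabel]
    convert hk ⟨θ, hθ⟩ using 1
    ext i
    rcases i with i | i <;> rfl)
  have key : ∀ θ : L.Formula (D ⊕ M), θ.Realize (Sum.elim u id) →
      θ.Realize (Sum.elim (fun d => ultraEmb L M (v d)) g) := by
    intro θ hθ
    have := hg _ (mem_image_of_mem _ hθ)
    rw [Formula.realize_relabel] at this
    convert this using 1
    ext i
    rcases i with i | i <;> rfl
  refine ⟨⟨g, fun n φ x => ?_⟩, fun d => ?_⟩
  · have h1 : ∀ φ : L.Formula (Fin n), φ.Realize x → φ.Realize (g ∘ x) := by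
      intro φ hφ
      have := key (Formula.relabel (Sum.inr ∘ x) φ) (by rwa [Formula.realize_relabel])
      rwa [Formula.realize_relabel] at this
    refine ⟨fun h2 => ?_, h1 φ⟩
    by_contra h3
    exact (Formula.realize_not.1 (h1 (∼φ) (Formula.realize_not.2 h3))) h2
  · have := key (Term.equal (Term.var (Sum.inr (u d))) (Term.var (Sum.inl d))) (by
      rw [Formula.realize_equal]
      rfl)
    rw [Formula.realize_equal] at this
    exact this

end Ultrapower

section Chain

variable {L : FirstOrder.Language.{0, 0}}

/-- A chain of structures in which each member realizes all types over the previous one. -/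
structure RichChain (L : FirstOrder.Language.{0, 0}) where
  /-- The members of the chain. -/
  G : ℕ → Type
  /-- The structures. -/
  str : ∀ n, L.Structure (G n)
  /-- The embeddings. -/
  e : ∀ n, G n ↪ₑ[L] G (n + 1)
  realizes : ∀ n (m : ℕ) (a : Fin m → G n) (p : Set (L.Formula (Unit ⊕ Fin m))),
    (∀ q : Finset (L.Formula (Unit ⊕ Fin m)), ↑q ⊆ p →
      ∃ x : G n, ∀ φ ∈ q, φ.Realize (Sum.elim (fun _ => x) a)) →
    ∃ x : G (n + 1), ∀ φ ∈ p, φ.Realize (Sum.elim (fun _ => x) (e n ∘ a))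
  extends_map : ∀ n (D : Type) (u v : D → G n), (∀ φ : L.Formula D, φ.Realize u → φ.Realize v) →
    ∃ g : G n ↪ₑ[L] G (n + 1), ∀ d, g (u d) = e n (v d)

attribute [instance] RichChain.str

/-- The iterated ultrapowers of a nonempty structure, with proofs of nonemptiness. -/
noncomputable def ultraIter (M : Type) [L.Structure M] [Nonempty M] :
    ℕ → Σ' (N : Type) (_ : L.Structure N), Nonempty N
  | 0 => ⟨M, inferInstance, inferInstance⟩
  | n + 1 =>
    let X := ultraIter M n
    letI := X.2.1
    haveI := X.2.2
    ⟨UltraPow L X.1, inferInstance, inferInstance⟩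

theorem exists_richChain (M : Type) [L.Structure M] [Nonempty M] :
    ∃ C : RichChain L, Nonempty (M ↪ₑ[L] C.G 0) := by
  let C : RichChain L :=
    { G := fun n => (ultraIter (L := L) M n).1
      str := fun n => (ultraIter (L := L) M n).2.1
      e := fun n =>
        letI := (ultraIter (L := L) M n).2.1
        haveI := (ultraIter (L := L) M n).2.2
        ultraEmb L (ultraIter (L := L) M n).1
      realizes := fun n m a p hp =>
        letI := (ultraIter (L := L) M n).2.1
        haveI := (ultraIter (L := L) M n).2.2
        ultraPow_realizes_type a p hp
      extends_map := fun n D u v h =>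
        letI := (ultraIter (L := L) M n).2.1
        haveI := (ultraIter (L := L) M n).2.2
        ultraPow_elementary u v h }
  exact ⟨C, ⟨ElementaryEmbedding.refl L M⟩⟩

/-- `S` is the union of the elementary chain `C`. -/
structure ChainUnion (C : RichChain L) (S : Type) [L.Structure S] where
  /-- The embeddings of the members of the chain. -/
  o : ∀ n, C.G n ↪ₑ[L] S
  o_e : ∀ n x, o (n + 1) (C.e n x) = o n x
  surj : ∀ s, ∃ n x, o n x = s

theorem ChainUnion.lift_le {C : RichChain L} {S : Type} [L.Structure S] (U : ChainUnion C S)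
    {m n : ℕ} (h : m ≤ n) (x : C.G m) : ∃ y, U.o n y = U.o m x := by
  induction h with
  | refl => exact ⟨x, rfl⟩
  | step _ ih =>
    obtain ⟨y, hy⟩ := ih
    exact ⟨C.e _ y, by rw [U.o_e, hy]⟩

theorem ChainUnion.lift {C : RichChain L} {S : Type} [L.Structure S] (U : ChainUnion C S)
    {α : Type} [Finite α] (a : α → S) : ∃ n, ∃ x : α → C.G n, ∀ i, U.o n (x i) = a i := by
  choose n x hx using fun i => U.surj (a i)
  obtain ⟨N, hN⟩ := Finite.bddAbove_range n
  choose y hy using fun i => U.lift_le (hN (mem_range_self i)) (x i)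
  exact ⟨N, y, fun i => (hy i).trans (hx i)⟩

theorem exists_chainUnion (C : RichChain L) :
    ∃ (S : Type) (_ : L.Structure S), Nonempty (ChainUnion C S) := by
  let f (n : ℕ) : C.G n ↪[L] C.G (n + 1) := (C.e n).toEmbedding
  let S := Language.DirectLimit C.G (DirectedSystem.natLERec f)
  let o (n : ℕ) : C.G n ↪[L] S := Language.DirectLimit.of L ℕ C.G (DirectedSystem.natLERec f) n
  have o_e : ∀ n x, o (n + 1) (C.e n x) = o n x := by
    intro n x
    have := Language.DirectLimit.of_f (L := L) (G := C.G) (f := DirectedSystem.natLERec f)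
      (hij := Nat.le_succ n) (x := x)
    rw [← this]
    congr 1
    rw [DirectedSystem.coe_natLERec]
    exact (Nat.leRecOn_succ' (C := C.G) (next := fun {k} => f k) x).symm
  have surj : ∀ s, ∃ n x, o n x = s := fun s => Language.DirectLimit.exists_of s
  have step : ∀ {m n : ℕ}, m ≤ n → ∃ g : C.G m ↪ₑ[L] C.G n, ∀ x, o n (g x) = o m x := by
    intro m n h
    induction h with
    | refl => exact ⟨ElementaryEmbedding.refl L _, fun x => rfl⟩
    | step _ ih =>
      obtain ⟨g, hg⟩ := ih
      exact ⟨(C.e _).comp g, fun x => by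
        rw [ElementaryEmbedding.comp_apply, o_e, hg]⟩
  have elem : ∀ {α : Type} {k : ℕ} (φ : L.BoundedFormula α k) (n : ℕ) (v : α → C.G n)
      (xs : Fin k → C.G n), φ.Realize (o n ∘ v) (o n ∘ xs) ↔ φ.Realize v xs := by
    intro α k φ
    induction φ with
    | falsum => exact fun n v xs => Iff.rfl
    | equal t₁ t₂ =>
      exact fun n v xs => (BoundedFormula.IsAtomic.equal t₁ t₂).isQF.realize_embedding (o n)
    | rel r ts =>
      exact fun n v xs => (BoundedFormula.IsAtomic.rel r ts).isQF.realize_embedding (o n)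
    | imp φ ψ ih₁ ih₂ => exact fun n v xs => imp_congr (ih₁ n v xs) (ih₂ n v xs)
    | all φ ih =>
      intro n v xs
      constructor
      · intro h x
        have := h (o n x)
        rw [← Fin.comp_snoc] at this
        exact (ih n v _).1 this
      · intro h s
        obtain ⟨j, y, rfl⟩ := surj s
        obtain ⟨g, hg⟩ := step (le_max_left n j)
        obtain ⟨g', hg'⟩ := step (le_max_right n j)
        have h1 : (φ.all).Realize (g ∘ v) (g ∘ xs) := (g.map_boundedFormula φ.all v xs).2 h
        have h2 := (ih _ _ _).2 (h1 (g' y))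
        rw [Fin.comp_snoc, hg'] at h2
        have h3 : ∀ {β : Type} (w : β → C.G n), o (max n j) ∘ g ∘ w = o n ∘ w :=
          fun w => funext fun i => hg _
        rwa [h3, h3] at h2
  refine ⟨S, inferInstance, ⟨⟨fun n => ⟨o n, fun k φ x => ?_⟩, o_e, surj⟩⟩⟩
  rw [Formula.Realize, Formula.Realize, ← elem φ n x default]
  rw [iff_iff_eq]
  congr 1
  exact Subsingleton.elim _ _

variable {C : RichChain L} {S : Type} [L.Structure S]

theorem ElementaryEmbedding.realize_comp {M N α : Type} [L.Structure M] [L.Structure N]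
    (g : M ↪ₑ[L] N) (φ : L.Formula α) (v : α → M) : φ.Realize (fun i => g (v i)) ↔ φ.Realize v :=
  g.map_formula φ v

theorem ChainUnion.realizes (U : ChainUnion C S) (m : ℕ) (a : Fin m → S)
    (p : Set (L.Formula (Unit ⊕ Fin m)))
    (hp : ∀ q : Finset (L.Formula (Unit ⊕ Fin m)), ↑q ⊆ p →
      ∃ x : S, ∀ φ ∈ q, φ.Realize (Sum.elim (fun _ => x) a)) :
    ∃ x : S, ∀ φ ∈ p, φ.Realize (Sum.elim (fun _ => x) a) := by
  obtain ⟨n, b, hb⟩ := U.lift a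
  have ha : a = U.o n ∘ b := funext fun i => (hb i).symm
  obtain ⟨x, hx⟩ := C.realizes n m b p (by
    intro q hq
    let ψ : L.Formula (Fin m) :=
      (Formula.iInf fun φ : q => Formula.relabel Sum.swap φ.1).iExs Unit
    have hψ : ∀ (N : Type) [L.Structure N] (w : Fin m → N), ψ.Realize w ↔
        ∃ x : N, ∀ φ ∈ q, φ.Realize (Sum.elim (fun _ => x) w) := by
      intro N _ w
      have sw : ∀ h : Unit → N, Sum.elim w h ∘ Sum.swap = Sum.elim (fun _ => h ()) w := by
        intro h
        ext i
        rcases i with i | i <;> rfl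
      simp only [ψ, Formula.realize_iExs, Formula.realize_iInf, Formula.realize_relabel, sw,
        Subtype.forall]
      exact ⟨fun ⟨h, hh⟩ => ⟨h (), hh⟩, fun ⟨x, hh⟩ => ⟨fun _ => x, hh⟩⟩
    rw [← hψ, ← (U.o n).map_formula, ← ha, hψ]
    exact hp q hq)
  refine ⟨U.o (n + 1) x, fun φ hφ => ?_⟩
  have := ((U.o (n + 1)).map_formula φ _).2 (hx φ hφ)
  convert this using 1
  ext i
  rcases i with i | i
  · rfl
  · simp [ha, U.o_e]

/-- A tail of a rich chain. -/
def RichChain.shift (C : RichChain L) (i : ℕ) : RichChain L where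
  G n := C.G (i + n)
  str n := C.str (i + n)
  e n := C.e (i + n)
  realizes n := C.realizes (i + n)
  extends_map n := C.extends_map (i + n)

/-- A chain union is the union of each tail. -/
def ChainUnion.shift (U : ChainUnion C S) (i : ℕ) : ChainUnion (C.shift i) S where
  o n := U.o (i + n)
  o_e n := U.o_e (i + n)
  surj s := by
    obtain ⟨n, x, rfl⟩ := U.surj s
    exact ⟨n, U.lift_le (Nat.le_add_left n i) x⟩

theorem ChainUnion.exists_rel_of_lift (U : ChainUnion C S) {α : Type} (a b : α → C.G 0)
    (h : ∀ φ : L.Formula α, φ.Realize a → φ.Realize b) :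
    ∃ Z : Set (S × S), (∀ i, (U.o 0 (a i), U.o 0 (b i)) ∈ Z) ∧ (∀ x, ∃ y, (x, y) ∈ Z) ∧
      (∀ y, ∃ x, (x, y) ∈ Z) ∧ ∀ p ∈ Z, ∀ q ∈ Z, ∀ φ : L.Formula (Fin 2),
        (φ.Realize ![p.1, q.1] ↔ φ.Realize ![p.2, q.2]) := by
  obtain ⟨f₀, hf₀⟩ := C.extends_map 0 α a b h
  have next : ∀ n (g : C.G n ↪ₑ[L] C.G (n + 1)), ∃ g' : C.G (n + 1) ↪ₑ[L] C.G (n + 1 + 1),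
      ∀ x, g' (g x) = C.e (n + 1) (C.e n x) := fun n g =>
    C.extends_map (n + 1) (C.G n) g (C.e n) fun φ hφ =>
      (ElementaryEmbedding.realize_comp _ φ _).2
        ((ElementaryEmbedding.realize_comp g φ fun x => x).1 hφ)
  choose nx hnx using next
  let f : ∀ n, C.G n ↪ₑ[L] C.G (n + 1) := fun n => Nat.rec f₀ (fun n g => nx n g) n
  have hf : ∀ n x, f (n + 1) (f n x) = C.e (n + 1) (C.e n x) := fun n x => hnx n (f n) x
  have hf2 : ∀ n x, f (n + 2) (C.e (n + 1) (C.e n x)) = C.e (n + 2) (C.e (n + 1) (f n x)) := by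
    intro n x
    rw [← hf, hf]
  let Z (n : ℕ) : Set (S × S) := range fun x => (U.o (2 * n) x, U.o (2 * n + 1) (f (2 * n) x))
  have hZ : Monotone Z := by
    refine monotone_nat_of_le_succ fun n => ?_
    rintro _ ⟨x, rfl⟩
    refine ⟨C.e (2 * n + 1) (C.e (2 * n) x), ?_⟩
    have h1 := (U.o_e (2 * n + 2) (C.e (2 * n + 1) (f (2 * n) x))).trans (U.o_e (2 * n + 1) _)
    refine Prod.ext ?_ ?_
    · change U.o (2 * n + 1 + 1) _ = _
      simp only [U.o_e]
    · change U.o (2 * n + 1 + 1 + 1) (f (2 * n + 2) _) = _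
      rw [hf2]
      exact h1
  refine ⟨⋃ n, Z n, fun i => mem_iUnion.2 ⟨0, a i, ?_⟩, fun s => ?_, fun s => ?_, ?_⟩
  · refine Prod.ext rfl ?_
    change U.o 1 (f₀ (a i)) = _
    rw [hf₀, U.o_e]
  · obtain ⟨n, x, rfl⟩ := U.surj s
    obtain ⟨y, hy⟩ := U.lift_le (show n ≤ 2 * n by omega) x
    exact ⟨_, mem_iUnion.2 ⟨n, y, Prod.ext hy rfl⟩⟩
  · obtain ⟨n, x, rfl⟩ := U.surj s
    obtain ⟨y, hy⟩ := U.lift_le (show n ≤ 2 * n + 1 by omega) x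
    refine ⟨U.o (2 * n + 2) (f (2 * n + 1) y), mem_iUnion.2 ⟨n + 1, f (2 * n + 1) y, ?_⟩⟩
    refine Prod.ext rfl ?_
    change U.o (2 * n + 1 + 1 + 1) (f (2 * n + 1 + 1) (f (2 * n + 1) y)) = _
    rw [hf, U.o_e, U.o_e, hy]
  · intro p hp q hq φ
    obtain ⟨n, hn⟩ := mem_iUnion.1 hp
    obtain ⟨m, hm⟩ := mem_iUnion.1 hq
    obtain ⟨x, rfl⟩ := hZ (le_max_left n m) hn
    obtain ⟨y, rfl⟩ := hZ (le_max_right n m) hm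
    generalize max n m = k at *
    have h1 := ElementaryEmbedding.realize_comp (U.o (2 * k)) φ ![x, y]
    have h2 := ElementaryEmbedding.realize_comp ((U.o (2 * k + 1)).comp (f (2 * k))) φ ![x, y]
    have h3 : ∀ g : C.G (2 * k) ↪ₑ[L] S, (fun i => g (![x, y] i)) = ![g x, g y] := by
      intro g
      ext i
      fin_cases i <;> rfl
    rw [h3] at h1 h2
    exact h1.trans h2.symm

theorem ChainUnion.exists_rel (U : ChainUnion C S) {α : Type} [Finite α] (a b : α → S)
    (h : ∀ φ : L.Formula α, φ.Realize a → φ.Realize b) :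
    ∃ Z : Set (S × S), (∀ i, (a i, b i) ∈ Z) ∧ (∀ x, ∃ y, (x, y) ∈ Z) ∧
      (∀ y, ∃ x, (x, y) ∈ Z) ∧ ∀ p ∈ Z, ∀ q ∈ Z, ∀ φ : L.Formula (Fin 2),
        (φ.Realize ![p.1, q.1] ↔ φ.Realize ![p.2, q.2]) := by
  obtain ⟨n, x, hx⟩ := U.lift (Sum.elim a b)
  have ha : a = fun i => U.o n (x (Sum.inl i)) := funext fun i => (hx (Sum.inl i)).symm
  have hb : b = fun i => U.o n (x (Sum.inr i)) := funext fun i => (hx (Sum.inr i)).symm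
  obtain ⟨Z, h1, h2⟩ := (U.shift n).exists_rel_of_lift (fun i => x (Sum.inl i))
    (fun i => x (Sum.inr i)) (fun φ hφ => by
      have := h φ
      rw [ha, hb, ElementaryEmbedding.realize_comp, ElementaryEmbedding.realize_comp] at this
      exact this hφ)
  subst ha hb
  exact ⟨Z, h1, h2⟩

end Chain

section Existence

variable {ι : Type}

/-- Game-theoretic form of elementary maps. -/
def ElemEmb {M N : Type} [LinearOrder M] [LinearOrder N] (cM : ι → Set M) (cN : ι → Set N)
    (f : M → N) : Prop :=
  ∀ s : Set M, s.Finite → AEF cM cN univ univ ((fun x => (x, f x)) '' s)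

theorem ElemEmb.of_sat {M N : Type} [LinearOrder M] [LinearOrder N] {cM : ι → Set M}
    {cN : ι → Set N} {f : M → N}
    (h : ∀ n (φ : (CLOLang ι).Formula (Fin n)) (x : Fin n → M),
      Sat M cM φ x ↔ Sat N cN φ (f ∘ x)) : ElemEmb cM cN f := by
  intro s hs
  obtain ⟨m, a, rfl⟩ := exists_fin_range hs
  rw [← range_comp]
  exact AEF_of_sat_iff (h m · a)

theorem exists_linearOrder {S M : Type} [LinearOrder M] (c : ι → Set M)
    (str : (CLOLang ι).Structure S)
    (h : letI := CLOStr ι M c; M ≅[CLOLang ι] S) :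
    ∃ (_ : LinearOrder S) (cS : ι → Set S), CLOStr ι S cS = str := by
  let _ := CLOStr ι M c
  have transfer : ∀ θ : (CLOLang ι).Formula (Fin 3), (∀ v : Fin 3 → M, ¬ θ.Realize v) →
      ∀ v : Fin 3 → S, ¬ θ.Realize v := by
    intro θ h1 v hv
    let ψ : (CLOLang ι).Sentence := (Formula.relabel (α := Fin 3) (β := Empty ⊕ Fin 3) Sum.inr θ).iExs
      (Fin 3)
    have hψ : ∀ (N : Type) [(CLOLang ι).Structure N], N ⊨ ψ ↔ ∃ v : Fin 3 → N, θ.Realize v := by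
      intro N _
      unfold Sentence.Realize
      rw [Formula.realize_iExs]
      simp only [Formula.realize_relabel]
      rfl
    obtain ⟨w, hw⟩ := (hψ M).1 ((h.realize_sentence ψ).2 ((hψ S).2 ⟨v, hv⟩))
    exact h1 w hw
  let ℓ (i j : Fin 3) : (CLOLang ι).Formula (Fin 3) :=
    Relations.formula (CLORel.lt : (CLOLang ι).Relations 2) ![Term.var i, Term.var j]
  let r (x y : S) : Prop := Structure.RelMap (L := CLOLang ι) (CLORel.lt : CLORel ι 2) ![x, y]
  have hM : ∀ (v : Fin 3 → M) i j, (ℓ i j).Realize v ↔ v i < v j := by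
    intro v i j
    exact Formula.realize_rel
  have hS : ∀ (v : Fin 3 → S) i j, (ℓ i j).Realize v ↔ r (v i) (v j) := by
    intro v i j
    refine Formula.realize_rel.trans (iff_of_eq (congrArg _ ?_))
    ext k
    fin_cases k <;> rfl
  have sto : IsStrictTotalOrder S r :=
    { trichotomous := fun x y h1 h2 => by
        by_contra h3
        refine transfer (∼(ℓ 0 1) ⊓ ∼(ℓ 1 0) ⊓ ∼(Term.equal (Term.var 0) (Term.var 1)))
          (fun v => ?_) ![x, y, x] ?_
        · simp only [Formula.realize_inf, Formula.realize_not, hM, Formula.realize_equal,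
            Term.realize_var]
          rintro ⟨⟨h1, h2⟩, h3⟩
          exact h3 (le_antisymm (not_lt.1 h2) (not_lt.1 h1))
        · simp only [Formula.realize_inf, Formula.realize_not, hS, Formula.realize_equal,
            Term.realize_var]
          exact ⟨⟨h1, h2⟩, h3⟩
      irrefl := fun x => by
        have := transfer (ℓ 0 0) (fun v => by rw [hM]; exact lt_irrefl _) ![x, x, x]
        rwa [hS] at this
      trans := fun x y z h1 h2 => by
        by_contra h3
        refine transfer (ℓ 0 1 ⊓ ℓ 1 2 ⊓ ∼(ℓ 0 2)) (fun v => ?_) ![x, y, z] ?_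
        · simp only [Formula.realize_inf, Formula.realize_not, hM]
          rintro ⟨⟨h1, h2⟩, h3⟩
          exact h3 (h1.trans h2)
        · simp only [Formula.realize_inf, Formula.realize_not, hS]
          exact ⟨⟨h1, h2⟩, h3⟩ }
  classical
  let lo : LinearOrder S := linearOrderOfSTO r
  refine ⟨lo, fun i => {x | Structure.RelMap (L := CLOLang ι) (CLORel.color i : CLORel ι 1) ![x]},
    ?_⟩
  refine Structure.ext ?_ ?_
  · funext n f
    exact Empty.elim f
  · funext n R v
    cases R with
    | lt =>
      change @Structure.RelMap _ S str 2 CLORel.lt ![v 0, v 1] =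
        @Structure.RelMap _ S str 2 CLORel.lt v
      refine congrArg _ ?_
      ext k
      fin_cases k <;> rfl
    | color i =>
      change @Structure.RelMap _ S str 1 (CLORel.color i) ![v 0] =
        @Structure.RelMap _ S str 1 (CLORel.color i) v
      refine congrArg _ ?_
      ext k
      fin_cases k
      rfl

theorem exists_suffSaturated (M : Type) [LinearOrder M] (c : ι → Set M) :
    ∃ (S : Type) (_ : LinearOrder S) (cS : ι → Set S) (f : M → S),
      SuffSaturated ι S cS ∧ ElemEmb c cS f := by
  rcases isEmpty_or_nonempty M with hM | hM
  · refine ⟨M, inferInstance, c, id, ⟨fun m a p hp => ?_, fun m a b _ => ?_⟩, fun s hs => ?_⟩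
    · obtain ⟨x, -⟩ := hp ∅ (by simp)
      exact hM.elim x
    · exact ⟨Equiv.refl M, fun _ _ => Iff.rfl, fun _ _ => Iff.rfl, fun i => hM.elim (a i)⟩
    · refine AEF.refl ?_
      rintro _ ⟨x, -, rfl⟩
      rfl
  · let _ := CLOStr ι M c
    obtain ⟨C, ⟨f₀⟩⟩ := exists_richChain (L := CLOLang ι) M
    obtain ⟨S, str, ⟨U⟩⟩ := exists_chainUnion C
    let f₁ := U.o 0
    obtain ⟨_, cS, rfl⟩ := exists_linearOrder c str (f₁.comp f₀).elementarilyEquivalent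
    let _ := CLOStr ι S cS
    let f : M ↪ₑ[CLOLang ι] S := f₁.comp f₀
    refine ⟨S, inferInstance, cS, f, ⟨U.realizes, fun m a b hab => ?_⟩,
      ElemEmb.of_sat fun n φ x => (f.map_formula φ x).symm⟩
    obtain ⟨Z, hZ, h1, h2, h3⟩ := U.exists_rel a b fun φ => (hab φ).1
    have hlt : ∀ p ∈ Z, ∀ q ∈ Z, (p.1 < q.1 ↔ p.2 < q.2) := by
      intro p hp q hq
      have := h3 p hp q hq
        (Relations.formula (CLORel.lt : (CLOLang ι).Relations 2) ![Term.var 0, Term.var 1])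
      exact (Formula.realize_rel.symm.trans this).trans Formula.realize_rel
    have hcol : ∀ i, ∀ p ∈ Z, (p.1 ∈ cS i ↔ p.2 ∈ cS i) := by
      intro i p hp
      have := h3 p hp p hp
        (Relations.formula (CLORel.color i : (CLOLang ι).Relations 1) ![Term.var 0])
      exact (Formula.realize_rel.symm.trans this).trans Formula.realize_rel
    have hb : EFBase (fun _ _ => True) Z := fun p hp => ⟨trivial, hlt p hp⟩
    choose g hg using h1
    choose g' hg' using h2
    exact ⟨⟨g, g', fun x => (hb.eq_iff (hg' (g x)) (hg x)).2 rfl,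
      fun y => (hb.eq_iff (hg (g' y)) (hg' y)).1 rfl⟩, fun x y => hlt _ (hg x) _ (hg y),
      fun i x => hcol i _ (hg x), fun i => (hb.eq_iff (hg (a i)) (hZ i)).1 rfl⟩

end Existence

section Transfer

variable {ι : Type} {M N K : Type} [LinearOrder M] [LinearOrder N] [LinearOrder K]

theorem AEF.of_emb {cM : ι → Set M} {cN : ι → Set N} {f : M → N} (hf : StrictMono f)
    (hc : ∀ i x, x ∈ cM i ↔ f x ∈ cN i) (D : Set M) :
    AEF cM cN D (f '' D) {p | f p.1 = p.2} := by
  intro k F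
  refine EF.of_iso ?_ (fun x hx => ⟨f x, mem_image_of_mem f hx, rfl⟩) ?_
  · rintro ⟨x, y⟩ (rfl : f x = y)
    refine ⟨fun i _ => hc i x, ?_⟩
    rintro ⟨x', y'⟩ (rfl : f x' = y')
    exact hf.lt_iff_lt.symm
  · rintro _ ⟨x, hx, rfl⟩
    exact ⟨x, hx, rfl⟩

theorem AEF.subtype (c : ι → Set K) (D : Set K) :
    AEF (subColor c D) c univ D {p | (p.1 : K) = p.2} := by
  have := AEF.of_emb (cM := subColor c D) (cN := c) (f := Subtype.val) (fun _ _ h => h)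
    (fun _ _ => Iff.rfl) univ
  rwa [image_univ, Subtype.range_val] at this

theorem AEF.to_subtype {cM : ι → Set M} {cN : ι → Set N} {D : Set M} {D' : Set N}
    {R : Set (M × N)} (h : AEF cM cN D D' R) :
    AEF (subColor cM D) (subColor cN D') univ univ {p | ((p.1 : M), (p.2 : N)) ∈ R} := by
  refine ((AEF.subtype cM D).comp h (R₃ := {p : D × N | ((p.1 : M), p.2) ∈ R}) ?_).comp
    (AEF.subtype cN D').symm ?_
  · rintro ⟨p, q⟩ hp
    exact ⟨p, rfl, hp⟩
  · rintro ⟨p, q⟩ hp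
    exact ⟨q, hp, rfl⟩

theorem EF.exists_play {P : M → N → Prop} {D : Set M} {D' : Set N} {R : Set (M × N)}
    (h : ∀ k, EF P D D' k R) {t : Set N} (ht : t.Finite) (htD : t ⊆ D') (k : ℕ) :
    ∃ R' : Set (M × N), R'.Finite ∧ Prod.snd '' R' = t ∧ EF P D D' k (R' ∪ R) := by
  induction t, ht using Set.Finite.induction_on generalizing k with
  | empty => exact ⟨∅, finite_empty, image_empty _, by simpa using h k⟩
  | @insert a t _ _ ih =>
    obtain ⟨R', h1, h2, h3⟩ := ih ((subset_insert _ _).trans htD) (k + 1)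
    obtain ⟨x, -, hx⟩ := h3.2.2 a (htD (mem_insert _ _))
    exact ⟨insert (x, a) R', h1.insert _, by rw [image_insert_eq, h2], by rwa [insert_union]⟩

theorem exists_monotone_levels (l : ℕ → Finset ι → ℕ) (G : ℕ → Finset ι → Finset ι) :
    ∃ (l' : ℕ → Finset ι → ℕ) (G' : ℕ → Finset ι → Finset ι),
      (∀ k F, l k F ≤ l' k F ∧ G k F ⊆ G' k F) ∧
      ∀ k k' F F', k ≤ k' → F ⊆ F' → l' k F ≤ l' k' F' ∧ G' k F ⊆ G' k' F' := by
  classical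
  refine ⟨fun k F => (Finset.range (k + 1) ×ˢ F.powerset).sup fun p => l p.1 p.2,
    fun k F => (Finset.range (k + 1) ×ˢ F.powerset).sup fun p => G p.1 p.2, fun k F => ?_,
    fun k k' F F' hk hF => ?_⟩
  · have : (k, F) ∈ Finset.range (k + 1) ×ˢ F.powerset := by simp
    exact ⟨Finset.le_sup (f := fun p => l p.1 p.2) this,
      Finset.le_sup (f := fun p => G p.1 p.2) this⟩
  · have : Finset.range (k + 1) ×ˢ F.powerset ⊆ Finset.range (k' + 1) ×ˢ F'.powerset :=
      Finset.product_subset_product (Finset.range_subset_range.2 (by omega))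
        (Finset.powerset_mono.2 hF)
    exact ⟨Finset.sup_mono this, Finset.sup_mono this⟩

theorem SemDef.of_le {c : ι → Set K} {k l : ℕ} {F G : Finset ι} {s t W : Set K}
    (h : SemDef c k F s W) (hk : k ≤ l) (hF : F ⊆ G) (hs : s ⊆ t) : SemDef c l G t W :=
  fun x x' h' => h x x' ((h'.of_le hk hF).mono_right (insert_subset_insert (diag_mono hs)))

/-- `ℵ₀`-saturation passes to structures realizing the types of a saturated one. -/
theorem SemSat.transfer {c : ι → Set K} {cN : ι → Set N} (hc : SemSat c)
    (h : ∀ s : Set N, s.Finite → ∃ R : Set (K × N), R.Finite ∧ s ⊆ Prod.snd '' R ∧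
      AEF c cN univ univ R ∧ ∀ b, ∃ y, AEF c cN univ univ (insert (b, y) R)) : SemSat cN := by
  intro s hs W hW hW'
  obtain ⟨R, hR, hsR, hA, hext⟩ := h s hs
  choose hne l G hdef using hW'
  obtain ⟨l', G', hlG, hmono⟩ := exists_monotone_levels l G
  replace hdef : ∀ k F, SemDef cN (l' k F) (G' k F) s (W k F) :=
    fun k F => (hdef k F).of_le (hlG k F).1 (hlG k F).2 Subset.rfl
  obtain ⟨x, hx⟩ := hc (Prod.fst '' R) (hR.image _)
    (fun k F => {x | ∃ y ∈ W k F, CEF c cN univ univ (l' k F) (G' k F) (insert (x, y) R)})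
    (by
      rintro k k' F F' hk hF x ⟨y, hy, h1⟩
      exact ⟨y, hW _ _ _ _ hk hF hy, h1.of_le (hmono _ _ _ _ hk hF).1 (hmono _ _ _ _ hk hF).2⟩)
    (by
      intro k F
      refine ⟨?_, l' k F, G' k F, ?_⟩
      · obtain ⟨y, hy⟩ := hne k F
        obtain ⟨x, -, hx⟩ := (hA (l' k F + 1) (G' k F)).2.2 y (mem_univ y)
        exact ⟨x, y, hy, hx⟩
      · rintro x x' h1 ⟨y, hy, h2⟩
        refine ⟨y, hy, h1.symm.comp h2 ?_⟩
        rintro p (rfl | hp)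
        · exact ⟨x, Or.inl rfl, Or.inl rfl⟩
        · exact ⟨p.1, Or.inr (mem_diag (mem_image_of_mem _ hp)), Or.inr hp⟩)
  obtain ⟨y, hy⟩ := hext x
  refine ⟨y, fun k F => ?_⟩
  obtain ⟨y', hy', h1⟩ := hx k F
  refine hdef k F y' y (h1.symm.comp (hy (l' k F) (G' k F)) ?_) hy'
  rintro p (rfl | ⟨z, hz, rfl⟩)
  · exact ⟨x, Or.inl rfl, Or.inl rfl⟩
  · obtain ⟨q, hq, rfl⟩ := hsR hz
    exact ⟨q.1, Or.inr hq, Or.inr hq⟩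

/-- A definable set in a saturated order is saturated. -/
theorem SemSat.of_semDef {c : ι → Set K} {cN : ι → Set N} (hc : SemSat c) {f : N → K}
    (hf : StrictMono f) (hcf : ∀ i x, x ∈ cN i ↔ f x ∈ c i) {m : ℕ} {F₀ : Finset ι} {q : Set K}
    (hq : q.Finite) (hdef : SemDef c m F₀ q (range f)) : SemSat cN := by
  classical
  intro s hs W hW hW'
  obtain ⟨x, hx⟩ := hc (f '' s ∪ q) ((hs.image f).union hq) (fun k F => f '' W k F)
    (fun k l F F' hk hF => image_mono (hW k l F F' hk hF)) (by
      intro k F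
      obtain ⟨hne, l, G, hd⟩ := hW' k F
      refine ⟨hne.image f, m + l, F₀ ∪ G, ?_⟩
      rintro _ x' h1 ⟨a, ha, rfl⟩
      have h2 : EF (fun x y => ColorAgree (F₀ ∪ G) c c x y ∧ (x ∈ range f ↔ y ∈ range f))
          univ univ l (insert (f a, x') (diag (f '' s ∪ q))) := by
        have hiff : ∀ x y, CEF c c univ univ m (F₀ ∪ G) (insert (x, y) (diag q)) →
            (x ∈ range f ↔ y ∈ range f) := by
          intro x y hxy
          have hxy := hxy.of_le le_rfl Finset.subset_union_left
          refine ⟨hdef x y hxy, hdef y x (hxy.symm.mono_right ?_)⟩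
          rintro _ (rfl | ⟨z, hz, rfl⟩)
          exacts [Or.inl rfl, Or.inr (mem_diag hz)]
        refine EF.tag (fun x _ y _ h => hiff x y h) ?_ ?_ h1
        · exact (diag_mono subset_union_right).trans (subset_insert _ _)
        · rintro p (rfl | hp)
          · exact hiff _ _ ((EF.of_le (Nat.le_add_right _ _) h1).mono
              (insert_subset_insert (diag_mono subset_union_right)))
          · rw [diag_eq hp]
      have h3 := h2.relativize
      obtain ⟨a', rfl⟩ := (h2.base _ (mem_insert _ _)).1.2.1 ⟨a, rfl⟩
      have h4 := AEF.of_emb hf hcf univ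
      simp only [univ_inter] at h3
      rw [image_univ] at h4
      refine ⟨a', hd a a' ?_ ha, rfl⟩
      refine (((h4 l G).comp (CEF.of_le h3 le_rfl Finset.subset_union_right)
        (R₃ := insert (a, f a') ((fun z => (z, f z)) '' s)) ?_).comp (h4.symm l G) ?_)
      · rintro p (rfl | ⟨z, hz, rfl⟩)
        · exact ⟨f a, rfl, Or.inl rfl⟩
        · exact ⟨f z, rfl, Or.inr (mem_diag (Or.inl (mem_image_of_mem f hz)))⟩
      · rintro p (rfl | ⟨z, hz, rfl⟩)
        · exact ⟨f a', Or.inl rfl, rfl⟩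
        · exact ⟨f z, Or.inr ⟨z, hz, rfl⟩, rfl⟩)
  obtain ⟨a, -, rfl⟩ := hx 0 ∅
  refine ⟨a, fun k F => ?_⟩
  obtain ⟨a', h1, h2⟩ := hx k F
  rwa [← hf.injective h2]

/-- Tarski–Vaught test for games. -/
theorem tarski_vaught {c : ι → Set K} {X D : Set K} (hXD : X ⊆ D) {s₀ : Set K}
    (h : ∀ k F, ∀ s : Set K, s.Finite → s₀ ⊆ s → s ⊆ X → ∀ b ∈ D, ∃ b' ∈ X,
      CEF c c D D k F (insert (b, b') (diag s)))
    {s : Set K} (hs : s.Finite) (hs₀ : s₀ ⊆ s) (hsX : s ⊆ X) : AEF c c X D (diag s) := by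
  intro k F
  induction k generalizing s with
  | zero => exact CEF.refl (k := 0) (D := D) fun _ => diag_eq
  | succ k ih =>
    refine ⟨(CEF.refl (k := 0) (D := D) fun _ => diag_eq : CEF c c D D 0 F (diag s)),
      fun x hx => ⟨x, hXD hx, ?_⟩, fun y hy => ?_⟩
    · rw [← diag_insert]
      exact ih (hs.insert x) (hs₀.trans (subset_insert _ _)) (insert_subset hx hsX)
    · obtain ⟨x, hx, hyx⟩ := h k F s hs hs₀ hsX y hy
      refine ⟨x, hx, (ih (hs.insert x) (hs₀.trans (subset_insert _ _))
        (insert_subset hx hsX)).comp hyx.symm ?_⟩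
      rintro p (rfl | hp)
      · exact ⟨x, mem_diag (mem_insert _ _), Or.inl rfl⟩
      · obtain ⟨z, hz, rfl⟩ := hp
        exact ⟨z, mem_diag (Or.inr hz), Or.inr (mem_diag hz)⟩

end Transfer

section LowenheimSkolem

variable {ι : Type} {M N K : Type} [LinearOrder M] [LinearOrder N] [LinearOrder K]

theorem exists_countable_elementary [Countable ι] (c : ι → Set K) {t : Set K} (ht : t.Countable) :
    ∃ J : Set K, t ⊆ J ∧ J.Countable ∧ ∀ s : Set K, s.Finite → s ⊆ J → AEF c c J univ (diag s) := by
  by_cases hK : Countable K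
  · exact ⟨univ, subset_univ _, countable_univ, fun s _ _ => AEF.refl fun _ => diag_eq⟩
  let _ := CLOStr ι K c
  have hcard : (CLOLang ι).card ≤ Cardinal.aleph0 := by
    have h1 : Countable (Σ n, (CLOLang ι).Functions n) :=
      inferInstanceAs (Countable (Σ _ : ℕ, Empty))
    have h2 : Countable (Σ n, (CLOLang ι).Relations n) := by
      refine Function.Injective.countable (β := Option ι) (f := fun p => match p with
        | ⟨_, CLORel.lt⟩ => none
        | ⟨_, CLORel.color i⟩ => some i) ?_
      rintro ⟨_, _ | i⟩ ⟨_, _ | j⟩ h <;> simp_all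
    exact Cardinal.mk_le_aleph0_iff.2 (inferInstanceAs (Countable (_ ⊕ _)))
  obtain ⟨J, hJ, hJc⟩ := exists_elementarySubstructure_card_eq (CLOLang ι) t Cardinal.aleph0.{0} le_rfl
    (by simpa using ht) (by simpa using hcard)
    (by simpa using (not_le.1 (mt Cardinal.mk_le_aleph0_iff.1 hK)).le)
  refine ⟨J, hJ, countable_coe_iff.1 (Cardinal.mk_le_aleph0_iff.1 (by simpa using hJc.le)), ?_⟩
  intro s hs hsJ
  have hstr : CLOStr ι J (subColor c J) = J.inducedStructure := by
    refine Structure.ext ?_ ?_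
    · funext n f
      exact Empty.elim f
    · funext n R v
      cases R <;> rfl
  have hemb : ElemEmb (subColor c J) c (Subtype.val : J → K) := by
    refine ElemEmb.of_sat fun n φ x => ?_
    have key : ∀ str : (CLOLang ι).Structure J, str = J.inducedStructure →
        (@Formula.Realize (CLOLang ι) J str _ φ x ↔ φ.Realize (Subtype.val ∘ x)) := by
      rintro _ rfl
      exact (J.subtype.map_formula φ x).symm
    exact key _ hstr
  have := (AEF.subtype c (J : Set K)).symm.comp (hemb (Subtype.val ⁻¹' s)
    (hs.preimage Subtype.val_injective.injOn)) (R₃ := diag s) (by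
      rintro _ ⟨x, hx, rfl⟩
      exact ⟨⟨x, hsJ hx⟩, rfl, ⟨x, hsJ hx⟩, hx, rfl⟩)
  exact this

end LowenheimSkolem

section RyllNardzewski

variable {ι : Type} {M N K : Type} [LinearOrder M] [LinearOrder N] [LinearOrder K]

theorem exists_surjective_of_cat {Q I : Type} [LinearOrder Q] [LinearOrder I] {cI : ι → Set I}
    (hcat : Aleph0CatTheory ι (CLOTheory ι I cI)) [Countable K] {c : ι → Set K} {cQ : ι → Set Q}
    (h : AEF c cI univ univ ∅) (hQ : AEF c cQ univ univ ∅) {J : Set Q} (hJ : J.Countable)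
    (hJQ : ∀ s : Set Q, s.Finite → s ⊆ J → AEF cQ cQ J univ (diag s)) :
    ∃ e : J → K, e.Surjective ∧
      ∀ s : Set J, s.Finite → AEF cQ c univ univ ((fun x : J => ((x : Q), e x)) '' s) := by
  have hJK : AEF (subColor cQ J) c univ univ ∅ := by
    refine ((AEF.subtype cQ J).comp (R₃ := ∅) ((hJQ ∅ finite_empty (empty_subset _))) ?_).comp
      hQ.symm ?_ <;> simp
  have hJI : AEF (subColor cQ J) cI univ univ ∅ := hJK.comp h (by simp)
  have := hJ.to_subtype
  obtain ⟨e, h1, h2⟩ := cloIso_iff.1 (hcat J K _ _ (subColor cQ J) c inferInstance inferInstance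
    (cloTheory_eq_iff.2 (cloEquiv_iff.2 hJI)) (cloTheory_eq_iff.2 (cloEquiv_iff.2 h)))
  refine ⟨e, e.surjective, fun s hs => ?_⟩
  have h3 := AEF.of_emb (f := e) (fun x y => (h1 x y).1) h2 univ
  rw [image_univ, e.range_eq_univ] at h3
  have h4 := (hJQ (Subtype.val '' s) (hs.image _) (by rintro _ ⟨x, -, rfl⟩; exact x.2)).symm
  refine (h4.comp (AEF.subtype cQ J).symm (R₃ := (fun x : J => ((x : Q), x)) '' s) ?_).comp h3 ?_
  · rintro _ ⟨x, hx, rfl⟩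
    exact ⟨x, mem_diag (mem_image_of_mem _ hx), rfl⟩
  · rintro _ ⟨x, hx, rfl⟩
    exact ⟨x, ⟨x, hx, rfl⟩, rfl⟩

/-- A countable model of an `ℵ₀`-categorical theory is saturated. -/
theorem semSat_of_cat [Countable ι] {I : Type} [LinearOrder I] {cI : ι → Set I}
    (hcat : Aleph0CatTheory ι (CLOTheory ι I cI)) [Countable K] {c : ι → Set K}
    (h : AEF c cI univ univ ∅) : SemSat c := by
  rcases isEmpty_or_nonempty K with hK | hK
  · intro s _ W _ hW
    obtain ⟨x, -⟩ := (hW 0 ∅).1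
    exact hK.elim x
  obtain ⟨Q, _, cQ, f, hQs, hf⟩ := exists_suffSaturated K c
  have hQ : AEF c cQ univ univ ∅ := (hf ∅ finite_empty).mono_right (empty_subset _)
  have hQne : Nonempty Q := hK.map f
  have step1 : ∀ s : Set Q, s.Finite → ∃ g : Q → K, AEF cQ c univ univ ((fun x => (x, g x)) '' s) := by
    intro s hs
    obtain ⟨J, hsJ, hJ, hJQ⟩ := exists_countable_elementary cQ hs.countable
    obtain ⟨e, -, he⟩ := exists_surjective_of_cat hcat h hQ hJ hJQ
    classical
    refine ⟨fun x => if hx : x ∈ J then e ⟨x, hx⟩ else Classical.arbitrary K,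
      (he (Subtype.val ⁻¹' s) (hs.preimage Subtype.val_injective.injOn)).mono_right ?_⟩
    rintro _ ⟨x, hx, rfl⟩
    exact ⟨⟨x, hsJ hx⟩, hx, by simp [hsJ hx]⟩
  have step2 : ∀ (r : Set (Q × K)) (k : K), ∃ b, (∃ b', AEF cQ c univ univ (insert (b', k) r)) →
      AEF cQ c univ univ (insert (b, k) r) := by
    intro r k
    by_cases hb : ∃ b', AEF cQ c univ univ (insert (b', k) r)
    · exact ⟨hb.choose, fun _ => hb.choose_spec⟩
    · exact ⟨Classical.arbitrary Q, fun h => absurd h hb⟩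
  choose w hw using step2
  let next (J : Set Q) : Set Q :=
    J ∪ (fun p : Set (Q × K) × K => w p.1 p.2) '' ({r | r.Finite ∧ r ⊆ J ×ˢ univ} ×ˢ univ)
  let Jn (n : ℕ) : Set Q := next^[n] ∅
  have hsucc : ∀ n, Jn (n + 1) = next (Jn n) := fun n => Function.iterate_succ_apply' next n ∅
  have hmono : Monotone Jn := monotone_nat_of_le_succ fun n => by
    rw [hsucc]
    exact subset_union_left
  have hcount : ∀ n, (Jn n).Countable := by
    intro n
    induction n with
    | zero => exact countable_empty
    | succ n ih =>
      rw [hsucc]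
      exact ih.union (((countable_ofPred_finite_subset (ih.prod countable_univ)).prod
        countable_univ).image _)
  let J : Set Q := ⋃ n, Jn n
  have hJ : J.Countable := countable_iUnion hcount
  have hclosed : ∀ r : Set (Q × K), r.Finite → r ⊆ J ×ˢ univ → ∀ k, w r k ∈ J := by
    intro r hr hrJ k
    obtain ⟨n, hn⟩ : ∃ n, Prod.fst '' r ⊆ Jn n := by
      have hr' : ((hr.image Prod.fst).toFinset : Set Q) ⊆ ⋃ n, Jn n := by
        rintro x hx
        obtain ⟨p, hp, rfl⟩ := (hr.image Prod.fst).mem_toFinset.1 hx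
        exact (hrJ hp).1
      simpa using hmono.directed_le.exists_mem_subset_of_finset_subset_biUnion hr'
    refine mem_iUnion.2 ⟨n + 1, ?_⟩
    rw [hsucc]
    exact Or.inr ⟨(r, k), ⟨⟨hr, fun p hp => ⟨hn (mem_image_of_mem _ hp), trivial⟩⟩, trivial⟩, rfl⟩
  have hreal : ∀ s : Set Q, s.Finite → s ⊆ J → ∀ b, ∃ b' ∈ J,
      AEF cQ cQ univ univ (insert (b, b') (diag s)) := by
    intro s hs hsJ b
    obtain ⟨g, hg⟩ := step1 (insert b s) (hs.insert b)
    rw [image_insert_eq] at hg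
    refine ⟨w ((fun x => (x, g x)) '' s) (g b), hclosed _ (hs.image _) ?_ _,
      hg.comp (hw _ _ ⟨b, hg⟩).symm ?_⟩
    · rintro _ ⟨x, hx, rfl⟩
      exact ⟨hsJ hx, trivial⟩
    · rintro p (rfl | ⟨x, hx, rfl⟩)
      · exact ⟨g b, Or.inl rfl, Or.inl rfl⟩
      · exact ⟨g x, Or.inr ⟨x, hx, rfl⟩, Or.inr ⟨x, hx, rfl⟩⟩
  have hJQ : ∀ s : Set Q, s.Finite → s ⊆ J → AEF cQ cQ J univ (diag s) := by
    intro s hs hsJ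
    refine tarski_vaught (subset_univ J) (s₀ := ∅) ?_ hs (empty_subset _) hsJ
    intro k F s hs _ hsJ b _
    obtain ⟨b', hb', h1⟩ := hreal s hs hsJ b
    exact ⟨b', hb', h1 k F⟩
  obtain ⟨e, hsurj, he⟩ := exists_surjective_of_cat hcat h hQ hJ hJQ
  choose u hu using hsurj
  refine hQs.1.semSat.transfer fun s hs => ⟨(fun y => ((u y : Q), y)) '' s, hs.image _, ?_, ?_, ?_⟩
  · intro y hy
    exact ⟨_, mem_image_of_mem _ hy, rfl⟩
  · refine (he (u '' s) (hs.image u)).mono_right ?_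
    rintro _ ⟨y, hy, rfl⟩
    exact ⟨u y, mem_image_of_mem _ hy, by simp [hu]⟩
  · intro b
    obtain ⟨b', hb', h1⟩ := hreal ((fun y => (u y : Q)) '' s) (hs.image _)
      (by rintro _ ⟨y, -, rfl⟩; exact (u y).2) b
    refine ⟨e ⟨b', hb'⟩, h1.comp (he (insert ⟨b', hb'⟩ (u '' s)) ((hs.image u).insert _)) ?_⟩
    rintro p (rfl | ⟨y, hy, rfl⟩)
    · exact ⟨b', Or.inl rfl, ⟨b', hb'⟩, Or.inl rfl, rfl⟩
    · exact ⟨u y, Or.inr (mem_diag (mem_image_of_mem _ hy)), u y,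
        Or.inr (mem_image_of_mem _ hy), by simp [hu]⟩

end RyllNardzewski

section ConvexPieces

variable {ι : Type} {M N K : Type} [LinearOrder M] [LinearOrder N] [LinearOrder K]

theorem exists_countable_equiv [Countable ι] (c : ι → Set K) (D : Set K) :
    ∃ (L : Type) (_ : LinearOrder L) (_ : Countable L) (cL : ι → Set L), AEF cL c univ D ∅ := by
  obtain ⟨J, -, hJ, hJD⟩ := exists_countable_elementary (subColor c D) countable_empty
  refine ⟨J, inferInstance, hJ.to_subtype, subColor (subColor c D) J, ?_⟩
  refine ((AEF.subtype (subColor c D) J).comp (R₃ := ∅)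
    (hJD ∅ finite_empty (empty_subset _)) ?_).comp (AEF.subtype c D) ?_ <;> simp

theorem AEF.image_left {cM : ι → Set M} {cN : ι → Set N} {cK : ι → Set K} {f : M → N}
    (hf : StrictMono f) (hc : ∀ i x, x ∈ cM i ↔ f x ∈ cN i) {D : Set K}
    (h : AEF cM cK univ D ∅) : AEF cN cK (range f) D ∅ := by
  have := AEF.of_emb hf hc univ
  rw [image_univ] at this
  exact this.symm.comp h (by simp)

/-- A countable order elementarily equivalent to a definable convex part of an order with
`ℵ₀`-categorical theory is saturated. -/
theorem semSat_of_convex [Countable ι] {I : Type} [LinearOrder I] {cI : ι → Set I}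
    (hcat : Aleph0CatTheory ι (CLOTheory ι I cI)) {P : Set I} (hP : P.OrdConnected)
    (hne : P.Nonempty) {m : ℕ} {F₀ : Finset ι} {p : Set I} (hp : p.Finite)
    (hdef : SemDef cI m F₀ p P) [Countable N] {cN : ι → Set N} (h : AEF cN cI univ P ∅) :
    SemSat cN := by
  let L : Set I := {x | ∀ y ∈ P, x < y}
  let U : Set I := {x | ∀ y ∈ P, y < x}
  have hLPU : L ∪ (P ∪ U) = univ := by
    refine eq_univ_of_forall fun x => ?_
    by_contra hx
    simp only [mem_union, not_or] at hx
    obtain ⟨hL, hPx, hU⟩ := hx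
    simp only [L, U, mem_ofPred_eq, not_forall, not_lt] at hL hU
    obtain ⟨y, hy, hyx⟩ := hL
    obtain ⟨z, hz, hxz⟩ := hU
    exact hPx (hP.out hy hz ⟨hyx, hxz⟩)
  obtain ⟨p₀, hp₀⟩ := hne
  obtain ⟨L₀, _, _, cL, hL⟩ := exists_countable_equiv cI L
  obtain ⟨U₀, _, _, cU, hU⟩ := exists_countable_equiv cI U
  let S := L₀ ⊕ₗ (N ⊕ₗ U₀)
  let cS : ι → Set S := sumColor2 cL (sumColor2 cN cU)
  have : Countable S := inferInstanceAs (Countable (L₀ ⊕ (N ⊕ U₀)))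
  let f₁ : L₀ → S := fun x => Sum.inlₗ x
  let f : N → S := fun x => Sum.inrₗ (Sum.inlₗ x)
  let f₃ : U₀ → S := fun x => Sum.inrₗ (Sum.inrₗ x)
  have m₁ : StrictMono f₁ := fun x y h => Sum.Lex.inl_lt_inl_iff.2 h
  have m₂ : StrictMono f := fun x y h => Sum.Lex.inr_lt_inr_iff.2 (Sum.Lex.inl_lt_inl_iff.2 h)
  have m₃ : StrictMono f₃ := fun x y h => Sum.Lex.inr_lt_inr_iff.2 (Sum.Lex.inr_lt_inr_iff.2 h)
  have c₂ : ∀ i x, x ∈ cN i ↔ f x ∈ cS i := fun _ _ => Iff.rfl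
  have l₁₂ : ∀ x y, f₁ x < f y := fun _ _ => Sum.Lex.inl_lt_inr _ _
  have l₁₃ : ∀ x y, f₁ x < f₃ y := fun _ _ => Sum.Lex.inl_lt_inr _ _
  have l₂₃ : ∀ x y, f x < f₃ y := fun _ _ => Sum.Lex.inr_lt_inr_iff.2 (Sum.Lex.inl_lt_inr _ _)
  have hS : range f₁ ∪ (range f ∪ range f₃) = univ := by
    refine eq_univ_of_forall ?_
    rintro (x | x | x)
    exacts [Or.inl ⟨x, rfl⟩, Or.inr (Or.inl ⟨x, rfl⟩), Or.inr (Or.inr ⟨x, rfl⟩)]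
  have h₁ : AEF cS cI (range f₁) L ∅ := hL.image_left m₁ fun _ _ => Iff.rfl
  have h₂ : AEF cS cI (range f) P ∅ := h.image_left m₂ c₂
  have h₃ : AEF cS cI (range f₃) U ∅ := hU.image_left m₃ fun _ _ => Iff.rfl
  have tagged : ∀ F k, EF (fun x y => ColorAgree F cS cI x y ∧ (x ∈ range f ↔ y ∈ P))
      univ univ k ∅ := by
    intro F k
    have t₁ : EF (fun x y => ColorAgree F cS cI x y ∧ (x ∈ range f ↔ y ∈ P)) (range f₁) L k ∅ := by
      refine EF.imp (h₁ k F) ?_ (by simp)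
      rintro _ ⟨x, rfl⟩ y hy hxy
      refine ⟨hxy, iff_of_false ?_ fun hy' => (hy y hy').false⟩
      rintro ⟨z, hz⟩
      exact (l₁₂ x z).ne hz.symm
    have t₂ : EF (fun x y => ColorAgree F cS cI x y ∧ (x ∈ range f ↔ y ∈ P)) (range f) P k ∅ :=
      EF.imp (h₂ k F) (fun x hx y hy hxy => ⟨hxy, iff_of_true hx hy⟩) (by simp)
    have t₃ : EF (fun x y => ColorAgree F cS cI x y ∧ (x ∈ range f ↔ y ∈ P)) (range f₃) U k ∅ := by
      refine EF.imp (h₃ k F) ?_ (by simp)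
      rintro _ ⟨x, rfl⟩ y hy hxy
      refine ⟨hxy, iff_of_false ?_ fun hy' => (hy y hy').false⟩
      rintro ⟨z, hz⟩
      exact (l₂₃ z x).ne hz
    have t₂₃ := EF.sum (E₁ := range f) (E₂ := range f₃) (E₁' := P) (E₂' := U)
      (by rintro _ ⟨x, rfl⟩ _ ⟨y, rfl⟩; exact l₂₃ x y) (fun x hx y hy => hy x hx) t₂ t₃
      (empty_subset _) (empty_subset _) Subset.rfl Subset.rfl Subset.rfl Subset.rfl
    have := EF.sum (E₁ := range f₁) (E₂ := range f ∪ range f₃) (E₁' := L) (E₂' := P ∪ U)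
      (by rintro _ ⟨x, rfl⟩ _ (⟨y, rfl⟩ | ⟨y, rfl⟩); exacts [l₁₂ x y, l₁₃ x y])
      (by
        rintro x hx y (hy | hy)
        exacts [hx y hy, (hx p₀ hp₀).trans (hy p₀ hp₀)]) t₁ t₂₃
      (empty_subset _) (by simp) Subset.rfl Subset.rfl Subset.rfl Subset.rfl
    rw [hS, hLPU] at this
    exact this.mono (empty_subset _)
  have hSI : AEF cS cI univ univ ∅ := fun k F =>
    (tagged F k).imp (fun _ _ _ _ h => h.1) (by simp)
  obtain ⟨R, hR, rfl, hplay⟩ := EF.exists_play (tagged F₀) hp (subset_univ _) (m + 1)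
  rw [union_empty] at hplay
  refine (semSat_of_cat hcat hSI).of_semDef m₂ c₂ (m := m) (F₀ := F₀) (hR.image Prod.fst) ?_
  intro x x' hxx' hx
  obtain ⟨y, -, hy⟩ := hplay.2.1 x (mem_univ _)
  obtain ⟨y', -, hy'⟩ := hplay.2.1 x' (mem_univ _)
  have e₁ := (hy.base _ (mem_insert _ _)).1.2
  have e₂ := (hy'.base _ (mem_insert _ _)).1.2
  refine e₂.2 (hdef y y' ?_ (e₁.1 hx))
  have untag : ∀ {R}, EF (fun x y => ColorAgree F₀ cS cI x y ∧ (x ∈ range f ↔ y ∈ P)) univ univ m R →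
      CEF cS cI univ univ m F₀ R := fun h => h.imp (fun _ _ _ _ h => h.1) (fun _ _ h => h.1)
  refine ((untag hy).symm.comp hxx' (R₃ := insert (y, x') (Prod.swap ⁻¹' R)) ?_).comp (untag hy') ?_
  · rintro q (rfl | hq)
    · exact ⟨x, Or.inl rfl, Or.inl rfl⟩
    · exact ⟨q.2, Or.inr hq, Or.inr (mem_diag ⟨q.swap, hq, rfl⟩)⟩
  · rintro q (rfl | ⟨_, ⟨r, hr, rfl⟩, rfl⟩)
    · exact ⟨x', Or.inl rfl, Or.inl rfl⟩
    · exact ⟨r.1, Or.inr hr, Or.inr hr⟩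

theorem aleph0CatTheory_of_convex [Countable ι] {I : Type} [LinearOrder I] {cI : ι → Set I}
    (hcat : Aleph0CatTheory ι (CLOTheory ι I cI)) {P : Set I} (hP : P.OrdConnected)
    (hne : P.Nonempty) {m : ℕ} {F₀ : Finset ι} {p : Set I} (hp : p.Finite)
    (hdef : SemDef cI m F₀ p P) {cN : ι → Set N} (h : AEF cN cI univ P ∅) :
    Aleph0CatTheory ι (CLOTheory ι N cN) := by
  intro N₁ N₂ _ _ c₁ c₂ _ _ h₁ h₂
  have e₁ := cloEquiv_iff.1 (cloTheory_eq_iff.1 h₁)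
  have e₂ := cloEquiv_iff.1 (cloTheory_eq_iff.1 h₂)
  exact (semSat_of_convex hcat hP hne hp hdef (e₁.comp h (by simp))).cloIso
    (semSat_of_convex hcat hP hne hp hdef (e₂.comp h (by simp))) (e₁.comp e₂.symm (by simp))

end ConvexPieces

section Pieces

variable {ι : Type} {K : Type} [LinearOrder K] {c : ι → Set K} {A I : Set K}

/-- A saturated homogeneous order, an elementary substructure `A` and an invariant convex
set `I`. -/
structure LocalSetting (c : ι → Set K) (A I : Set K) : Prop where
  sat : SemSat c
  hom : SemHom c
  elem : ∀ s : Set K, s.Finite → s ⊆ A → AEF c c A univ (diag s)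
  conv : I.OrdConnected
  inv : ∀ g : K ≃ K, (∀ x y, x < y ↔ g x < g y) → (∀ i x, x ∈ c i ↔ g x ∈ c i) → ∀ x ∈ I, g x ∈ I

/-- A set definable over finitely many parameters which is invariant over `t` is definable
over `t`. -/
theorem semDef_of_invariant (hsat : SemSat c) (hhom : SemHom c) {m : ℕ} {F₀ : Finset ι}
    {s t E : Set K} (hs : s.Finite) (hts : t ⊆ s) (hdef : SemDef c m F₀ s E)
    (hinv : ∀ g : K ≃ K, (∀ x y, x < y ↔ g x < g y) → (∀ i x, x ∈ c i ↔ g x ∈ c i) →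
      (∀ x ∈ t, g x = x) → ∀ x ∈ E, g x ∈ E) : ∃ l G, SemDef c l G t E := by
  classical
  by_contra hno
  have hno' : ∀ k F, ∃ x ∈ E, ∃ x' ∉ E, CEF c c univ univ k F (insert (x, x') (diag t)) := by
    intro k F
    by_contra hkF
    push Not at hkF
    exact hno ⟨k, F, fun x x' h hx => by_contra fun hx' => hkF x hx x' hx' h⟩
  have symm_def : ∀ {k F u x x'}, CEF c c univ univ k F (insert (x, x') (diag u)) →
      CEF c c univ univ k F (insert (x', x) (diag u)) := by
    intro k F u x x' h
    refine h.symm.mono_right ?_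
    rintro _ (rfl | ⟨z, hz, rfl⟩)
    exacts [Or.inl rfl, Or.inr (mem_diag hz)]
  have trans_def : ∀ {k F u x x' x''}, CEF c c univ univ k F (insert (x, x') (diag u)) →
      CEF c c univ univ k F (insert (x', x'') (diag u)) →
      CEF c c univ univ k F (insert (x, x'') (diag u)) := by
    intro k F u x x' x'' h h'
    refine h.comp h' ?_
    rintro _ (rfl | ⟨z, hz, rfl⟩)
    exacts [⟨x', Or.inl rfl, Or.inl rfl⟩, ⟨z, Or.inr (mem_diag hz), Or.inr (mem_diag hz)⟩]
  obtain ⟨x, hx⟩ := hsat s hs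
    (fun k F => {x ∈ E | ∃ x' ∉ E, CEF c c univ univ k F (insert (x, x') (diag t))})
    (fun k l F F' hk hF x ⟨hx, x', hx', h⟩ => ⟨hx, x', hx', h.of_le hk hF⟩) (by
      intro k F
      refine ⟨?_, max k m, F ∪ F₀, ?_⟩
      · obtain ⟨x, hx, h⟩ := hno' k F
        exact ⟨x, hx, h⟩
      · rintro x y hxy ⟨hx, x', hx', h⟩
        refine ⟨hdef x y (hxy.of_le (le_max_right _ _) Finset.subset_union_right) hx, x', hx',
          trans_def (symm_def ?_) h⟩
        exact (hxy.of_le (le_max_left _ _) Finset.subset_union_left).mono_right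
          (insert_subset_insert (diag_mono hts)))
  obtain ⟨x', hx'⟩ := hsat (insert x s) (hs.insert x)
    (fun k F => {x' | x' ∉ E ∧ CEF c c univ univ k F (insert (x, x') (diag t))})
    (fun k l F F' hk hF x' ⟨h1, h2⟩ => ⟨h1, h2.of_le hk hF⟩) (by
      intro k F
      refine ⟨(hx k F).2, max k m, F ∪ F₀, ?_⟩
      rintro y y' hyy' ⟨hy, h⟩
      refine ⟨fun hy' => hy (hdef y' y (symm_def ?_) hy'), trans_def h ?_⟩
      · exact (hyy'.of_le (le_max_right _ _) Finset.subset_union_right).mono_right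
          (insert_subset_insert (diag_mono (subset_insert _ _)))
      · exact (hyy'.of_le (le_max_left _ _) Finset.subset_union_left).mono_right
          (insert_subset_insert (diag_mono (hts.trans (subset_insert _ _)))))
  obtain ⟨g, h1, h2, h3⟩ := hhom (insert (x, x') (diag t)) (((hs.subset hts).image _).insert _)
    fun k F => (hx' k F).2
  refine (hx' 0 ∅).1 ?_
  have e : g x = x' := h3 (x, x') (mem_insert _ _)
  rw [← e]
  exact hinv g h1 h2 (fun z hz => h3 _ (Or.inr (mem_diag hz))) x (hx 0 ∅).1

/-- Games on the whole order between points of a closed interval restrict to any convex set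
containing the interval. -/
theorem CEF.restrict_Icc {k : ℕ} {F : Finset ι} {R : Set (K × K)} {a b : K}
    (h : CEF c c univ univ k F R) (ha : (a, a) ∈ R) (hb : (b, b) ∈ R)
    (hR : R ⊆ Icc a b ×ˢ Icc a b) (hI : Icc a b ⊆ I) : CEF c c I I k F R := by
  have hab : a ≤ b := (hR ha).1.2
  have h1 : CEF c c (Icc a b) (Icc a b) k F R := by
    have h2 : EF (fun x y => ColorAgree F c c x y ∧ (x ∈ Icc a b ↔ y ∈ Icc a b)) univ univ k R := by
      refine EF.tag (m := 0) (R₀ := {(a, a), (b, b)}) (fun x _ y _ hxy => ?_)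
        (by rintro _ (rfl | rfl); exacts [ha, hb])
        (fun p hp => iff_of_true (hR hp).1 (hR hp).2) (by rwa [zero_add])
      have e1 := (hxy _ (Or.inl rfl)).2 (a, a) (by simp)
      have e2 := (hxy (b, b) (by simp)).2 _ (Or.inl rfl)
      simp only at e1 e2
      rw [mem_Icc, mem_Icc, ← not_lt, ← not_lt, ← not_lt (a := y), ← not_lt (a := b), e1, e2]
    have := h2.relativize
    rwa [univ_inter] at this
  have h3 := EF.sum (E₁ := Iio a) (E₂ := Icc a b) (E₁' := Iio a) (E₂' := Icc a b) (R₁ := ∅)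
    (fun x hx y hy => lt_of_lt_of_le hx hy.1) (fun x hx y hy => lt_of_lt_of_le hx hy.1)
    (CEF.refl (by simp) : CEF c c (I ∩ Iio a) (I ∩ Iio a) k F ∅) h1
    (empty_subset _) hR inter_subset_right Subset.rfl inter_subset_right Subset.rfl
  have h4 := EF.sum (E₁ := Iic b) (E₂ := Ioi b) (E₁' := Iic b) (E₂' := Ioi b) (R₂ := ∅)
    (fun x hx y hy => lt_of_le_of_lt hx hy) (fun x hx y hy => lt_of_le_of_lt hx hy) h3
    (CEF.refl (by simp) : CEF c c (I ∩ Ioi b) (I ∩ Ioi b) k F ∅)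
    (by
      rw [empty_union]
      exact hR.trans (prod_mono (fun x hx => hx.2) (fun x hx => hx.2))) (empty_subset _)
    (by
      rintro x (hx | hx)
      exacts [hx.2.le.trans hab, hx.2]) inter_subset_right
    (by
      rintro x (hx | hx)
      exacts [hx.2.le.trans hab, hx.2]) inter_subset_right
  have hI' : I ∩ Iio a ∪ Icc a b ∪ I ∩ Ioi b = I := by
    ext x
    constructor
    · rintro ((hx | hx) | hx)
      exacts [hx.1, hI hx, hx.1]
    · intro hx
      rcases lt_or_ge x a with h | h
      · exact Or.inl (Or.inl ⟨hx, h⟩)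
      · rcases le_or_gt x b with h' | h'
        · exact Or.inl (Or.inr ⟨h, h'⟩)
        · exact Or.inr ⟨hx, h'⟩
  rwa [hI', empty_union, union_empty] at h4

namespace LocalSetting

theorem exists_approx (H : LocalSetting c A I) {s : Set K} (hs : s.Finite) (hsA : s ⊆ A) (y : K)
    (k : ℕ) (F : Finset ι) : ∃ y' ∈ A, CEF c c univ univ k F (insert (y, y') (diag s)) := by
  obtain ⟨y', hy', h⟩ := (H.elem s hs hsA (k + 1) F).2.2 y (mem_univ y)
  refine ⟨y', hy', CEF.comp (CEF.symm h)
    (H.elem (insert y' s) (hs.insert _) (insert_subset hy' hsA) k F) ?_⟩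
  rintro _ (rfl | ⟨z, hz, rfl⟩)
  · exact ⟨y', Or.inl rfl, mem_diag (mem_insert _ _)⟩
  · exact ⟨z, Or.inr (mem_diag hz), mem_diag (Or.inr hz)⟩

/-- The trace of `A` on a definable set is elementarily equivalent to it. -/
theorem aef_inter (H : LocalSetting c A I) {s E : Set K} (hs : s.Finite) (hsA : s ⊆ A)
    {m : ℕ} {F₀ : Finset ι} (hdef : SemDef c m F₀ s E) :
    AEF c c (A ∩ E) E (diag s) := by
  classical
  intro k F
  have h := H.elem s hs hsA (m + k) (F₀ ∪ F)
  have h2 : EF (fun x y => ColorAgree (F₀ ∪ F) c c x y ∧ (x ∈ E ↔ y ∈ E)) A univ k (diag s) := by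
    refine EF.tag (R₀ := diag s) (fun x hx y _ hxy => ?_) Subset.rfl
      (fun p hp => by rw [diag_eq hp]) h
    have h3 : CEF c c univ univ m F₀ (insert (x, y) (diag s)) := by
      refine ((H.elem (insert x s) (hs.insert x) (insert_subset hx hsA)).symm m F₀).comp
        (CEF.of_le hxy le_rfl Finset.subset_union_left) ?_
      rintro _ (rfl | ⟨z, hz, rfl⟩)
      · exact ⟨x, mem_diag (mem_insert _ _), Or.inl rfl⟩
      · exact ⟨z, mem_diag (Or.inr hz), Or.inr (mem_diag hz)⟩
    refine ⟨hdef x y h3, hdef y x (h3.symm.mono_right ?_)⟩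
    rintro _ (rfl | ⟨z, hz, rfl⟩)
    exacts [Or.inl rfl, Or.inr (mem_diag hz)]
  have h3 := h2.relativize
  rw [univ_inter] at h3
  exact CEF.of_le h3 le_rfl Finset.subset_union_right

theorem aef_automorphism (H : LocalSetting c A I) {g : K ≃ K} (h1 : ∀ x y, x < y ↔ g x < g y)
    (h2 : ∀ i x, x ∈ c i ↔ g x ∈ c i) : AEF c c I I {p | g p.1 = p.2} := by
  have := AEF.of_emb (cM := c) (cN := c) (f := g) (fun x y => (h1 x y).1) h2 I
  have hI : g '' I = I := by
    refine Subset.antisymm (image_subset_iff.2 (H.inv g h1 h2)) fun x hx =>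
      ⟨g.symm x, H.inv g.symm (fun x y => ?_) (fun i x => ?_) x hx, g.apply_symm_apply x⟩
    · rw [h1 (g.symm x), g.apply_symm_apply, g.apply_symm_apply]
    · rw [h2 i (g.symm x), g.apply_symm_apply]
  rwa [hI] at this

end LocalSetting

end Pieces

section Pieces

variable {ι : Type} {K : Type} [LinearOrder K] {c : ι → Set K} {A I : Set K}

/-- `E` is an initial segment of the part of `I` above `b`, definable in `I` over `b` and
elementarily equivalent to the part of `A ∩ I` above `b`. -/
structure UpperPiece (c : ι → Set K) (A I : Set K) (b : K) (E : Set K) : Prop where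
  sub : E ⊆ I
  mem : b ∈ E
  ge : ∀ x ∈ E, b ≤ x
  conv : ∀ x ∈ E, ∀ y, b ≤ y → y ≤ x → y ∈ E
  aef : AEF c c (A ∩ {x ∈ I | b ≤ x}) E (diag {b})
  definable : ∃ m F, ∀ x ∈ I, ∀ x' ∈ I, CEF c c I I m F (insert (x, x') (diag {b})) →
    x ∈ E → x' ∈ E

namespace LocalSetting

theorem upperPiece_of_not_approx (H : LocalSetting c A I) {b u : K} (hb : b ∈ A ∩ I) (hu : u ∈ I)
    (hbu : b ≤ u) {k : ℕ} {F : Finset ι}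
    (hno : ∀ y ∈ A ∩ I, ¬ CEF c c I I k F (insert (u, y) (diag {b}))) :
    ∃ E, UpperPiece c A I b E := by
  have hIcc : Icc b u ⊆ I := H.conv.out hb.2 hu
  have base_le : ∀ {D D' : Set K} {m R x x'}, CEF c c D D' m F R → (x, x') ∈ R → (b, b) ∈ R →
      b ≤ x → b ≤ x' := fun {D D' m R x x'} h h1 h2 hx =>
    not_lt.1 fun h' => hx.not_gt (((h.base (x, x') h1).2 (b, b) h2).2 h')
  set T := {t ∈ I | CEF c c I I k F (insert (u, t) (diag {b}))} with hT
  have huT : u ∈ T := ⟨hu, CEF.refl (by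
    rintro _ (rfl | hp)
    exacts [rfl, diag_eq hp])⟩
  set E := {x ∈ I | b ≤ x ∧ ∀ t ∈ T, x < t} with hE
  have hdef : ∀ x ∈ I, ∀ x' ∈ I, CEF c c I I (k + 1) F (insert (x, x') (diag {b})) →
      x ∈ E → x' ∈ E := by
    intro x hx x' hx' h hxE
    refine ⟨hx', base_le h (mem_insert _ _) (Or.inr (mem_diag rfl)) hxE.2.1, fun t' ht' => ?_⟩
    obtain ⟨t, ht, h'⟩ := h.2.2 t' ht'.1
    have htT : t ∈ T := by
      refine ⟨ht, ht'.2.comp (CEF.symm h') ?_⟩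
      rintro _ (rfl | hp)
      · exact ⟨t', Or.inl rfl, Or.inl rfl⟩
      · obtain ⟨z, hz, rfl⟩ := hp
        exact ⟨z, Or.inr (mem_diag hz), Or.inr (Or.inr (mem_diag hz))⟩
    exact ((h'.base (x, x') (Or.inr (mem_insert _ _))).2 (t, t') (mem_insert _ _)).1 (hxE.2.2 t htT)
  have hXE : A ∩ E = A ∩ {x ∈ I | b ≤ x} := by
    refine Subset.antisymm (fun x hx => ⟨hx.1, hx.2.1, hx.2.2.1⟩) ?_
    rintro x ⟨hxA, hxI, hbx⟩
    refine ⟨hxA, hxI, hbx, fun t ht => not_le.1 fun htx => ?_⟩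
    have hbt : b ≤ t := base_le ht.2 (mem_insert _ _) (Or.inr (mem_diag rfl)) hbu
    obtain ⟨y, hyA, hy⟩ := H.exists_approx (s := {b, x}) (by simp)
      (by rintro _ (rfl | rfl); exacts [hb.1, hxA]) t k F
    have mb : (b, b) ∈ insert (t, y) (diag {b, x}) := Or.inr (mem_diag (mem_insert _ _))
    have mx : (x, x) ∈ insert (t, y) (diag {b, x}) := Or.inr (mem_diag (Or.inr rfl))
    have hby : b ≤ y := base_le hy (mem_insert _ _) mb hbt
    have hyx : y ≤ x := not_lt.1 fun h' => htx.not_gt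
      (((hy.base (x, x) mx).2 (t, y) (mem_insert _ _)).2 h')
    have hIx : Icc b x ⊆ I := H.conv.out hb.2 hxI
    refine hno y ⟨hyA, hIx ⟨hby, hyx⟩⟩ (ht.2.comp (hy.restrict_Icc mb mx ?_ hIx) ?_)
    · rintro _ (rfl | ⟨z, rfl | rfl, rfl⟩)
      exacts [⟨⟨hbt, htx⟩, ⟨hby, hyx⟩⟩, ⟨⟨le_rfl, hbx⟩, ⟨le_rfl, hbx⟩⟩,
        ⟨⟨hbx, le_rfl⟩, ⟨hbx, le_rfl⟩⟩]
    · rintro _ (rfl | ⟨z, rfl, rfl⟩)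
      exacts [⟨t, mem_insert _ _, mem_insert _ _⟩, ⟨z, Or.inr (mem_diag rfl), mb⟩]
  have hbE : b ∈ E := (hXE.symm.subset ⟨hb.1, hb.2, le_rfl⟩).2
  have hsem : SemDef c (k + 1) F {b, u} E := by
    intro x x' h hx
    have mb : (b, b) ∈ insert (x, x') (diag {b, u}) := Or.inr (mem_diag (mem_insert _ _))
    have mu : (u, u) ∈ insert (x, x') (diag {b, u}) := Or.inr (mem_diag (Or.inr rfl))
    have hbx' : b ≤ x' := base_le h (mem_insert _ _) mb hx.2.1
    have hxu : x < u := hx.2.2 u huT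
    have hxu' : x' < u := ((h.base (x, x') (mem_insert _ _)).2 (u, u) mu).1 hxu
    refine hdef x hx.1 x' (hIcc ⟨hbx', hxu'.le⟩)
      ((h.restrict_Icc mb mu ?_ hIcc).mono_right ?_) hx
    · rintro _ (rfl | ⟨z, rfl | rfl, rfl⟩)
      exacts [⟨⟨hx.2.1, hxu.le⟩, ⟨hbx', hxu'.le⟩⟩, ⟨⟨le_rfl, hbu⟩, ⟨le_rfl, hbu⟩⟩,
        ⟨⟨hbu, le_rfl⟩, ⟨hbu, le_rfl⟩⟩]
    · exact insert_subset_insert (diag_mono (by simp))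
  obtain ⟨l, G, hl⟩ := semDef_of_invariant H.sat H.hom (t := {b}) (by simp) (by simp) hsem
    (fun g h1 h2 h3 x hx => hdef x hx.1 (g x) (H.inv g h1 h2 x hx.1)
      ((H.aef_automorphism h1 h2 (k + 1) F).mono_right (by
        rintro _ (rfl | ⟨z, hz, rfl⟩)
        exacts [rfl, h3 z hz])) hx)
  refine ⟨E, fun x hx => hx.1, hbE, fun x hx => hx.2.1, ?_, ?_, k + 1, F, hdef⟩
  · intro x hx y hby hyx
    exact ⟨H.conv.out hb.2 hx.1 ⟨hby, hyx⟩, hby, fun t ht => hyx.trans_lt (hx.2.2 t ht)⟩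
  · rw [← hXE]
    exact H.aef_inter (by simp) (by simpa using hb.1) hl

theorem upperPiece_of_approx (H : LocalSetting c A I) {b₀ : K} (hb₀ : b₀ ∈ A ∩ I)
    (happ : ∀ b ∈ A ∩ I, b₀ ≤ b → ∀ u ∈ I, b ≤ u → ∀ k F,
      ∃ y ∈ A ∩ I, CEF c c I I k F (insert (u, y) (diag {b}))) :
    UpperPiece c A I b₀ {x ∈ I | b₀ ≤ x} := by
  set D := {x ∈ I | b₀ ≤ x} with hD
  have hb₀D : b₀ ∈ D := ⟨hb₀.2, le_rfl⟩
  refine ⟨fun x hx => hx.1, hb₀D, fun x hx => hx.2,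
    fun x hx y h1 h2 => ⟨H.conv.out hb₀.2 hx.1 ⟨h1, h2⟩, h1⟩, ?_, 0, ∅, ?_⟩
  · refine tarski_vaught inter_subset_right (s₀ := {b₀}) ?_ (by simp) Subset.rfl
      (singleton_subset_iff.2 ⟨hb₀.1, hb₀D⟩)
    intro k F s hs hs₀ hsX y hy
    have hb₀s : b₀ ∈ s := hs₀ rfl
    obtain ⟨a, has, hmax⟩ := hs.exists_maximalFor id s ⟨b₀, hb₀s⟩
    replace hmax : ∀ z ∈ s, z ≤ a := fun z hz => (le_total z a).elim id fun h => hmax hz h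
    have haX := hsX has
    rcases le_total y a with hya | hay
    · obtain ⟨y', hy', h⟩ := H.exists_approx hs (fun z hz => (hsX hz).1) y k F
      have mb : (b₀, b₀) ∈ insert (y, y') (diag s) := Or.inr (mem_diag hb₀s)
      have ma : (a, a) ∈ insert (y, y') (diag s) := Or.inr (mem_diag has)
      have h1 : b₀ ≤ y' := not_lt.1 fun h' => hy.2.not_gt
        (((h.base (y, y') (mem_insert _ _)).2 (b₀, b₀) mb).2 h')
      have h2 : y' ≤ a := not_lt.1 fun h' => hya.not_gt
        (((h.base (a, a) ma).2 (y, y') (mem_insert _ _)).2 h')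
      have hID : Icc b₀ a ⊆ D := fun z hz => ⟨H.conv.out hb₀.2 haX.2.1 hz, hz.1⟩
      refine ⟨y', ⟨hy', hID ⟨h1, h2⟩⟩, h.restrict_Icc mb ma ?_ hID⟩
      rintro _ (rfl | ⟨z, hz, rfl⟩)
      · exact ⟨⟨hy.2, hya⟩, ⟨h1, h2⟩⟩
      · exact ⟨⟨(hsX hz).2.2, hmax z hz⟩, ⟨(hsX hz).2.2, hmax z hz⟩⟩
    · obtain ⟨y', hy', h⟩ := happ a ⟨haX.1, haX.2.1⟩ haX.2.2 y hy.1 hay k F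
      have hay' : a ≤ y' := not_lt.1 fun h' => hay.not_gt
        (((h.base (y, y') (mem_insert _ _)).2 (a, a) (Or.inr (mem_diag rfl))).2 h')
      refine ⟨y', ⟨hy'.1, hy'.2, haX.2.2.trans hay'⟩, ?_⟩
      have h1 : EF (fun x y => ColorAgree F c c x y ∧ (x ∈ Ici a ↔ y ∈ Ici a)) I I k
          (insert (y, y') (diag {a})) := by
        refine EF.tag (m := 0) (R₀ := diag {a}) (fun x _ x' _ hx => ?_) (subset_insert _ _) ?_
          (by rwa [zero_add])
        · have e := (hx _ (Or.inl rfl)).2 (a, a) (Or.inr (mem_diag rfl))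
          simp only at e
          rw [mem_Ici, mem_Ici, ← not_lt, ← not_lt, e]
        · rintro _ (rfl | ⟨z, rfl, rfl⟩)
          exacts [iff_of_true hay hay', Iff.rfl]
      have h2 := EF.sum (E₁ := Iio a) (E₂ := Ici a) (E₁' := Iio a) (E₂' := Ici a)
        (R₁ := diag (s \ {a})) (fun x hx y hy => lt_of_lt_of_le hx hy)
        (fun x hx y hy => lt_of_lt_of_le hx hy)
        (CEF.refl (fun p hp => diag_eq hp) : CEF c c (D ∩ Iio a) (D ∩ Iio a) k F _) h1.relativize
        (by
          rintro _ ⟨z, hz, rfl⟩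
          have : z < a := lt_of_le_of_ne (hmax z hz.1) hz.2
          exact ⟨this, this⟩)
        (by
          rintro _ (rfl | ⟨z, rfl, rfl⟩)
          exacts [⟨hay, hay'⟩, ⟨self_mem_Ici, self_mem_Ici⟩])
        inter_subset_right inter_subset_right inter_subset_right inter_subset_right
      have hDe : D ∩ Iio a ∪ I ∩ Ici a = D := by
        ext x
        constructor
        · rintro (hx | hx)
          exacts [hx.1, ⟨hx.1, haX.2.2.trans hx.2⟩]
        · intro hx
          rcases lt_or_ge x a with h | h
          exacts [Or.inl ⟨hx, h⟩, Or.inr ⟨hx.1, h⟩]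
      rw [hDe] at h2
      refine EF.mono ?_ h2
      rintro _ (rfl | ⟨z, hz, rfl⟩)
      · exact Or.inr (mem_insert _ _)
      · by_cases hza : z = a
        · exact Or.inr (Or.inr (mem_diag hza))
        · exact Or.inl (mem_diag ⟨hz, hza⟩)
  · intro x _ x' hx' h hx
    exact ⟨hx', not_lt.1 fun h' => hx.2.not_gt
      (((h.base (x, x') (mem_insert _ _)).2 (b₀, b₀) (Or.inr (mem_diag rfl))).2 h')⟩

theorem exists_upperPiece (H : LocalSetting c A I) {b₀ : K} (hb₀ : b₀ ∈ A ∩ I) :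
    ∃ b ∈ A ∩ I, b₀ ≤ b ∧ ∃ E, UpperPiece c A I b E := by
  by_cases happ : ∀ b ∈ A ∩ I, b₀ ≤ b → ∀ u ∈ I, b ≤ u → ∀ k F,
      ∃ y ∈ A ∩ I, CEF c c I I k F (insert (u, y) (diag {b}))
  · exact ⟨b₀, hb₀, le_rfl, _, H.upperPiece_of_approx hb₀ happ⟩
  · push Not at happ
    obtain ⟨b, hb, hb₀b, u, hu, hbu, k, F, hno⟩ := happ
    exact ⟨b, hb, hb₀b, H.upperPiece_of_not_approx hb hu hbu hno⟩

end LocalSetting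

end Pieces

section Dual

variable {ι : Type} {K : Type} [LinearOrder K] {c : ι → Set K} {A I : Set K}

theorem EF.dual_iff {P : K → K → Prop} {D D' : Set K} {k : ℕ} {R : Set (K × K)} :
    EF (M := Kᵒᵈ) (N := Kᵒᵈ) P D D' k R ↔ EF P D D' k R := by
  have base : ∀ R : Set (K × K), EFBase (M := Kᵒᵈ) (N := Kᵒᵈ) P R ↔ EFBase P R := fun R =>
    ⟨fun h p hp => ⟨(h p hp).1, fun q hq => (h q hq).2 p hp⟩,
      fun h p hp => ⟨(h p hp).1, fun q hq => (h q hq).2 p hp⟩⟩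
  induction k generalizing R with
  | zero => exact base R
  | succ k ih =>
    refine and_congr (base R) (and_congr ?_ ?_)
    · exact forall₂_congr fun x _ => exists_congr fun y => and_congr_right fun _ => ih
    · exact forall₂_congr fun x _ => exists_congr fun y => and_congr_right fun _ => ih

theorem CEF.dual_iff {D D' : Set K} {k : ℕ} {F : Finset ι} {R : Set (K × K)} :
    CEF (M := Kᵒᵈ) (N := Kᵒᵈ) c c D D' k F R ↔ CEF c c D D' k F R :=
  EF.dual_iff (K := K)

theorem AEF.dual_iff {D D' : Set K} {R : Set (K × K)} :
    AEF (M := Kᵒᵈ) (N := Kᵒᵈ) c c D D' R ↔ AEF c c D D' R :=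
  forall₂_congr fun _ _ => CEF.dual_iff

theorem SemDef.dual_iff {k : ℕ} {F : Finset ι} {s W : Set K} :
    SemDef (K := Kᵒᵈ) c k F s W ↔ SemDef c k F s W :=
  forall₂_congr fun _ _ => imp_congr CEF.dual_iff Iff.rfl

theorem LocalSetting.dual (H : LocalSetting c A I) : LocalSetting (K := Kᵒᵈ) c A I where
  sat s hs W hW h := H.sat s hs W hW fun k F =>
    ⟨(h k F).1, (h k F).2.imp fun _ => Exists.imp fun _ => SemDef.dual_iff.1⟩
  hom R hR h := by
    obtain ⟨g, h1, h2, h3⟩ := H.hom R hR (AEF.dual_iff.1 h)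
    exact ⟨g, fun x y => h1 y x, h2, h3⟩
  elem s hs hsA := AEF.dual_iff.2 (H.elem s hs hsA)
  conv := H.conv.dual
  inv g h1 h2 := H.inv g (fun x y => h1 y x) h2

/-- `E` is a final segment of the part of `I` below `b`, definable in `I` over `b` and
elementarily equivalent to the part of `A ∩ I` below `b`. -/
structure LowerPiece (c : ι → Set K) (A I : Set K) (b : K) (E : Set K) : Prop where
  sub : E ⊆ I
  mem : b ∈ E
  le : ∀ x ∈ E, x ≤ b
  conv : ∀ x ∈ E, ∀ y, y ≤ b → x ≤ y → y ∈ E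
  aef : AEF c c (A ∩ {x ∈ I | x ≤ b}) E (diag {b})
  definable : ∃ m F, ∀ x ∈ I, ∀ x' ∈ I, CEF c c I I m F (insert (x, x') (diag {b})) →
    x ∈ E → x' ∈ E

theorem LocalSetting.exists_lowerPiece (H : LocalSetting c A I) {b₀ : K} (hb₀ : b₀ ∈ A ∩ I) :
    ∃ b ∈ A ∩ I, ∃ E, LowerPiece c A I b E := by
  obtain ⟨b, hb, -, E, hE⟩ := H.dual.exists_upperPiece hb₀
  refine ⟨b, hb, E, hE.sub, hE.mem, hE.ge, hE.conv, AEF.dual_iff.1 hE.aef, ?_⟩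
  obtain ⟨m, F, h⟩ := hE.definable
  exact ⟨m, F, fun x hx x' hx' h' => h x hx x' hx' (CEF.dual_iff.2 h')⟩

end Dual

section Combine

variable {ι : Type} {K : Type} [LinearOrder K] {c : ι → Set K} {A I : Set K}

theorem AEF.inter_Iio {D D' : Set K} {b : K} (h : AEF c c D D' (diag {b})) :
    AEF c c (D ∩ Iio b) (D' ∩ Iio b) ∅ := by
  intro k F
  have h1 : EF (fun x y => ColorAgree F c c x y ∧ (x ∈ Iio b ↔ y ∈ Iio b)) D D' k (diag {b}) :=
    EF.tag (m := 0) (R₀ := diag {b})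
      (fun x _ y _ hxy => (hxy _ (Or.inl rfl)).2 (b, b) (Or.inr (mem_diag rfl))) Subset.rfl
      (fun p hp => by rw [diag_eq hp]) (h (0 + k) F)
  exact CEF.mono_right h1.relativize (empty_subset _)

theorem AEF.inter_Ioi {D D' : Set K} {b : K} (h : AEF c c D D' (diag {b})) :
    AEF c c (D ∩ Ioi b) (D' ∩ Ioi b) ∅ :=
  AEF.dual_iff.1 (AEF.inter_Iio (K := Kᵒᵈ) (AEF.dual_iff.2 h))

/-- Convex traces of elementary substructures inherit `ℵ₀`-categoricity. -/
theorem LocalSetting.aleph0CatTheory [Countable ι] (H : LocalSetting c A I)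
    (hne : (A ∩ I).Nonempty) (hcat : Aleph0CatTheory ι (CLOTheory ι I (subColor c I)))
    {N : Type} [LinearOrder N] {cN : ι → Set N} (h : AEF cN c univ (A ∩ I) ∅) :
    Aleph0CatTheory ι (CLOTheory ι N cN) := by
  classical
  obtain ⟨a₀, ha₀⟩ := hne
  obtain ⟨a, ha, E₁, h₁⟩ := H.exists_lowerPiece ha₀
  obtain ⟨b, hb, hab, E₂, h₂⟩ := H.exists_upperPiece ha
  set P : Set K := E₁ ∪ Icc a b ∪ E₂ with hP
  have hPI : P ⊆ I := union_subset (union_subset h₁.sub (H.conv.out ha.2 hb.2)) h₂.sub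
  have split : ∀ x, x ∈ P → (x < a ∧ x ∈ E₁) ∨ (x ∈ Icc a b) ∨ (b < x ∧ x ∈ E₂) := by
    intro x hx
    rcases lt_or_ge x a with hxa | hxa
    · left
      rcases hx with (hx | hx) | hx
      exacts [⟨hxa, hx⟩, absurd hx.1 hxa.not_ge, absurd (hab.trans (h₂.ge x hx)) hxa.not_ge]
    · rcases le_or_gt x b with hxb | hxb
      · exact Or.inr (Or.inl ⟨hxa, hxb⟩)
      · right; right
        rcases hx with (hx | hx) | hx
        exacts [absurd ((h₁.le x hx).trans hab) hxb.not_ge, absurd hx.2 hxb.not_ge, ⟨hxb, hx⟩]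
  have hPconv : P.OrdConnected := by
    refine ⟨fun x hx y hy z hz => ?_⟩
    rcases lt_or_ge z a with hza | hza
    · rcases split x hx with hx | hx | hx
      · exact Or.inl (Or.inl (h₁.conv x hx.2 z hza.le hz.1))
      · exact absurd (hx.1.trans hz.1) hza.not_ge
      · exact absurd (hab.trans (hx.1.le.trans hz.1)) hza.not_ge
    · rcases le_or_gt z b with hzb | hzb
      · exact Or.inl (Or.inr ⟨hza, hzb⟩)
      · rcases split y hy with hy | hy | hy
        · exact absurd ((hz.2.trans hy.1.le).trans hab) hzb.not_ge
        · exact absurd (hz.2.trans hy.2) hzb.not_ge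
        · exact Or.inr (h₂.conv y hy.2 z hzb.le hz.2)
  have hmid : AEF c c (A ∩ Icc a b) (Icc a b) ∅ := by
    refine (H.aef_inter (s := {a, b}) (m := 0) (F₀ := ∅) (by simp)
      (by rintro _ (rfl | rfl); exacts [ha.1, hb.1]) ?_).mono_right (empty_subset _)
    intro x x' hx hxE
    have e1 := (hx _ (Or.inl rfl)).2 (a, a) (Or.inr (mem_diag (mem_insert _ _)))
    have e2 := (hx (b, b) (Or.inr (mem_diag (Or.inr rfl)))).2 _ (Or.inl rfl)
    exact ⟨not_lt.1 fun h' => hxE.1.not_gt (e1.2 h'), not_lt.1 fun h' => hxE.2.not_gt (e2.2 h')⟩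
  have hXP : AEF c c (A ∩ I) P ∅ := by
    intro k F
    have s1 := EF.sum (E₁ := Iio a) (E₂ := Icc a b) (E₁' := Iio a) (E₂' := Icc a b)
      (fun x hx y hy => lt_of_lt_of_le hx hy.1) (fun x hx y hy => lt_of_lt_of_le hx hy.1)
      (h₁.aef.inter_Iio k F) (hmid k F) (empty_subset _) (empty_subset _)
      inter_subset_right inter_subset_right inter_subset_right Subset.rfl
    have s2 := EF.sum (E₁ := Iic b) (E₂ := Ioi b) (E₁' := Iic b) (E₂' := Ioi b)
      (fun x hx y hy => lt_of_le_of_lt hx hy) (fun x hx y hy => lt_of_le_of_lt hx hy)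
      s1 (h₂.aef.inter_Ioi k F) (by simp) (empty_subset _)
      (by
        rintro x (hx | hx)
        exacts [hx.2.le.trans hab, hx.2.2]) inter_subset_right
      (by
        rintro x (hx | hx)
        exacts [hx.2.le.trans hab, hx.2]) inter_subset_right
    have e1 : A ∩ {x ∈ I | x ≤ a} ∩ Iio a ∪ A ∩ Icc a b ∪ A ∩ {x ∈ I | b ≤ x} ∩ Ioi b = A ∩ I := by
      ext x
      constructor
      · rintro ((hx | hx) | hx)
        exacts [⟨hx.1.1, hx.1.2.1⟩, ⟨hx.1, H.conv.out ha.2 hb.2 hx.2⟩, ⟨hx.1.1, hx.1.2.1⟩]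
      · intro hx
        rcases lt_or_ge x a with hxa | hxa
        · exact Or.inl (Or.inl ⟨⟨hx.1, hx.2, hxa.le⟩, hxa⟩)
        · rcases le_or_gt x b with hxb | hxb
          · exact Or.inl (Or.inr ⟨hx.1, hxa, hxb⟩)
          · exact Or.inr ⟨⟨hx.1, hx.2, hxb.le⟩, hxb⟩
    have e2 : E₁ ∩ Iio a ∪ Icc a b ∪ E₂ ∩ Ioi b = P := by
      ext x
      constructor
      · rintro ((hx | hx) | hx)
        exacts [Or.inl (Or.inl hx.1), Or.inl (Or.inr hx), Or.inr hx.1]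
      · intro hx
        rcases split x hx with hx | hx | hx
        exacts [Or.inl (Or.inl ⟨hx.2, hx.1⟩), Or.inl (Or.inr hx), Or.inr ⟨hx.2, hx.1⟩]
    rw [e1, e2] at s2
    exact CEF.mono_right s2 (empty_subset _)
  obtain ⟨m₁, F₁, hd₁⟩ := h₁.definable
  obtain ⟨m₂, F₂, hd₂⟩ := h₂.definable
  set P' : Set I := Subtype.val ⁻¹' P with hP'
  have hdef : SemDef (subColor c I) (max m₁ m₂) (F₁ ∪ F₂) {⟨a, ha.2⟩, ⟨b, hb.2⟩} P' := by
    intro x x' hx hxP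
    have h' : CEF c c I I (max m₁ m₂) (F₁ ∪ F₂) (insert (x.1, x'.1) (diag {a, b})) := by
      have h2 := (((AEF.subtype c I).symm _ _).comp hx
        (R₃ := insert (x.1, x') {(a, ⟨a, ha.2⟩), (b, ⟨b, hb.2⟩)}) ?_).comp
        (AEF.subtype c I _ _) (R₃ := insert (x.1, x'.1) (diag {a, b})) ?_
      · exact h2
      · rintro _ (rfl | rfl | rfl)
        · exact ⟨x, rfl, Or.inl rfl⟩
        · exact ⟨⟨a, ha.2⟩, rfl, Or.inr (mem_diag (mem_insert _ _))⟩
        · exact ⟨⟨b, hb.2⟩, rfl, Or.inr (mem_diag (Or.inr rfl))⟩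
      · rintro _ (rfl | ⟨z, rfl | rfl, rfl⟩)
        · exact ⟨x', Or.inl rfl, rfl⟩
        · exact ⟨⟨z, ha.2⟩, Or.inr (Or.inl rfl), rfl⟩
        · exact ⟨⟨z, hb.2⟩, Or.inr (Or.inr rfl), rfl⟩
    rcases hxP with (hxP | hxP) | hxP
    · refine Or.inl (Or.inl (hd₁ x x.2 x' x'.2 ?_ hxP))
      exact (h'.of_le (le_max_left _ _) Finset.subset_union_left).mono_right
        (insert_subset_insert (diag_mono (by simp)))
    · have e1 := (h'.base _ (Or.inl rfl)).2 (a, a) (Or.inr (mem_diag (mem_insert _ _)))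
      have e2 := (h'.base (b, b) (Or.inr (mem_diag (Or.inr rfl)))).2 _ (Or.inl rfl)
      exact Or.inl (Or.inr ⟨not_lt.1 fun h' => hxP.1.not_gt (e1.2 h'),
        not_lt.1 fun h' => hxP.2.not_gt (e2.2 h')⟩)
    · refine Or.inr (hd₂ x x.2 x' x'.2 ?_ hxP)
      exact (h'.of_le (le_max_right _ _) Finset.subset_union_right).mono_right
        (insert_subset_insert (diag_mono (by simp)))
  have hPP' : AEF (subColor c I) c P' P {p | (p.1 : K) = p.2} := by
    have := AEF.of_emb (cM := subColor c I) (cN := c) (f := Subtype.val) (fun _ _ h => h)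
      (fun i x => Iff.rfl) P'
    rwa [hP', Subtype.image_preimage_coe, inter_eq_right.2 hPI] at this
  refine aleph0CatTheory_of_convex hcat (P := P') ⟨fun x hx y hy z hz => hPconv.out hx hy hz⟩
    ⟨⟨a, ha.2⟩, Or.inl (Or.inl h₁.mem)⟩ (by simp) hdef ?_
  exact (h.comp hXP (R₃ := ∅) (by simp)).comp hPP'.symm (by simp)

end Combine

section ConvexTypes

variable {ι : Type} {A B M₀ : Type} [LinearOrder A] [LinearOrder B] [LinearOrder M₀]
  {cA : ι → Set A} {cB : ι → Set B} {c₀ : ι → Set M₀}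

theorem ElemEmb.strictMono {f : A → B} (hf : ElemEmb cA cB f) : StrictMono f := fun x y hxy =>
  ((hf {x, y} (by simp) 0 ∅ (x, f x) ⟨x, by simp, rfl⟩).2 (y, f y) ⟨y, by simp, rfl⟩).1 hxy

theorem ElemEmb.color_iff {f : A → B} (hf : ElemEmb cA cB f) (i : ι) (x : A) :
    x ∈ cA i ↔ f x ∈ cB i :=
  (hf {x} (by simp) 0 {i} (x, f x) ⟨x, rfl, rfl⟩).1 i (Finset.mem_singleton_self i)

theorem ElemEmb.mem_typeSet_iff {f : A → B} (hf : ElemEmb cA cB f)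
    (Φ : Set ((CLOLang ι).Formula Unit)) (x : A) :
    f x ∈ TypeSet ι B cB Φ ↔ x ∈ TypeSet ι A cA Φ := by
  refine forall₂_congr fun φ _ => (sat_iff_of_AEF ((hf {x} (by simp)).mono_right ?_) φ).symm
  rintro _ ⟨_, rfl⟩
  exact ⟨x, rfl, rfl⟩

theorem ElemEmb.of_equiv (e : A ≃ B) (h1 : ∀ x y, x < y ↔ e x < e y)
    (h2 : ∀ i x, x ∈ cA i ↔ e x ∈ cB i) : ElemEmb cA cB e := by
  intro s _
  have := AEF.of_emb (cM := cA) (cN := cB) (f := e) (fun x y => (h1 x y).1) h2 univ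
  rw [image_univ, e.range_eq_univ] at this
  refine this.mono_right ?_
  rintro _ ⟨x, _, rfl⟩
  rfl

theorem ElemEmb.cloEquiv {f : A → B} (hf : ElemEmb cA cB f) : CLOEquiv ι A cA B cB :=
  cloEquiv_iff.2 ((hf ∅ finite_empty).mono_right (empty_subset _))

theorem typeSet_ordConnected {Φ : Set ((CLOLang ι).Formula Unit)} (hB : CLOEquiv ι B cB M₀ c₀)
    (hΦ : ∀ φ ∈ Φ, ConvexFml ι M₀ c₀ φ) : (TypeSet ι B cB Φ).OrdConnected :=
  ⟨fun _ hx _ hy _ hz φ hφ => (hΦ φ hφ B _ cB hB).out (hx φ hφ) (hy φ hφ) hz⟩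

theorem aleph0CatTheory_of_isEmpty [IsEmpty A] : Aleph0CatTheory ι (CLOTheory ι A cA) := by
  have key : ∀ (N : Type) [LinearOrder N] (cN : ι → Set N),
      CLOTheory ι N cN = CLOTheory ι A cA → IsEmpty N := fun N _ cN h => ⟨fun x => by
    obtain ⟨y, -⟩ := (cloEquiv_iff.1 (cloTheory_eq_iff.1 h) 1 ∅).2.1 x (mem_univ x)
    exact isEmptyElim y⟩
  intro N₁ N₂ _ _ c₁ c₂ _ _ h₁ h₂
  have := key N₁ c₁ h₁
  have := key N₂ c₂ h₂
  exact cloIso_of_rel ∅ (fun x => isEmptyElim x) (fun y => isEmptyElim y) (by simp)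

/-- In a locally simple theory, `Φ(A)` is `ℵ₀`-categorical for every model `A`. -/
theorem LocallySimple.aleph0CatTheory_typeSet [Countable ι] (hLS : LocallySimple ι M₀ c₀)
    (hA : CLOEquiv ι A cA M₀ c₀) {Φ : Set ((CLOLang ι).Formula Unit)}
    (hΦ : IsConvexType ι M₀ c₀ Φ) :
    Aleph0CatTheory ι (CLOTheory ι (TypeSet ι A cA Φ) (subColor cA (TypeSet ι A cA Φ))) := by
  rcases isEmpty_or_nonempty (TypeSet ι A cA Φ) with hemp | ⟨a, ha⟩
  · exact aleph0CatTheory_of_isEmpty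
  obtain ⟨S, _, cS, f, hS, hf⟩ := exists_suffSaturated A cA
  have hSM : CLOEquiv ι S cS M₀ c₀ := by
    have h : CLOEquiv ι A cA S cS := hf.cloEquiv
    exact cloTheory_eq_iff.1 ((cloTheory_eq_iff.2 h).symm.trans (cloTheory_eq_iff.2 hA))
  have hfr := AEF.of_emb hf.strictMono hf.color_iff univ
  rw [image_univ] at hfr
  have H : LocalSetting cS (range f) (TypeSet ι S cS Φ) := by
    refine ⟨hS.1.semSat, hS.2.semHom, ?_, typeSet_ordConnected hSM hΦ.1,
      fun g h1 h2 x => ((ElemEmb.of_equiv g h1 h2).mem_typeSet_iff Φ x).2⟩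
    intro s hs hsf
    refine hfr.symm.comp (hf (f ⁻¹' s) (hs.preimage hf.strictMono.injective.injOn)) ?_
    rintro _ ⟨z, hz, rfl⟩
    obtain ⟨x, rfl⟩ := hsf hz
    exact ⟨x, rfl, ⟨x, hz, rfl⟩⟩
  have himg : f '' TypeSet ι A cA Φ = range f ∩ TypeSet ι S cS Φ := by
    ext y
    constructor
    · rintro ⟨x, hx, rfl⟩
      exact ⟨⟨x, rfl⟩, (hf.mem_typeSet_iff Φ x).2 hx⟩
    · rintro ⟨⟨x, rfl⟩, hx⟩
      exact ⟨x, (hf.mem_typeSet_iff Φ x).1 hx, rfl⟩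
  refine H.aleph0CatTheory (himg ▸ ⟨f a, mem_image_of_mem f ha⟩) (hLS S cS hSM hS Φ hΦ) ?_
  rw [← himg]
  exact (AEF.subtype cA _).comp (AEF.of_emb hf.strictMono hf.color_iff _) (by simp)

theorem exists_formula_below (ψ : (CLOLang ι).Formula Unit) :
    ∃ θ : (CLOLang ι).Formula Unit, ∀ (M : Type) [LinearOrder M] (c : ι → Set M) (x : M),
      Sat M c θ (fun _ => x) ↔ ∀ y, Sat M c ψ (fun _ => y) → x < y := by
  let body : (CLOLang ι).BoundedFormula Unit 1 := BoundedFormula.imp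
    (BoundedFormula.relabel (n := 1) (fun _ : Unit => (Sum.inr 0 : Unit ⊕ Fin 1)) ψ)
    (Relations.boundedFormula₂ (CLORel.lt : (CLOLang ι).Relations 2)
      (Term.var (Sum.inl ())) (Term.var (Sum.inr 0)))
  refine ⟨body.all, fun M _ c x => ?_⟩
  let _ := CLOStr ι M c
  refine forall_congr' fun y => imp_congr ?_ ?_
  · refine BoundedFormula.realize_relabel.trans ?_
    exact iff_of_eq (congrArg₂ _ (funext fun _ => rfl) (Subsingleton.elim _ _))
  · exact Iff.rfl

theorem exists_formula_above (ψ : (CLOLang ι).Formula Unit) :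
    ∃ θ : (CLOLang ι).Formula Unit, ∀ (M : Type) [LinearOrder M] (c : ι → Set M) (x : M),
      Sat M c θ (fun _ => x) ↔ ∀ y, Sat M c ψ (fun _ => y) → y < x := by
  let body : (CLOLang ι).BoundedFormula Unit 1 := BoundedFormula.imp
    (BoundedFormula.relabel (n := 1) (fun _ : Unit => (Sum.inr 0 : Unit ⊕ Fin 1)) ψ)
    (Relations.boundedFormula₂ (CLORel.lt : (CLOLang ι).Relations 2)
      (Term.var (Sum.inr 0)) (Term.var (Sum.inl ())))
  refine ⟨body.all, fun M _ c x => ?_⟩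
  let _ := CLOStr ι M c
  refine forall_congr' fun y => imp_congr ?_ ?_
  · refine BoundedFormula.realize_relabel.trans ?_
    exact iff_of_eq (congrArg₂ _ (funext fun _ => rfl) (Subsingleton.elim _ _))
  · exact Iff.rfl

theorem convexFml_of_below {ψ θ : (CLOLang ι).Formula Unit}
    (h : ∀ (M : Type) [LinearOrder M] (c : ι → Set M) (x : M),
      Sat M c θ (fun _ => x) ↔ ∀ y, Sat M c ψ (fun _ => y) → x < y) : ConvexFml ι M₀ c₀ θ :=
  fun B _ cB _ => ⟨fun _ _ y hy z hz =>
    (h B cB z).2 fun w hw => hz.2.trans_lt ((h B cB y).1 hy w hw)⟩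

theorem convexFml_of_above {ψ θ : (CLOLang ι).Formula Unit}
    (h : ∀ (M : Type) [LinearOrder M] (c : ι → Set M) (x : M),
      Sat M c θ (fun _ => x) ↔ ∀ y, Sat M c ψ (fun _ => y) → y < x) : ConvexFml ι M₀ c₀ θ :=
  fun B _ cB _ => ⟨fun x hx _ _ z hz =>
    (h B cB z).2 fun w hw => ((h B cB x).1 hx w hw).trans_le hz.1⟩

/-- The set of convex formulas true at a point. -/
def convexTypeOf (c₀ : ι → Set M₀) (cA : ι → Set A) (a : A) : Set ((CLOLang ι).Formula Unit) :=
  {φ | ConvexFml ι M₀ c₀ φ ∧ Sat A cA φ fun _ => a}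

theorem mem_typeSet_convexTypeOf (a : A) : a ∈ TypeSet ι A cA (convexTypeOf c₀ cA a) :=
  fun _ hφ => hφ.2

theorem isConvexType_convexTypeOf (hA : CLOEquiv ι A cA M₀ c₀) (a : A) :
    IsConvexType ι M₀ c₀ (convexTypeOf c₀ cA a) := by
  refine ⟨fun φ hφ => hφ.1, ⟨A, _, cA, hA, a, mem_typeSet_convexTypeOf a⟩, ?_⟩
  rintro ψ hψ ⟨B, _, cB, -, b, hb⟩
  refine ⟨hψ, by_contra fun hψa => ?_⟩
  have hbψ := hb ψ (mem_insert _ _)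
  obtain ⟨θ, hθ⟩ := exists_formula_below ψ
  obtain ⟨η, hη⟩ := exists_formula_above ψ
  by_cases hθa : Sat A cA θ fun _ => a
  · exact lt_irrefl b ((hθ B cB b).1 (hb θ (Or.inr ⟨convexFml_of_below hθ, hθa⟩)) b hbψ)
  by_cases hηa : Sat A cA η fun _ => a
  · exact lt_irrefl b ((hη B cB b).1 (hb η (Or.inr ⟨convexFml_of_above hη, hηa⟩)) b hbψ)
  rw [hθ] at hθa
  rw [hη] at hηa
  push Not at hθa hηa
  obtain ⟨y, hy, hya⟩ := hθa
  obtain ⟨z, hz, haz⟩ := hηa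
  exact hψa ((hψ A _ cA hA).out hy hz ⟨hya, haz⟩)

theorem IsConvexType.eq_convexTypeOf {Φ : Set ((CLOLang ι).Formula Unit)}
    (hΦ : IsConvexType ι M₀ c₀ Φ) (hA : CLOEquiv ι A cA M₀ c₀) {a : A}
    (ha : a ∈ TypeSet ι A cA Φ) : Φ = convexTypeOf c₀ cA a := by
  refine Subset.antisymm (fun φ hφ => ⟨hΦ.1 φ hφ, ha φ hφ⟩) fun φ hφ =>
    hΦ.2.2 φ hφ.1 ⟨A, _, cA, hA, a, ?_⟩
  rintro ψ (rfl | hψ)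
  exacts [hφ.2, ha ψ hψ]

/-- The order between realizations of distinct convex types depends only on the types. -/
theorem IsConvexType.lt_of_lt {Φ Ψ : Set ((CLOLang ι).Formula Unit)}
    (hΦ : IsConvexType ι M₀ c₀ Φ) (hΨ : IsConvexType ι M₀ c₀ Ψ) (hne : Φ ≠ Ψ)
    (hA : CLOEquiv ι A cA M₀ c₀) {a a' : A}
    {b b' : B} (ha : a ∈ TypeSet ι A cA Φ) (ha' : a' ∈ TypeSet ι A cA Ψ)
    (hb : b ∈ TypeSet ι B cB Φ) (hb' : b' ∈ TypeSet ι B cB Ψ) (h : a < a') : b < b' := by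
  have eΦ := hΦ.eq_convexTypeOf hA ha
  have eΨ := hΨ.eq_convexTypeOf hA ha'
  by_cases hsub : Φ ⊆ Ψ
  · obtain ⟨φ, hφΨ, hφΦ⟩ := not_subset.1 fun h' => hne (hsub.antisymm h')
    obtain ⟨θ, hθ⟩ := exists_formula_below φ
    refine (hθ B cB b).1 (hb θ ?_) b' (hb' φ hφΨ)
    rw [eΦ]
    refine ⟨convexFml_of_below hθ, (hθ A cA a).2 fun y hy => not_le.1 fun hya => hφΦ ?_⟩
    rw [eΦ]
    exact ⟨hΨ.1 φ hφΨ, (hΨ.1 φ hφΨ A _ cA hA).out hy (ha' φ hφΨ) ⟨hya, h.le⟩⟩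
  · obtain ⟨φ, hφΦ, hφΨ⟩ := not_subset.1 hsub
    obtain ⟨θ, hθ⟩ := exists_formula_above φ
    refine (hθ B cB b').1 (hb' θ ?_) b (hb φ hφΦ)
    rw [eΨ]
    refine ⟨convexFml_of_above hθ, (hθ A cA a').2 fun y hy => not_le.1 fun hya => hφΨ ?_⟩
    rw [eΨ]
    exact ⟨hΦ.1 φ hφΦ, (hΦ.1 φ hφΦ A _ cA hA).out (ha φ hφΦ) hy ⟨h.le, hya⟩⟩

/-- Isomorphisms between the realization sets of all convex types glue together. -/
theorem cloIso_of_typeSet (hA : CLOEquiv ι A cA M₀ c₀) (hB : CLOEquiv ι B cB M₀ c₀)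
    (h : ∀ Φ, IsConvexType ι M₀ c₀ Φ →
      CLOIso ι (TypeSet ι A cA Φ) (subColor cA (TypeSet ι A cA Φ))
        (TypeSet ι B cB Φ) (subColor cB (TypeSet ι B cB Φ))) : CLOIso ι A cA B cB := by
  simp only [cloIso_iff] at h
  choose e he hc using h
  refine cloIso_of_rel {p | ∃ Φ hΦ, ∃ x : TypeSet ι A cA Φ, p = (x.1, (e Φ hΦ x).1)}
    (fun a => ?_) (fun b => ?_) ?_
  · exact ⟨_, _, isConvexType_convexTypeOf hA a, ⟨a, mem_typeSet_convexTypeOf a⟩, rfl⟩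
  · let x := (e _ (isConvexType_convexTypeOf hB b)).symm ⟨b, mem_typeSet_convexTypeOf b⟩
    exact ⟨x, _, isConvexType_convexTypeOf hB b, x, by simp [x]⟩
  · rintro _ ⟨Φ, hΦ, x, rfl⟩
    refine ⟨fun i => hc Φ hΦ i x, ?_⟩
    rintro _ ⟨Ψ, hΨ, y, rfl⟩
    by_cases hne : Φ = Ψ
    · subst hne
      exact he Φ hΦ x y
    · exact ⟨hΦ.lt_of_lt hΨ hne hA x.2 y.2 (Subtype.prop _) (Subtype.prop _),
        hΦ.lt_of_lt hΨ hne hB (Subtype.prop _) (Subtype.prop _) x.2 y.2⟩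

theorem CLOIso.cloEquiv_typeSet (h : CLOIso ι A cA B cB) (Φ : Set ((CLOLang ι).Formula Unit)) :
    CLOEquiv ι (TypeSet ι A cA Φ) (subColor cA (TypeSet ι A cA Φ))
      (TypeSet ι B cB Φ) (subColor cB (TypeSet ι B cB Φ)) := by
  obtain ⟨e, h1, h2⟩ := cloIso_iff.1 h
  have he : ElemEmb cA cB e := ElemEmb.of_equiv e h1 h2
  have himg : e '' TypeSet ι A cA Φ = TypeSet ι B cB Φ := by
    ext y
    obtain ⟨x, rfl⟩ := e.surjective y
    rw [e.injective.mem_set_image, he.mem_typeSet_iff]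
  rw [← himg, cloEquiv_iff]
  exact (AEF.of_emb he.strictMono h2 (TypeSet ι A cA Φ)).to_subtype.mono_right (empty_subset _)

end ConvexTypes

theorem stmt13 {ι : Type} [Countable ι] {M₀ : Type} [LinearOrder M₀] (c₀ : ι → Set M₀)
    (hLS : LocallySimple ι M₀ c₀)
    {A B : Type} [Countable A] [Countable B] [LinearOrder A] [LinearOrder B]
    (cA : ι → Set A) (cB : ι → Set B)
    (hA : CLOEquiv ι A cA M₀ c₀) (hB : CLOEquiv ι B cB M₀ c₀) :
    CLOIso ι A cA B cB ↔
      ∀ Φ, IsConvexType ι M₀ c₀ Φ →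
        CLOEquiv ι (↥(TypeSet ι A cA Φ)) (subColor cA (TypeSet ι A cA Φ))
          (↥(TypeSet ι B cB Φ)) (subColor cB (TypeSet ι B cB Φ)) := by
  refine ⟨fun h Φ _ => h.cloEquiv_typeSet Φ, fun h => cloIso_of_typeSet hA hB fun Φ hΦ => ?_⟩
  exact hLS.aleph0CatTheory_typeSet hA hΦ _ _ _ _ _ _ inferInstance inferInstance rfl
    (cloTheory_eq_iff.2 (h Φ hΦ)).symm
end

section
/- Let T be a complete CLO theory, let A and B be models of T with A an elementary substructure of B, and suppose there is a set K ⊆ IT(T) such that the set C = B ∖ ⋃_{Φ∈K} Φ(B) satisfies A ⊆ C ⊆ B. Then C, with its induced L_κ-structure, is an elementary substructure of B. -/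
open FirstOrder Language Set

namespace CLO

/-- Evaluating a one-variable formula at a bound variable. -/
theorem realize_relabel_inr {ι B : Type} [LinearOrder B] (cB : ι → Set B)
    (ψ : (CLOLang ι).Formula Unit) {m : ℕ} (i : Fin m) (x : Fin m → B) :
    letI := CLOStr ι B cB
    BoundedFormula.Realize (l := m)
      (BoundedFormula.relabel (fun _ : Unit => (Sum.inr i : Empty ⊕ Fin m)) ψ) default x ↔
        x i ∈ FmlSet ι B cB ψ := by
  let _ := CLOStr ι B cB
  refine BoundedFormula.realize_relabel.trans (Iff.of_eq ?_)
  exact congrArg _ (Subsingleton.elim _ _)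

/-- If `I` is convex and definable over `∅`, then the traces on tuples from `I` of a formula
`φ`, with parameters substituted from outside `I`, are given by finitely many formulas
without parameters. The map `σ` says which variables are evaluated inside `I` (left) and which
are evaluated outside (right). -/
theorem exists_finite_traces {ι B : Type} [LinearOrder B] (cB : ι → Set B)
    (ψ : (CLOLang ι).Formula Unit) (hψ : (FmlSet ι B cB ψ).OrdConnected)
    {α : Type} {n : ℕ} (φ : (CLOLang ι).BoundedFormula α n) :
    letI := CLOStr ι B cB
    ∀ (m : ℕ) (γ : Type) (σ : α ⊕ Fin n → Fin m ⊕ γ),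
      ∃ F : Set ((CLOLang ι).BoundedFormula Empty m), F.Finite ∧
        ∀ y : γ → B, (∀ j, y j ∉ FmlSet ι B cB ψ) →
          ∃ θ ∈ F, ∀ x : Fin m → B, (∀ i, x i ∈ FmlSet ι B cB ψ) →
            (φ.Realize (fun a => Sum.elim x y (σ (.inl a)))
              (fun a => Sum.elim x y (σ (.inr a))) ↔ θ.Realize default x) := by
  let _ := CLOStr ι B cB
  have const : ∀ (m : ℕ) (γ : Type) (P : (Fin m → B) → (γ → B) → Prop),
      (∀ y : γ → B, (∀ j, y j ∉ FmlSet ι B cB ψ) → ∀ x x' : Fin m → B,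
        (∀ i, x i ∈ FmlSet ι B cB ψ) → (∀ i, x' i ∈ FmlSet ι B cB ψ) → P x y → P x' y) →
      ∃ F : Set ((CLOLang ι).BoundedFormula Empty m), F.Finite ∧
        ∀ y : γ → B, (∀ j, y j ∉ FmlSet ι B cB ψ) →
          ∃ θ ∈ F, ∀ x : Fin m → B, (∀ i, x i ∈ FmlSet ι B cB ψ) →
            (P x y ↔ θ.Realize default x) := by
    intro m γ P hP
    refine ⟨{⊤, ⊥}, by simp, fun y hy => ?_⟩
    by_cases h : ∃ x : Fin m → B, (∀ i, x i ∈ FmlSet ι B cB ψ) ∧ P x y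
    · obtain ⟨x₀, hx₀, h₀⟩ := h
      exact ⟨⊤, by simp, fun x hx => by simpa using hP y hy x₀ x hx₀ hx h₀⟩
    · push Not at h
      exact ⟨⊥, by simp, fun x hx => by simpa using h x hx⟩
  have single : ∀ (m : ℕ) (γ : Type) (P : (Fin m → B) → (γ → B) → Prop)
      (θ : (CLOLang ι).BoundedFormula Empty m), (∀ x y, P x y ↔ θ.Realize default x) →
      ∃ F : Set ((CLOLang ι).BoundedFormula Empty m), F.Finite ∧
        ∀ y : γ → B, (∀ j, y j ∉ FmlSet ι B cB ψ) →
          ∃ θ ∈ F, ∀ x : Fin m → B, (∀ i, x i ∈ FmlSet ι B cB ψ) →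
            (P x y ↔ θ.Realize default x) :=
    fun m γ P θ h => ⟨{θ}, by simp, fun y _ => ⟨θ, rfl, fun x _ => h x y⟩⟩
  induction φ with
  | falsum => exact fun m γ σ => single m γ _ ⊥ fun _ _ => Iff.rfl
  | equal t₁ t₂ =>
    intro m γ σ
    rcases t₁ with a | ⟨f, _⟩
    · rcases t₂ with b | ⟨f, _⟩
      · have key : ∃ F : Set ((CLOLang ι).BoundedFormula Empty m), F.Finite ∧
          ∀ y : γ → B, (∀ j, y j ∉ FmlSet ι B cB ψ) →
            ∃ θ ∈ F, ∀ x : Fin m → B, (∀ i, x i ∈ FmlSet ι B cB ψ) →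
              (Sum.elim x y (σ a) = Sum.elim x y (σ b) ↔ θ.Realize default x) := by
          rcases σ a with i | i <;> rcases σ b with j | j
          · exact single m γ (fun x y => x i = x j)
              (.equal (.var (.inr i)) (.var (.inr j))) fun _ _ => Iff.rfl
          · exact const m γ (fun x y => x i = y j) fun y hy x x' hx _ h => (hy j (h ▸ hx i)).elim
          · exact const m γ (fun x y => y i = x j) fun y hy x x' hx _ h => (hy i (h ▸ hx j)).elim
          · exact const m γ (fun x y => y i = y j) fun y hy x x' _ _ h => h
        rcases a with a | a <;> rcases b with b | b <;> exact key
      · exact f.elim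
    · exact f.elim
  | rel R ts =>
    intro m γ σ
    have hts : ∀ i, ∃ a, ts i = .var a := fun i => by
      rcases ts i with a | ⟨f, _⟩
      · exact ⟨a, rfl⟩
      · exact f.elim
    choose a ha using hts
    obtain rfl : ts = fun i => .var (a i) := funext ha
    have hval : ∀ (x : Fin m → B) (y : γ → B) (i),
        (Sum.elim (fun a => Sum.elim x y (σ (.inl a)))
          (fun a => Sum.elim x y (σ (.inr a))) (a i)) = Sum.elim x y (σ (a i)) := by
      intro x y i
      rcases a i with b | b <;> rfl
    rcases R with _ | k
    · have key : ∃ F : Set ((CLOLang ι).BoundedFormula Empty m), F.Finite ∧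
          ∀ y : γ → B, (∀ j, y j ∉ FmlSet ι B cB ψ) →
            ∃ θ ∈ F, ∀ x : Fin m → B, (∀ i, x i ∈ FmlSet ι B cB ψ) →
              (Sum.elim x y (σ (a 0)) < Sum.elim x y (σ (a 1)) ↔ θ.Realize default x) := by
        rcases σ (a 0) with i | i <;> rcases σ (a 1) with j | j
        · exact single m γ (fun x y => x i < x j)
            (.rel (CLORel.lt : CLORel ι 2) ![.var (.inr i), .var (.inr j)]) fun _ _ => Iff.rfl
        · refine const m γ (fun x y => x i < y j) fun y hy x x' hx hx' h => ?_
          by_contra h'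
          exact hy j (hψ.out (hx i) (hx' i) ⟨h.le, not_lt.1 h'⟩)
        · refine const m γ (fun x y => y i < x j) fun y hy x x' hx hx' h => ?_
          by_contra h'
          exact hy i (hψ.out (hx' j) (hx j) ⟨not_lt.1 h', h.le⟩)
        · exact const m γ (fun x y => y i < y j) fun y hy x x' _ _ h => h
      convert key using 12 with F y hy θ x hx
      exact Iff.of_eq (congrArg₂ (· < ·) (hval x y 0) (hval x y 1))
    · have key : ∃ F : Set ((CLOLang ι).BoundedFormula Empty m), F.Finite ∧
          ∀ y : γ → B, (∀ j, y j ∉ FmlSet ι B cB ψ) →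
            ∃ θ ∈ F, ∀ x : Fin m → B, (∀ i, x i ∈ FmlSet ι B cB ψ) →
              (Sum.elim x y (σ (a 0)) ∈ cB k ↔ θ.Realize default x) := by
        rcases σ (a 0) with i | i
        · exact single m γ (fun x y => x i ∈ cB k)
            (.rel (CLORel.color k : CLORel ι 1) ![.var (.inr i)]) fun _ _ => Iff.rfl
        · exact const m γ (fun x y => y i ∈ cB k) fun y hy x x' _ _ h => h
      convert key using 12 with F y hy θ x hx
      exact Iff.of_eq (congrArg (· ∈ cB k) (hval x y 0))
  | imp φ₁ φ₂ ih₁ ih₂ =>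
    intro m γ σ
    obtain ⟨F₁, hF₁, h₁⟩ := ih₁ m γ σ
    obtain ⟨F₂, hF₂, h₂⟩ := ih₂ m γ σ
    refine ⟨Set.image2 .imp F₁ F₂, hF₁.image2 _ hF₂, fun y hy => ?_⟩
    obtain ⟨θ₁, hθ₁, e₁⟩ := h₁ y hy
    obtain ⟨θ₂, hθ₂, e₂⟩ := h₂ y hy
    refine ⟨_, Set.mem_image2_of_mem hθ₁ hθ₂, fun x hx => ?_⟩
    rw [BoundedFormula.realize_imp, BoundedFormula.realize_imp, e₁ x hx, e₂ x hx]
  | @all n φ ih =>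
    intro m γ σ
    obtain ⟨F₁, hF₁, h₁⟩ := ih (m + 1) γ (Sum.elim
      (fun a => (σ (.inl a)).map Fin.castSucc id)
      (Fin.snoc (α := fun _ => Fin (m + 1) ⊕ γ)
        (fun a => (σ (.inr a)).map Fin.castSucc id) (.inl (Fin.last m))))
    obtain ⟨F₂, hF₂, h₂⟩ := ih m (Option γ) (Sum.elim
      (fun a => (σ (.inl a)).map id some)
      (Fin.snoc (α := fun _ => Fin m ⊕ Option γ)
        (fun a => (σ (.inr a)).map id some) (.inr none)))
    let ψ' : (CLOLang ι).BoundedFormula Empty (m + 1) :=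
      BoundedFormula.relabel (fun _ : Unit => (Sum.inr (Fin.last m) : Empty ⊕ Fin (m + 1))) ψ
    have hψ' : ∀ x : Fin (m + 1) → B, ψ'.Realize default x ↔
        x (Fin.last m) ∈ FmlSet ι B cB ψ := fun x =>
      realize_relabel_inr cB ψ (Fin.last m) x
    have hfin : ∀ S ∈ F₂.powerset, Finite S := fun S hS => hF₂.subset hS
    refine ⟨Set.range fun p : F₁ × F₂.powerset =>
      ((ψ'.imp p.1.1).all ⊓
        (haveI := hfin _ p.2.2; BoundedFormula.iInf fun θ : p.2.1 => θ.1)), ?_, fun y hy => ?_⟩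
    · have := hF₁.to_subtype
      have := hF₂.powerset.to_subtype
      exact Set.finite_range _
    obtain ⟨θ₁, hθ₁, e₁⟩ := h₁ y hy
    let S := {θ ∈ F₂ | ∃ z ∉ FmlSet ι B cB ψ, ∀ x : Fin m → B, (∀ i, x i ∈ FmlSet ι B cB ψ) →
      (φ.Realize (fun a => Sum.elim x y (σ (.inl a)))
        (Fin.snoc (fun a => Sum.elim x y (σ (.inr a))) z) ↔ θ.Realize default x)}
    refine ⟨_, ⟨⟨⟨θ₁, hθ₁⟩, ⟨S, Set.sep_subset _ _⟩⟩, rfl⟩, fun x hx => ?_⟩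
    have hin : ∀ z ∈ FmlSet ι B cB ψ, (φ.Realize (fun a => Sum.elim x y (σ (.inl a)))
        (Fin.snoc (fun a => Sum.elim x y (σ (.inr a))) z) ↔
          θ₁.Realize default (Fin.snoc x z)) := by
      intro z hz
      rw [← e₁ (Fin.snoc x z) (Fin.lastCases (by simpa using hz) (by simpa using hx))]
      apply Iff.of_eq
      congr 1
      · funext a
        rcases h : σ (.inl a) <;> simp [h]
      · funext a
        refine Fin.lastCases ?_ (fun a => ?_) a
        · simp
        · rcases h : σ (.inr a) <;> simp [h]
    have hout : ∀ z ∉ FmlSet ι B cB ψ, ∃ θ ∈ F₂, ∀ x : Fin m → B,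
        (∀ i, x i ∈ FmlSet ι B cB ψ) →
        (φ.Realize (fun a => Sum.elim x y (σ (.inl a)))
          (Fin.snoc (fun a => Sum.elim x y (σ (.inr a))) z) ↔ θ.Realize default x) := by
      intro z hz
      obtain ⟨θ, hθ, e⟩ := h₂ (fun o => o.elim z y) (by rintro (_ | j); exacts [hz, hy j])
      refine ⟨θ, hθ, fun x hx => ?_⟩
      rw [← e x hx]
      apply Iff.of_eq
      congr 1
      · funext a
        rcases h : σ (.inl a) <;> simp [h]
      · funext a
        refine Fin.lastCases ?_ (fun a => ?_) a
        · simp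
        · rcases h : σ (.inr a) <;> simp [h]
    simp only [BoundedFormula.realize_all, BoundedFormula.realize_inf,
      BoundedFormula.realize_imp, BoundedFormula.realize_iInf, hψ', Fin.snoc_last]
    constructor
    · rintro h
      refine ⟨fun z hz => (hin z hz).1 (h z), ?_⟩
      rintro ⟨θ, hθ, z, hz, e⟩
      exact (e x hx).1 (h z)
    · rintro ⟨h, h'⟩ z
      by_cases hz : z ∈ FmlSet ι B cB ψ
      · exact (hin z hz).2 (h z hz)
      · obtain ⟨θ, hθ, e⟩ := hout z hz
        exact (e x hx).2 (h' ⟨θ, hθ, z, hz, e⟩)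

/-- Finitely many points omitting a convex type are separated from it by a single formula
which is convex in `B`. -/
theorem exists_convex_formula_separating {ι B : Type} [LinearOrder B] (cB : ι → Set B)
    (Φ : Set ((CLOLang ι).Formula Unit)) (hΦ : ∀ φ ∈ Φ, (FmlSet ι B cB φ).OrdConnected)
    {n : ℕ} (y : Fin n → B) (hy : ∀ i, y i ∉ TypeSet ι B cB Φ) :
    ∃ ψ : (CLOLang ι).Formula Unit, (FmlSet ι B cB ψ).OrdConnected ∧
      TypeSet ι B cB Φ ⊆ FmlSet ι B cB ψ ∧ ∀ i, y i ∉ FmlSet ι B cB ψ := by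
  let _ := CLOStr ι B cB
  have h : ∀ i, ∃ φ ∈ Φ, y i ∉ FmlSet ι B cB φ := fun i => by
    simpa [TypeSet, FmlSet] using hy i
  choose φ hφ hyφ using h
  have hset : FmlSet ι B cB (Formula.iInf φ) = ⋂ i, FmlSet ι B cB (φ i) := by
    ext x
    simp [FmlSet, Sat]
  refine ⟨Formula.iInf φ, ?_, ?_, fun i hi => ?_⟩
  · rw [hset]
    exact Set.ordConnected_iInter fun i => hΦ _ (hφ i)
  · rw [hset]
    exact Set.subset_iInter fun i x hx => hx _ (hφ i)
  · rw [hset] at hi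
    exact hyφ i (Set.mem_iInter.1 hi i)

/-- A parameter-free definable set which is nonempty meets every elementary substructure. -/
theorem IsElemSubset.exists_mem_realize {ι B : Type} [LinearOrder B] {cB : ι → Set B}
    {A : Set B} (hA : IsElemSubset ι B cB A) (θ : (CLOLang ι).BoundedFormula Empty 1) :
    letI := CLOStr ι B cB
    (∃ b : B, θ.Realize default (fun _ => b)) → ∃ a ∈ A, θ.Realize default (fun _ => a) := by
  let _ := CLOStr ι B cB
  let _ := CLOStr ι A (subColor cB A)
  rintro ⟨b, hb⟩
  have hsnoc : ∀ (M : Type) (x : Fin 0 → M) (a : M),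
      (Fin.snoc x a : Fin 1 → M) = fun _ => a := fun M x a => by
    funext i
    rw [Fin.eq_zero (show Fin 1 from i)]
    exact Fin.snoc_last (α := fun _ => M) a x
  let χ : (CLOLang ι).Formula (Fin 0) := Formula.relabel (Empty.elim : Empty → Fin 0) θ.ex
  have hχ : Sat A (subColor cB A) χ default := by
    refine (hA 0 χ default).2 (Formula.realize_relabel.2 ?_)
    refine BoundedFormula.realize_ex.2 ⟨b, ?_⟩
    rw [hsnoc]
    convert hb
  obtain ⟨a, ha⟩ := BoundedFormula.realize_ex.1 (Formula.realize_relabel.1 hχ)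
  rw [hsnoc] at ha
  refine ⟨a, a.2, ?_⟩
  have h := hA 1 (Formula.relabel (Sum.elim Empty.elim id) θ.toFormula) (fun _ => a)
  have e₁ := Formula.realize_relabel.trans
    (BoundedFormula.realize_toFormula θ ((fun _ : Fin 1 => a) ∘ Sum.elim Empty.elim id))
  have e₂ := Formula.realize_relabel.trans
    (BoundedFormula.realize_toFormula θ
      ((fun _ : Fin 1 => (a : B)) ∘ Sum.elim Empty.elim id))
  have h' := e₂.1 (h.1 (e₁.2 (by convert ha; rfl)))
  convert h'
  rfl

end CLO

theorem stmt14 {ι : Type} [Countable ι] {M₀ : Type} [LinearOrder M₀] (c₀ : ι → Set M₀)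
    {B : Type} [LinearOrder B] (cB : ι → Set B) (hB : CLOEquiv ι B cB M₀ c₀)
    (A : Set B) (hA : IsElemSubset ι B cB A)
    (K : Set (Set ((CLOLang ι).Formula Unit))) (hK : ∀ Φ ∈ K, IsConvexType ι M₀ c₀ Φ)
    (hAC : A ⊆ {x : B | ∀ Φ ∈ K, x ∉ TypeSet ι B cB Φ}) :
    IsElemSubset ι B cB {x : B | ∀ Φ ∈ K, x ∉ TypeSet ι B cB Φ} := by
  let _ := CLOStr ι B cB
  set C : Set B := {x : B | ∀ Φ ∈ K, x ∉ TypeSet ι B cB Φ} with hC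
  let _ := CLOStr ι C (subColor cB C)
  let f : C ↪[CLOLang ι] B :=
    { toFun := Subtype.val
      inj' := Subtype.val_injective
      map_fun' := fun g => Empty.elim g
      map_rel' := fun R x => by rcases R with _ | k <;> exact Iff.rfl }
  refine fun k φ v => (f.isElementary_of_exists ?_ φ v).symm
  intro n φ y b hb
  by_cases hbC : b ∈ C
  · exact ⟨⟨b, hbC⟩, hb⟩
  obtain ⟨Φ, hΦ, hbΦ⟩ : ∃ Φ ∈ K, b ∈ TypeSet ι B cB Φ := by simpa [hC] using hbC
  obtain ⟨ψ, hψ, hΦψ, hyψ⟩ := CLO.exists_convex_formula_separating cB Φ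
    (fun φ hφ => (hK Φ hΦ).1 φ hφ B inferInstance cB hB) (f ∘ y) (fun i => (y i).2 Φ hΦ)
  obtain ⟨F, -, hF⟩ := CLO.exists_finite_traces cB ψ hψ φ 1 (Fin n)
    (Sum.elim Empty.elim (Fin.snoc (α := fun _ => Fin 1 ⊕ Fin n) Sum.inr (.inl 0)))
  obtain ⟨θ, -, hθ⟩ := hF (f ∘ y) hyψ
  have hφθ : ∀ z ∈ FmlSet ι B cB ψ,
      (φ.Realize default (Fin.snoc (f ∘ y) z : Fin (n + 1) → B) ↔
        θ.Realize default fun _ => z) := by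
    intro z hz
    rw [← hθ (fun _ => z) fun _ => hz]
    apply Iff.of_eq
    congr 1
    · exact Subsingleton.elim _ _
    · funext i
      refine Fin.lastCases ?_ (fun i => ?_) i <;> simp
  let ψ' : (CLOLang ι).BoundedFormula Empty 1 :=
    BoundedFormula.relabel (fun _ : Unit => (Sum.inr 0 : Empty ⊕ Fin 1)) ψ
  have hψ' : ∀ z : B, ψ'.Realize default (fun _ => z) ↔ z ∈ FmlSet ι B cB ψ := fun z =>
    CLO.realize_relabel_inr cB ψ (0 : Fin 1) fun _ => z
  obtain ⟨a, haA, ha⟩ := CLO.IsElemSubset.exists_mem_realize hA (ψ' ⊓ θ)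
    ⟨b, BoundedFormula.realize_inf.2
      ⟨(hψ' b).2 (hΦψ hbΦ), (hφθ b (hΦψ hbΦ)).1 hb⟩⟩
  obtain ⟨haψ, haθ⟩ := BoundedFormula.realize_inf.1 ha
  exact ⟨⟨a, hAC haA⟩, (hφθ a ((hψ' a).1 haψ)).2 haθ⟩
end
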